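/- arXiv:2207.02040 — 4 statements merged into one kernel-verified Lean document; each statement's English description precedes it below -/
import Mathlib

section
/- For every even integer n ≥ 4, the multiset {3^(n−2), 2^2} (that is, n−2 entries equal to 3 and two entries equal to 2) is outerplane-unigraphic: there exists an outerplane graph on n vertices with this degree multiset, and any two outerplane graphs on n vertices with this degree multiset are isomorphic. (Type A1 of the paper's Theorem 1, corresponding to the polytope degree sequence p−1, 4^(p−3), 3^2 with p = n+1 odd.) -/
/-- The vertices strictly between `a` and `b`, traversing the cycle `ZMod n`
from `a` towards `b` in the direction of increasing residues. -/
def Between (n : ℕ) (a b v : ZMod n) : Prop :=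
  0 < (v - a).val ∧ (v - a).val < (b - a).val

/-- `e` is an edge of the standard `n`-cycle on `ZMod n`. -/
def IsCycleEdge (n : ℕ) (e : Sym2 (ZMod n)) : Prop :=
  ∃ i : ZMod n, e = s(i, i + 1)

/-- A chord: an unordered pair of distinct vertices of `ZMod n` that is not an
edge of the standard `n`-cycle. -/
def IsChord (n : ℕ) (e : Sym2 (ZMod n)) : Prop :=
  ¬ e.IsDiag ∧ ¬ IsCycleEdge n e

/-- Two chords cross if exactly one endpoint of the second lies strictly between
the endpoints of the first (traversing in the direction of increasing residues). -/
def Cross (n : ℕ) (e f : Sym2 (ZMod n)) : Prop :=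
  ∀ a b c d : ZMod n, e = s(a, b) → f = s(c, d) →
    Xor' (Between n a b c) (Between n a b d)

/-- `S` is a set of pairwise non-crossing chords of the standard `n`-cycle. -/
def NonCrossingChords (n : ℕ) (S : Set (Sym2 (ZMod n))) : Prop :=
  (∀ e ∈ S, IsChord n e) ∧ ∀ e ∈ S, ∀ f ∈ S, e ≠ f → ¬ Cross n e f

/-- The chord graph of a set `S` of chords: the simple graph on `ZMod n`
whose edge set is `S`. -/
def chordGraph (n : ℕ) (S : Set (Sym2 (ZMod n))) : SimpleGraph (ZMod n) :=
  SimpleGraph.fromEdgeSet S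

/-- A vertex is chord-free for `S` if it is incident to no chord of `S`. -/
def ChordFree (n : ℕ) (S : Set (Sym2 (ZMod n))) (v : ZMod n) : Prop :=
  ∀ e ∈ S, v ∉ e

/-- An outerplane graph on `n` vertices: a simple graph on `ZMod n` whose edge
set is the (disjoint) union of the standard `n`-cycle and a set of pairwise
non-crossing chords. -/
def IsOuterplane (n : ℕ) (G : SimpleGraph (ZMod n)) : Prop :=
  ∃ S : Set (Sym2 (ZMod n)), NonCrossingChords n S ∧
    G.edgeSet = {e | IsCycleEdge n e} ∪ S

/-- The multiset of vertex degrees of a graph on a finite vertex type. -/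
noncomputable def degMultiset {V : Type*} [Fintype V] (G : SimpleGraph V) : Multiset ℕ := by
  classical exact Finset.univ.val.map fun v => G.degree v

/-- The multiset of vertex degrees of a graph on `ZMod n` (junk value for `n = 0`). -/
noncomputable def degreeMultiset (n : ℕ) (G : SimpleGraph (ZMod n)) : Multiset ℕ :=
  if h : n = 0 then 0
  else by haveI : NeZero n := ⟨h⟩; exact degMultiset G

/-- `M` is outerplane-unigraphic on `n` vertices: there is an outerplane graph on
`n` vertices with degree multiset `M`, and any two such are isomorphic. -/
def OuterplaneUnigraphic (n : ℕ) (M : Multiset ℕ) : Prop :=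
  (∃ G : SimpleGraph (ZMod n), IsOuterplane n G ∧ degreeMultiset n G = M) ∧
  ∀ G G' : SimpleGraph (ZMod n), IsOuterplane n G → IsOuterplane n G' →
    degreeMultiset n G = M → degreeMultiset n G' = M → Nonempty (G ≃g G')

/-- A caterpillar: a connected acyclic graph (tree) in which all vertices of
degree at least two lie on a common path. -/
def IsCaterpillar {V : Type*} (G : SimpleGraph V) : Prop :=
  G.Connected ∧ G.IsAcyclic ∧
    ∃ (u w : V) (p : G.Walk u w), p.IsPath ∧
      ∀ v : V, (∃ a b : V, a ≠ b ∧ G.Adj v a ∧ G.Adj v b) → v ∈ p.support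

lemma A1_val_sub (n : ℕ) [NeZero n] (x y : ZMod n) :
    (x - y).val = if y.val ≤ x.val then x.val - y.val else x.val + n - y.val := by
  split_ifs with h
  · exact ZMod.val_sub h
  · have h1 : (y - x).val = y.val - x.val := ZMod.val_sub (by omega)
    have h2 : x - y = -(y - x) := by ring
    have h3 : y - x ≠ 0 := by
      intro h0
      rw [h0] at h1
      simp at h1
      omega
    haveI : NeZero (y - x) := ⟨h3⟩
    have hy := ZMod.val_lt y
    rw [h2, ZMod.val_neg_of_ne_zero, h1]
    omega

lemma A1_between (n : ℕ) [NeZero n] (u a b c : ZMod n) :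
    Between n a b c ↔
      ((a - u).val < (c - u).val ∧ (c - u).val < (b - u).val) ∨
      ((b - u).val < (a - u).val ∧ (a - u).val < (c - u).val) ∨
      ((c - u).val < (b - u).val ∧ (b - u).val < (a - u).val) := by
  have e1 : c - a = (c - u) - (a - u) := by ring
  have e2 : b - a = (b - u) - (a - u) := by ring
  unfold Between
  rw [e1, e2, A1_val_sub n (c - u) (a - u), A1_val_sub n (b - u) (a - u)]
  have ha := ZMod.val_lt (a - u)
  have hb := ZMod.val_lt (b - u)
  have hc := ZMod.val_lt (c - u)
  split_ifs <;> omega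

/-- combinatorial core on natural numbers -/
lemma A1_core (n w : ℕ) (g : ℕ → ℕ) (hw0 : 0 < w) (hwn : w < n)
    (glt : ∀ i < n, g i < n) (gg : ∀ i < n, g (g i) = i)
    (fix : ∀ i < n, (g i = i ↔ i = 0 ∨ i = w))
    (nadj : ∀ i < n, g i ≠ i + 1)
    (nc : ∀ i < n, ∀ j < n, i < j → j < g i → i < g j ∧ g j < g i) :
    ∀ i < n, 0 < i → g i + i = n := by
  have A : ∀ k i, i < n → i < g i → g i - i ≤ k → i < w ∧ w < g i := by
    intro k
    induction k with
    | zero => intro i _ _ _; omega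
    | succ k ih =>
      intro i hi hig hk
      have h1 := nadj i hi
      have h2 := glt i hi
      have h3 : i + 1 < n := by omega
      have h4 := nc i hi (i+1) h3 (by omega) (by omega)
      by_cases hf : g (i+1) = i + 1
      · have := (fix (i+1) h3).1 hf
        omega
      · have := ih (i+1) h3 (by omega) (by omega)
        omega
  have B : ∀ i < n, i < g i → i < w ∧ w < g i := fun i h1 h2 => A _ i h1 h2 le_rfl
  have C1 : ∀ i, 0 < i → i < w → w < g i := by
    intro i h0 hi
    have hin : i < n := by omega
    have hne : g i ≠ i := fun h => by have := (fix i hin).1 h; omega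
    rcases lt_or_gt_of_ne hne with h | h
    · have := B (g i) (glt i hin) (by rw [gg i hin]; exact h)
      rw [gg i hin] at this
      omega
    · exact (B i hin h).2
  have g0 : g 0 = 0 := (fix 0 (by omega)).2 (Or.inl rfl)
  have C2 : ∀ i, w < i → i < n → 0 < g i ∧ g i < w := by
    intro i h0 hin
    have hne : g i ≠ i := fun h => by have := (fix i hin).1 h; omega
    have hpos : g i ≠ 0 := by
      intro h
      have := gg i hin
      rw [h, g0] at this
      omega
    rcases lt_or_gt_of_ne hne with h | h
    · have := B (g i) (glt i hin) (by rw [gg i hin]; exact h)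
      rw [gg i hin] at this
      omega
    · have := B i hin h
      omega
  have D1 : ∀ i, 0 < i → i < w → g i + i ≤ n := by
    intro i
    induction i with
    | zero => omega
    | succ i ih =>
      intro _ hi
      by_cases h : i = 0
      · subst h
        have := glt 1 (by omega)
        simp only [Nat.zero_add]
        omega
      · have h1 := ih (by omega) (by omega)
        have h2 := C1 i (by omega) (by omega)
        have := nc i (by omega) (i+1) (by omega) (by omega) (by omega)
        omega
  have D2 : ∀ k, 0 < k → w + k < n + 0 → w < n - k → n ≤ g (n - k) + (n - k) := by
    intro k
    induction k with
    | zero => omega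
    | succ k ih =>
      intro _ h2 h3
      by_cases h : k = 0
      · subst h
        have := C2 (n - (0+1)) h3 (by omega)
        omega
      · have h1 := ih (by omega) (by omega) (by omega)
        have c1 := C2 (n - (k+1)) h3 (by omega)
        have c2 := C2 (n - k) (by omega) (by omega)
        by_contra hlt
        have gk := gg (n - k) (by omega)
        have gk1 := gg (n - (k+1)) (by omega)
        have hle : g (n - (k+1)) ≤ g (n - k) := by omega
        rcases Nat.lt_or_eq_of_le hle with hl | hl
        · have := nc (g (n - (k+1))) (by omega) (g (n-k)) (by omega) hl (by omega)
          omega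
        · rw [hl] at gk1
          omega
  have E1 : ∀ i, 0 < i → i < w → g i + i = n := by
    intro i h0 hi
    have h1 := D1 i h0 hi
    have h2 := C1 i h0 hi
    have h3 := glt i (by omega)
    have h4 := D2 (n - g i) (by omega) (by omega) (by omega)
    have h5 : n - (n - g i) = g i := by omega
    rw [h5, gg i (by omega)] at h4
    omega
  have E2 : ∀ i, w < i → i < n → g i + i = n := by
    intro i h0 hi
    have h1 := C2 i h0 hi
    have h2 := E1 (g i) h1.1 h1.2
    rw [gg i hi] at h2
    omega
  intro i hi h0
  rcases lt_trichotomy i w with h | h | h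
  · exact E1 i h0 h
  · subst h
    have hfix := (fix i hi).2 (Or.inr rfl)
    have hh := gg (n - i) (by omega)
    rcases lt_trichotomy (n - i) i with h' | h' | h'
    · have := E1 (n - i) (by omega) h'
      have h7 : g (n - i) = i := by omega
      rw [h7] at hh
      omega
    · omega
    · have := E2 (n - i) h' (by omega)
      have h7 : g (n - i) = i := by omega
      rw [h7] at hh
      omega
  · exact E2 i h hi

lemma A1_two_ne (n : ℕ) (hn : 4 ≤ n) (v : ZMod n) : v + 1 ≠ v - 1 := by
  intro h
  have h2 : ((2 : ℕ) : ZMod n) = 0 := by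
    have : (2 : ZMod n) = (v + 1) - (v - 1) := by ring
    push_cast
    rw [this, h, sub_self]
  rw [ZMod.natCast_eq_zero_iff] at h2
  have := Nat.le_of_dvd (by norm_num) h2
  omega

open Classical in
lemma A1_degree (n : ℕ) (hn : 4 ≤ n) [NeZero n] (G : SimpleGraph (ZMod n)) (v : ZMod n)
    (T : Finset (ZMod n)) (hT : ∀ y, G.Adj v y ↔ y = v + 1 ∨ v = y + 1 ∨ y ∈ T)
    (h1 : v + 1 ∉ T) (h2 : v - 1 ∉ T) : G.degree v = T.card + 2 := by
  have : G.neighborFinset v = insert (v + 1) (insert (v - 1) T) := by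
    ext y
    rw [SimpleGraph.mem_neighborFinset, hT, Finset.mem_insert, Finset.mem_insert,
      eq_sub_iff_add_eq, eq_comm (a := v)]
  rw [← SimpleGraph.card_neighborFinset_eq_degree, this, Finset.card_insert_of_notMem,
    Finset.card_insert_of_notMem h2]
  rw [Finset.mem_insert]
  rintro (h | h)
  · exact A1_two_ne n hn v h
  · exact h1 h

open Classical in
lemma A1_degMultiset (n : ℕ) [NeZero n] (G : SimpleGraph (ZMod n)) :
    degreeMultiset n G = Finset.univ.val.map fun v => G.degree v := by
  unfold degreeMultiset
  rw [dif_neg (NeZero.ne n)]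
  unfold degMultiset
  congr!

open Classical in
lemma A1_key (n : ℕ) (hn : 4 ≤ n) (G : SimpleGraph (ZMod n)) (hG : IsOuterplane n G)
    (hM : degreeMultiset n G = Multiset.replicate (n - 2) 3 + Multiset.replicate 2 2) :
    ∃ u : ZMod n, ∀ x y, G.Adj x y ↔ y = x + 1 ∨ x = y + 1 ∨ (x ≠ y ∧ x + y = u + u) := by
  haveI : NeZero n := ⟨by omega⟩
  obtain ⟨S, ⟨hch, hnc⟩, hE⟩ := hG
  rw [A1_degMultiset] at hM
  let T : ZMod n → Finset (ZMod n) := fun v => Finset.univ.filter fun y => s(v, y) ∈ S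
  have memT : ∀ v y, y ∈ T v ↔ s(v, y) ∈ S := fun v y => by simp [T]
  have hadj : ∀ v y, G.Adj v y ↔ y = v + 1 ∨ v = y + 1 ∨ y ∈ T v := by
    intro v y
    rw [← SimpleGraph.mem_edgeSet, hE, memT, ← or_assoc]
    refine or_congr ?_ Iff.rfl
    constructor
    · rintro ⟨i, hi⟩
      rw [Sym2.eq_iff] at hi
      rcases hi with ⟨rfl, rfl⟩ | ⟨rfl, rfl⟩
      · left; rfl
      · right; rfl
    · rintro (rfl | rfl)
      · exact ⟨v, rfl⟩
      · exact ⟨y, Sym2.eq_swap⟩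
  have hT1 : ∀ v, v + 1 ∉ T v := by
    intro v h
    exact (hch _ ((memT _ _).1 h)).2 ⟨v, rfl⟩
  have hT2 : ∀ v, v - 1 ∉ T v := by
    intro v h
    refine (hch _ ((memT _ _).1 h)).2 ⟨v - 1, ?_⟩
    rw [sub_add_cancel, Sym2.eq_swap]
  have hT0 : ∀ v, v ∉ T v := by
    intro v h
    exact (hch _ ((memT _ _).1 h)).1 (by simp)
  have hdeg : ∀ v, G.degree v = (T v).card + 2 := fun v =>
    A1_degree n hn G v (T v) (hadj v) (hT1 v) (hT2 v)
  have hd23 : ∀ v, G.degree v = 3 ∨ G.degree v = 2 := by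
    intro v
    have : G.degree v ∈ Multiset.map (fun v => G.degree v) (Finset.univ : Finset (ZMod n)).val :=
      Multiset.mem_map_of_mem _ (by simp)
    rw [hM, Multiset.mem_add] at this
    rcases this with h | h
    · left; exact Multiset.eq_of_mem_replicate h
    · right; exact Multiset.eq_of_mem_replicate h
  have hcard : (Finset.univ.filter fun v => 2 = G.degree v).card = 2 := by
    have h := congrArg (Multiset.count 2) hM
    rw [Multiset.count_map, Multiset.count_add, Multiset.count_replicate,
      Multiset.count_replicate] at h
    simp at h
    exact h
  obtain ⟨u, w, huw, hfil⟩ := Finset.card_eq_two.1 hcard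
  have hfix : ∀ v, G.degree v = 2 ↔ v = u ∨ v = w := by
    intro v
    have : v ∈ (Finset.univ.filter fun v => 2 = G.degree v) ↔ v = u ∨ v = w := by
      rw [hfil]; simp
    rw [← this]
    simp [eq_comm]
  have hex : ∀ v, ∃ y, (T v = {y} ∧ y ≠ v) ∨ (T v = ∅ ∧ y = v) := by
    intro v
    have h1 := hdeg v
    rcases hd23 v with h | h
    · obtain ⟨y, hy⟩ := Finset.card_eq_one.1 (show (T v).card = 1 by omega)
      refine ⟨y, Or.inl ⟨hy, ?_⟩⟩
      rintro rfl
      exact hT0 y (by rw [hy]; simp)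
    · exact ⟨v, Or.inr ⟨Finset.card_eq_zero.1 (by omega), rfl⟩⟩
  choose f hf using hex
  have hmem : ∀ v y, y ∈ T v ↔ (y = f v ∧ y ≠ v) := by
    intro v y
    rcases hf v with ⟨h1, h2⟩ | ⟨h1, h2⟩
    · rw [h1, Finset.mem_singleton]
      constructor
      · rintro rfl; exact ⟨rfl, h2⟩
      · exact fun h => h.1
    · rw [h1, h2]; simp
  have hffix : ∀ v, f v = v ↔ v = u ∨ v = w := by
    intro v
    rw [← hfix, hdeg]
    rcases hf v with ⟨h1, h2⟩ | ⟨h1, h2⟩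
    · simp [h1, h2]
    · simp [h1, h2]
  have hff : ∀ v, f (f v) = v := by
    intro v
    by_cases h : f v = v
    · rw [h, h]
    · have : f v ∈ T v := (hmem _ _).2 ⟨rfl, h⟩
      rw [memT, Sym2.eq_swap, ← memT, hmem] at this
      exact this.1.symm
  have hfS : ∀ v, f v ≠ v → s(v, f v) ∈ S := fun v h =>
    (memT _ _).1 ((hmem _ _).2 ⟨rfl, h⟩)
  let g : ℕ → ℕ := fun i => (f (u + i) - u).val
  have hcast : ∀ i, u + ((g i : ℕ) : ZMod n) = f (u + i) := by
    intro i
    simp only [g, ZMod.natCast_val, ZMod.cast_id', id]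
    ring
  have hval : ∀ i < n, (u + (i : ZMod n) - u).val = i := by
    intro i hi
    rw [add_sub_cancel_left, ZMod.val_natCast_of_lt hi]
  have hgfix : ∀ i < n, (g i = i ↔ f (u + i) = u + i) := by
    intro i hi
    constructor
    · intro h; rw [← hcast, h]
    · intro h
      simp only [g]
      rw [h, hval i hi]
  have hggn : ∀ i < n, g (g i) = i := by
    intro i hi
    show (f (u + ((g i : ℕ) : ZMod n)) - u).val = i
    rw [hcast, hff, hval i hi]
  have hglt : ∀ i < n, g i < n := fun i _ => ZMod.val_lt _
  have hkey := A1_core n (w - u).val g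
    (by
      rw [Nat.pos_iff_ne_zero]
      intro h
      rw [ZMod.val_eq_zero, sub_eq_zero] at h
      exact huw h.symm)
    (ZMod.val_lt _) hglt hggn
    (by
      intro i hi
      rw [hgfix i hi, hffix]
      refine or_congr ?_ ?_
      · rw [add_eq_left, ZMod.natCast_eq_zero_iff]
        constructor
        · intro h
          by_contra h0
          have := Nat.le_of_dvd (by omega) h
          omega
        · rintro rfl; simp
      · constructor
        · intro h; rw [← h, hval i hi]
        · intro h; rw [h]; simp)
    (by
      intro i hi h
      have h1 := hcast i
      rw [h] at h1
      push_cast at h1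
      by_cases h2 : f (u + i) = u + i
      · have := (hgfix i hi).2 h2
        omega
      · apply hT1 (u + i)
        rw [hmem]
        have : u + (i : ZMod n) + 1 = f (u + i) := by rw [← h1]; ring
        exact ⟨this, by rw [this]; exact h2⟩)
    (by
      intro i hi j hj hij hjg
      have hfi : f (u + i) ≠ u + i := fun h => by
        have := (hgfix i hi).2 h
        omega
      by_cases hfj : f (u + j) = u + j
      · have := (hgfix j hj).2 hfj
        omega
      · have gi := hval _ (hglt i hi)
        have gj := hval _ (hglt j hj)
        have vi := hval _ hi
        have vj := hval _ hj
        rw [hcast] at gi gj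
        have hgi := hggn i hi
        have hgj := hggn j hj
        have n1 : g j ≠ g i := fun h => by rw [h] at hgj; omega
        have n2 : g j ≠ i := fun h => by rw [h] at hgj; omega
        have hne : s(u + (i : ZMod n), f (u + i)) ≠ s(u + (j : ZMod n), f (u + j)) := by
          intro h
          rw [Sym2.eq_iff] at h
          rcases h with ⟨h, _⟩ | ⟨_, h⟩
          · rw [h] at vi; omega
          · rw [h] at gi; omega
        by_contra hcon
        apply hnc _ (hfS _ hfi) _ (hfS _ hfj) hne
        intro a b c d hab hcd
        have hgjj : g j ≠ j := fun h => hfj ((hgfix j hj).1 h)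
        rw [Sym2.eq_iff] at hab hcd
        rw [A1_between n u, A1_between n u]
        unfold Xor' Xor
        rcases hab with ⟨rfl, rfl⟩ | ⟨rfl, rfl⟩ <;> rcases hcd with ⟨rfl, rfl⟩ | ⟨rfl, rfl⟩ <;>
          rw [gi, gj, vi, vj] <;> omega)
  have hfin : ∀ v, v + f v = u + u := by
    intro v
    have hv : v = u + (((v - u).val : ℕ) : ZMod n) := by simp
    by_cases h0 : (v - u).val = 0
    · rw [ZMod.val_eq_zero, sub_eq_zero] at h0
      rw [(hffix v).2 (Or.inl h0), h0]
    · have h1 := hkey _ (ZMod.val_lt (v - u)) (by omega)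
      have h2 := hcast (v - u).val
      rw [← hv] at h2
      have h3 : ((g (v - u).val : ℕ) : ZMod n) + (((v - u).val : ℕ) : ZMod n) = 0 := by
        rw [← Nat.cast_add, h1, ZMod.natCast_self]
      rw [← h2]
      calc v + (u + ((g (v - u).val : ℕ) : ZMod n))
          = (u + (((v - u).val : ℕ) : ZMod n)) + (u + ((g (v - u).val : ℕ) : ZMod n)) := by
            rw [← hv]
        _ = u + u + (((g (v - u).val : ℕ) : ZMod n) + (((v - u).val : ℕ) : ZMod n)) := by ring
        _ = u + u := by rw [h3, add_zero]
  refine ⟨u, fun x y => ?_⟩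
  rw [hadj, hmem]
  refine or_congr Iff.rfl (or_congr Iff.rfl ?_)
  rw [← hfin x, add_right_inj, and_comm, ne_comm]

lemma A1_val_neg (n : ℕ) [NeZero n] (x y : ZMod n) (hxy : x ≠ y) (h : x + y = 0) :
    0 < x.val ∧ x.val < n ∧ y.val = n - x.val := by
  have hy : y = -x := by rw [eq_neg_iff_add_eq_zero, add_comm]; exact h
  have hx : x ≠ 0 := by
    rintro rfl
    simp at hy
    exact hxy hy.symm
  haveI : NeZero x := ⟨hx⟩
  refine ⟨Nat.pos_of_ne_zero (by rwa [Ne, ZMod.val_eq_zero]), ZMod.val_lt x, ?_⟩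
  rw [hy, ZMod.val_neg_of_ne_zero]

lemma A1_odd (n : ℕ) (heven : Even n) (x : ZMod n) : x + (x + 1) ≠ 0 := by
  intro h
  have h2 : 2 ∣ n := heven.two_dvd
  have := congrArg (ZMod.castHom h2 (ZMod 2)) h
  simp only [map_add, map_one, map_zero] at this
  revert this
  generalize (ZMod.castHom h2 (ZMod 2)) x = z
  revert z
  decide

open Classical in
lemma A1_exists (n : ℕ) (hn : 4 ≤ n) (heven : Even n) :
    ∃ G : SimpleGraph (ZMod n), IsOuterplane n G ∧
      degreeMultiset n G = Multiset.replicate (n - 2) 3 + Multiset.replicate 2 2 := by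
  haveI : NeZero n := ⟨by omega⟩
  have one_ne : (1 : ZMod n) ≠ 0 := by
    intro h
    have h2 : ((1 : ℕ) : ZMod n) = 0 := by exact_mod_cast h
    rw [ZMod.natCast_eq_zero_iff] at h2
    have := Nat.le_of_dvd (by norm_num) h2
    omega
  obtain ⟨G, hadj⟩ : ∃ G : SimpleGraph (ZMod n),
      ∀ x y, G.Adj x y ↔ y = x + 1 ∨ x = y + 1 ∨ (x ≠ y ∧ x + y = 0) := ⟨
    { Adj := fun x y => y = x + 1 ∨ x = y + 1 ∨ (x ≠ y ∧ x + y = 0)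
      symm := ⟨by
        rintro x y (h | h | ⟨h1, h2⟩)
        · exact Or.inr (Or.inl h)
        · exact Or.inl h
        · exact Or.inr (Or.inr ⟨h1.symm, by rw [add_comm]; exact h2⟩)⟩
      loopless := ⟨by
        rintro x (h | h | ⟨h1, h2⟩)
        · exact one_ne (by simpa using h)
        · exact one_ne (by simpa using h)
        · exact h1 rfl⟩ }, fun x y => Iff.rfl⟩
  refine ⟨G, ⟨{e | ∃ x y, e = s(x, y) ∧ x ≠ y ∧ x + y = 0}, ⟨?_, ?_⟩, ?_⟩, ?_⟩
  · rintro e ⟨x, y, rfl, hne, h0⟩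
    refine ⟨by simpa using hne, ?_⟩
    rintro ⟨i, hi⟩
    rw [Sym2.eq_iff] at hi
    rcases hi with ⟨rfl, rfl⟩ | ⟨rfl, rfl⟩
    · exact A1_odd n heven _ h0
    · rw [add_comm] at h0
      exact A1_odd n heven _ h0
  · rintro e ⟨a, b, rfl, hab, hab0⟩ f ⟨c, d, rfl, hcd, hcd0⟩ hne hcr
    have h := hcr a b c d rfl rfl
    rw [A1_between n 0, A1_between n 0] at h
    simp only [sub_zero] at h
    obtain ⟨a1, a2, a3⟩ := A1_val_neg n a b hab hab0
    obtain ⟨c1, c2, c3⟩ := A1_val_neg n c d hcd hcd0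
    have k1 : a.val ≠ c.val := by
      intro h
      have h1 := ZMod.val_injective n h
      subst h1
      have : b = d := by rw [← hcd0] at hab0; exact add_left_cancel hab0
      subst this
      exact hne rfl
    have k2 : a.val ≠ d.val := by
      intro h
      have h1 := ZMod.val_injective n h
      subst h1
      have : b = c := by
        rw [← hcd0, add_comm c] at hab0; exact add_left_cancel hab0
      subst this
      exact hne Sym2.eq_swap
    unfold Xor' Xor at h
    omega
  · ext e
    induction e using Sym2.ind with
    | _ x y =>
    rw [SimpleGraph.mem_edgeSet, hadj, ← or_assoc, Set.mem_union]
    refine or_congr ?_ ?_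
    · constructor
      · rintro (rfl | rfl)
        · exact ⟨x, rfl⟩
        · exact ⟨y, Sym2.eq_swap⟩
      · rintro ⟨i, hi⟩
        rw [Sym2.eq_iff] at hi
        rcases hi with ⟨rfl, rfl⟩ | ⟨rfl, rfl⟩
        · left; rfl
        · right; rfl
    · constructor
      · rintro ⟨h1, h2⟩
        exact ⟨x, y, rfl, h1, h2⟩
      · rintro ⟨a, b, h, h1, h2⟩
        rw [Sym2.eq_iff] at h
        rcases h with ⟨rfl, rfl⟩ | ⟨rfl, rfl⟩
        · exact ⟨h1, h2⟩
        · exact ⟨h1.symm, by rw [add_comm]; exact h2⟩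
  · rw [A1_degMultiset]
    have hdeg : ∀ v, G.degree v = if v + v = 0 then 2 else 3 := by
      intro v
      rw [A1_degree n hn G v (if v + v = 0 then ∅ else {-v})]
      · split_ifs <;> simp
      · intro y
        rw [hadj]
        refine or_congr Iff.rfl (or_congr Iff.rfl ?_)
        split_ifs with h
        · simp only [Finset.notMem_empty, iff_false]
          rintro ⟨h1, h2⟩
          rw [← h] at h2
          exact h1 (add_left_cancel h2).symm
        · rw [Finset.mem_singleton, eq_neg_iff_add_eq_zero, add_comm y]
          constructor
          · exact fun h => h.2
          · intro h2
            refine ⟨?_, h2⟩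
            rintro rfl
            exact h h2
      · split_ifs with h
        · simp
        · rw [Finset.mem_singleton, eq_neg_iff_add_eq_zero, add_comm]
          exact A1_odd n heven v
      · split_ifs with h
        · simp
        · rw [Finset.mem_singleton, eq_neg_iff_add_eq_zero]
          have := A1_odd n heven (v - 1)
          rwa [sub_add_cancel] at this
    have hc2 : (Finset.univ.filter fun v : ZMod n => v + v = 0).card = 2 := by
      obtain ⟨m, hm⟩ := heven
      have hmn : m < n := by omega
      have hv := ZMod.val_natCast_of_lt hmn
      rw [Finset.card_eq_two]
      refine ⟨0, (m : ZMod n), ?_, ?_⟩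
      · intro h
        rw [← h, ZMod.val_zero] at hv
        omega
      · ext v
        simp only [Finset.mem_filter, Finset.mem_univ, true_and, Finset.mem_insert,
          Finset.mem_singleton]
        constructor
        · intro h
          by_cases h0 : v = 0
          · exact Or.inl h0
          · right
            haveI : NeZero v := ⟨h0⟩
            have h1 : v = -v := by rw [eq_neg_iff_add_eq_zero]; exact h
            have h2 := congrArg ZMod.val h1
            rw [ZMod.val_neg_of_ne_zero] at h2
            apply ZMod.val_injective n
            have := ZMod.val_lt v
            rw [hv]
            omega
        · rintro (rfl | rfl)
          · simp
          · rw [← Nat.cast_add, ← hm, ZMod.natCast_self]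
    have hc3 : (Finset.univ.filter fun v : ZMod n => ¬ v + v = 0).card = n - 2 := by
      have := Finset.card_filter_add_card_filter_not (s := (Finset.univ : Finset (ZMod n)))
        (fun v : ZMod n => v + v = 0)
      rw [hc2, Finset.card_univ, ZMod.card] at this
      omega
    rw [← Multiset.filter_add_not (fun v : ZMod n => v + v = 0)
      (Finset.univ : Finset (ZMod n)).val, Multiset.map_add, add_comm]
    congr 1
    · rw [Multiset.eq_replicate]
      refine ⟨by rw [Multiset.card_map]; exact hc3, ?_⟩
      intro b hb
      obtain ⟨v, hv, rfl⟩ := Multiset.mem_map.1 hb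
      rw [hdeg, if_neg (Multiset.mem_filter.1 hv).2]
    · rw [Multiset.eq_replicate]
      refine ⟨by rw [Multiset.card_map]; exact hc2, ?_⟩
      intro b hb
      obtain ⟨v, hv, rfl⟩ := Multiset.mem_map.1 hb
      rw [hdeg, if_pos (Multiset.mem_filter.1 hv).2]

/-- Type A1 of the paper's Theorem 1: for even `n ≥ 4`, the multiset
`{3^(n-2), 2^2}` is outerplane-unigraphic. -/
theorem unigraphic_A1 (n : ℕ) (hn : 4 ≤ n) (heven : Even n) :
    OuterplaneUnigraphic n
      (Multiset.replicate (n - 2) 3 + Multiset.replicate 2 2) := by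
  refine ⟨A1_exists n hn heven, ?_⟩
  intro G G' hG hG' hM hM'
  obtain ⟨u, hu⟩ := A1_key n hn G hG hM
  obtain ⟨u', hu'⟩ := A1_key n hn G' hG' hM'
  refine ⟨⟨Equiv.addRight (u' - u), ?_⟩⟩
  intro x y
  rw [hu, hu']
  simp only [Equiv.coe_addRight]
  refine or_congr ?_ (or_congr ?_ ?_)
  · rw [add_right_comm, add_left_inj]
  · rw [add_right_comm, add_left_inj]
  · refine and_congr ?_ ?_
    · rw [Ne, add_left_inj]
    · rw [← sub_eq_zero, ← sub_eq_zero (a := x + y)]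
      have : x + (u' - u) + (y + (u' - u)) - (u' + u') = x + y - (u + u) := by ring
      rw [this]
end

section
/- For every integer n ≥ 7, the multiset {n−3, 3^(n−3), 2^2} (one entry n−3, n−3 entries equal to 3, two entries equal to 2) is outerplane-unigraphic: there exists an outerplane graph on n vertices with this degree multiset, and any two outerplane graphs on n vertices with this degree multiset are isomorphic. (Type A2 of the paper's Theorem 1, corresponding to the polytope degree sequence p−1, p−3, 4^(p−4), 3^2 with p = n+1 ≥ 8.) -/
namespace A2

def R (i j : ℕ) : Prop := i + 1 = j ∨ (i = 0 ∧ 4 ≤ j) ∨ (i = 1 ∧ j = 3)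

def Std (n : ℕ) : SimpleGraph (Fin n) where
  Adj i j := R i.val j.val ∨ R j.val i.val
  symm := ⟨fun _ _ h => h.symm⟩
  loopless := ⟨fun i h => by unfold R at h; omega⟩

lemma std_adj {n : ℕ} (i j : Fin n) : (Std n).Adj i j ↔ R i.val j.val ∨ R j.val i.val := Iff.rfl

lemma sub_val (n i j : ℕ) (hi : i < n) (hj : j < n) :
    ((i : ZMod n) - (j : ZMod n)).val = if j ≤ i then i - j else n + i - j := by
  split_ifs with h
  · rw [← Nat.cast_sub h, ZMod.val_natCast, Nat.mod_eq_of_lt (by omega)]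
  · have : ((i : ZMod n) - (j : ZMod n)) = ((n + i - j : ℕ) : ZMod n) := by
      rw [Nat.cast_sub (by omega)]; simp
    rw [this, ZMod.val_natCast, Nat.mod_eq_of_lt (by omega)]

lemma cast_inj (n i j : ℕ) (hi : i < n) (hj : j < n) :
    (i : ZMod n) = (j : ZMod n) ↔ i = j := by
  rw [ZMod.natCast_eq_natCast_iff', Nat.mod_eq_of_lt hi, Nat.mod_eq_of_lt hj]

lemma cast_succ (n i j : ℕ) (hi : i < n) (hj : j < n) :
    (j : ZMod n) = (i : ZMod n) + 1 ↔ i + 1 = j ∨ (j = 0 ∧ i + 1 = n) := by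
  have : (i : ZMod n) + 1 = ((i + 1 : ℕ) : ZMod n) := by push_cast; rfl
  rw [this]
  by_cases h : i + 1 = n
  · rw [h, ZMod.natCast_self, ← Nat.cast_zero, cast_inj n j 0 hj (by omega)]; omega
  · rw [cast_inj n j (i+1) hj (by omega)]; omega

lemma cyc_iff (n : ℕ) (v : ZMod n) (i j : ℕ) (hi : i < n) (hj : j < n) :
    IsCycleEdge n s(v + (i : ZMod n), v + (j : ZMod n)) ↔
      i + 1 = j ∨ j + 1 = i ∨ (i = 0 ∧ j + 1 = n) ∨ (j = 0 ∧ i + 1 = n) := by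
  have h1 := cast_succ n i j hi hj
  have h2 := cast_succ n j i hj hi
  constructor
  · rintro ⟨k, hk⟩
    rw [Sym2.eq_iff] at hk
    rcases hk with ⟨rfl, h⟩ | ⟨h, rfl⟩
    · have : (j : ZMod n) = (i : ZMod n) + 1 := by
        rw [add_assoc] at h; exact add_left_cancel h
      have := h1.1 this; omega
    · have : (i : ZMod n) = (j : ZMod n) + 1 := by
        rw [add_assoc] at h; exact add_left_cancel h
      have := h2.1 this; omega
  · intro h
    by_cases h' : i + 1 = j ∨ (j = 0 ∧ i + 1 = n)
    · exact ⟨v + i, by rw [h1.2 h', add_assoc]⟩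
    · exact ⟨v + j, by rw [h2.2 (by omega), add_assoc, Sym2.eq_swap]⟩

lemma degMultiset_iso {V W : Type*} [Fintype V] [Fintype W] (G : SimpleGraph V)
    (H : SimpleGraph W) (e : G ≃g H) : degMultiset G = degMultiset H := by
  classical
  unfold degMultiset
  have : (Finset.univ : Finset W) = Finset.univ.map e.toEquiv.toEmbedding := by
    ext; simp
  rw [this, Finset.map_val, Multiset.map_map]
  refine Multiset.map_congr rfl fun v _ => ?_
  have := e.degree_eq v
  simp only [Function.comp]
  convert this.symm
  all_goals rfl

/-- coordinates around v -/
noncomputable def coord (n : ℕ) [NeZero n] (v : ZMod n) : Fin n ≃ ZMod n :=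
  Equiv.ofBijective (fun i => v + ((i : ℕ) : ZMod n)) (by
    rw [Fintype.bijective_iff_injective_and_card]
    refine ⟨fun i j h => ?_, by simp [ZMod.card]⟩
    have := add_left_cancel h
    rw [cast_inj n _ _ i.2 j.2] at this
    exact Fin.ext this)

lemma coord_apply (n : ℕ) [NeZero n] (v : ZMod n) (i : Fin n) :
    coord n v i = v + ((i : ℕ) : ZMod n) := rfl

lemma noncross {n : ℕ} [NeZero n] {G : SimpleGraph (ZMod n)} (hG : IsOuterplane n G) (v : ZMod n)
    (i x y : ℕ) (h1 : 0 < x) (h2 : x < i) (h3 : i < y) (h4 : y < n)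
    (a1 : G.Adj (v + ((0 : ℕ) : ZMod n)) (v + (i : ZMod n)))
    (a2 : G.Adj (v + (x : ZMod n)) (v + (y : ZMod n))) : False := by
  obtain ⟨S, ⟨-, hS⟩, hE⟩ := hG
  have m1 : s(v + ((0 : ℕ) : ZMod n), v + (i : ZMod n)) ∈ G.edgeSet := a1
  have m2 : s(v + (x : ZMod n), v + (y : ZMod n)) ∈ G.edgeSet := a2
  rw [hE] at m1 m2
  have c1 := cyc_iff n v 0 i (by omega) (by omega)
  have c2 := cyc_iff n v x y (by omega) (by omega)
  have m1 : s(v + ((0 : ℕ) : ZMod n), v + (i : ZMod n)) ∈ S := by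
    rcases m1 with m | m
    · have := c1.1 m; omega
    · exact m
  have m2 : s(v + (x : ZMod n), v + (y : ZMod n)) ∈ S := by
    rcases m2 with m | m
    · have := c2.1 m; omega
    · exact m
  refine hS _ m1 _ m2 ?_ ?_
  · intro h
    rw [Sym2.eq_iff] at h
    rcases h with ⟨h, -⟩ | ⟨h, -⟩
    · have := (cast_inj n _ _ (by omega) (by omega)).1 (add_left_cancel h); omega
    · have := (cast_inj n _ _ (by omega) (by omega)).1 (add_left_cancel h); omega
  · intro a b c d hab hcd
    rw [Sym2.eq_iff] at hab hcd
    have e1 := sub_val n x 0 (by omega) (by omega)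
    have e2 := sub_val n y 0 (by omega) (by omega)
    have e3 := sub_val n i 0 (by omega) (by omega)
    have e4 := sub_val n x i (by omega) (by omega)
    have e5 := sub_val n y i (by omega) (by omega)
    have e6 := sub_val n 0 i (by omega) (by omega)
    unfold Between Xor' Xor
    rcases hab with ⟨rfl, rfl⟩ | ⟨rfl, rfl⟩ <;> rcases hcd with ⟨rfl, rfl⟩ | ⟨rfl, rfl⟩ <;>
      simp only [add_sub_add_left_eq_sub, e1, e2, e3, e4, e5, e6] <;> split_ifs <;> omega

lemma cyc_adj {n : ℕ} {G : SimpleGraph (ZMod n)} (hG : IsOuterplane n G) (v : ZMod n)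
    (i j : ℕ) (hi : i < n) (hj : j < n) (h : i + 1 = j ∨ (i = 0 ∧ j + 1 = n)) :
    G.Adj (v + (i : ZMod n)) (v + (j : ZMod n)) := by
  obtain ⟨S, -, hE⟩ := hG
  have : s(v + (i : ZMod n), v + (j : ZMod n)) ∈ G.edgeSet := by
    rw [hE]; left; exact (cyc_iff n v i j hi hj).2 (by omega)
  exact this

lemma std_outer (n : ℕ) (hn : 7 ≤ n) [NeZero n] :
    IsOuterplane n ((Std n).map (coord n 0).toEmbedding) := by
  have key : ∀ i j : ℕ, i < n → j < n →
      (((Std n).map (coord n 0).toEmbedding).Adj (i : ZMod n) (j : ZMod n) ↔ R i j ∨ R j i) := by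
    intro i j hi hj
    have e1 : (i : ZMod n) = (coord n 0).toEmbedding ⟨i, hi⟩ := by simp [coord_apply]
    have e2 : (j : ZMod n) = (coord n 0).toEmbedding ⟨j, hj⟩ := by simp [coord_apply]
    rw [e1, e2, SimpleGraph.map_adj_apply, std_adj]
  have rep : ∀ a : ZMod n, ∃ i : ℕ, i < n ∧ a = i := fun a =>
    ⟨a.val, ZMod.val_lt a, (ZMod.natCast_zmod_val a).symm⟩
  have cyc : ∀ i j : ℕ, i < n → j < n → (IsCycleEdge n s((i : ZMod n), (j : ZMod n)) ↔
      i + 1 = j ∨ j + 1 = i ∨ (i = 0 ∧ j + 1 = n) ∨ (j = 0 ∧ i + 1 = n)) := by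
    intro i j hi hj
    simpa using cyc_iff n 0 i j hi hj
  let S : Set (Sym2 (ZMod n)) := {e | ∃ i j : ℕ, e = s((i : ZMod n), (j : ZMod n)) ∧
    ((i = 0 ∧ 4 ≤ j ∧ j + 1 < n) ∨ (i = 1 ∧ j = 3))}
  refine ⟨S, ⟨?_, ?_⟩, ?_⟩
  · rintro e ⟨i, j, rfl, h⟩
    refine ⟨?_, ?_⟩
    · rw [Sym2.mk_isDiag_iff, cast_inj n i j (by omega) (by omega)]; omega
    · rw [cyc i j (by omega) (by omega)]; omega
  · rintro e ⟨i, j, rfl, h⟩ f ⟨k, l, rfl, h'⟩ hne hc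
    have hi : i < n := by omega
    have hj : j < n := by omega
    have hk : k < n := by omega
    have hl : l < n := by omega
    have c1 := hc i j k l rfl rfl
    have c2 := hc j i k l Sym2.eq_swap rfl
    have hne' : ¬ (i = k ∧ j = l) := by
      rintro ⟨rfl, rfl⟩; exact hne rfl
    unfold Between Xor' Xor at c1 c2
    rw [sub_val n k i hk hi, sub_val n j i hj hi, sub_val n l i hl hi] at c1
    rw [sub_val n k j hk hj, sub_val n i j hi hj, sub_val n l j hl hj] at c2
    split_ifs at c1 c2 <;> omega
  · ext e
    induction e using Sym2.ind with
    | _ a b =>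
    obtain ⟨i, hi, rfl⟩ := rep a
    obtain ⟨j, hj, rfl⟩ := rep b
    rw [SimpleGraph.mem_edgeSet, key i j hi hj]
    simp only [Set.mem_union, Set.mem_setOf_eq, S]
    rw [cyc i j hi hj]
    unfold R
    constructor
    · intro h
      by_cases hcc : i + 1 = j ∨ j + 1 = i ∨ (i = 0 ∧ j + 1 = n) ∨ (j = 0 ∧ i + 1 = n)
      · exact Or.inl hcc
      · right
        by_cases hij : i < j
        · exact ⟨i, j, rfl, by omega⟩
        · exact ⟨j, i, Sym2.eq_swap, by omega⟩
    · rintro (h | ⟨k, l, h, h'⟩)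
      · omega
      · rw [Sym2.eq_iff, cast_inj n i k hi (by omega), cast_inj n j l hj (by omega),
          cast_inj n i l hi (by omega), cast_inj n j k hj (by omega)] at h
        omega

lemma std_deg (n : ℕ) (hn : 7 ≤ n) : degMultiset (Std n) =
    (n - 3) ::ₘ (Multiset.replicate (n - 3) 3 + Multiset.replicate 2 2) := by
  classical
  unfold degMultiset
  let z : Fin n := ⟨0, by omega⟩
  let t : Fin n := ⟨2, by omega⟩
  let l : Fin n := ⟨n - 1, by omega⟩
  let T : Finset (Fin n) := {z, t, l}
  have hT : T.card = 3 := by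
    apply Finset.card_eq_three.2
    exact ⟨z, t, l, by simp [z, t], by simp [z, l, Fin.ext_iff]; omega,
      by simp [t, l, Fin.ext_iff]; omega, rfl⟩
  have hzt : z ∉ ({t, l} : Finset (Fin n)) := by simp [z, t, l, Fin.ext_iff]; omega
  have htl : t ∉ ({l} : Finset (Fin n)) := by simp [t, l, Fin.ext_iff]; omega
  have hU : (Finset.univ : Finset (Fin n)).val = T.val + Tᶜ.val := by
    have h := Finset.union_compl T
    rw [← Finset.disjUnion_eq_union _ _ disjoint_compl_right] at h
    rw [← h]; rfl
  have dz : (Std n).degree z = n - 3 := by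
    have : (Std n).neighborFinset z = ({z, t, ⟨3, by omega⟩} : Finset (Fin n))ᶜ := by
      ext j
      simp only [SimpleGraph.mem_neighborFinset, std_adj, R, Finset.mem_compl, Finset.mem_insert,
        Finset.mem_singleton, Fin.ext_iff, z, t, true_and]
      omega
    rw [← SimpleGraph.card_neighborFinset_eq_degree, this, Finset.card_compl, Fintype.card_fin]
    congr 1
  have dt : (Std n).degree t = 2 := by
    have : (Std n).neighborFinset t = ({⟨1, by omega⟩, ⟨3, by omega⟩} : Finset (Fin n)) := by
      ext j
      simp only [SimpleGraph.mem_neighborFinset, std_adj, R, Finset.mem_insert,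
        Finset.mem_singleton, Fin.ext_iff, t]
      omega
    rw [← SimpleGraph.card_neighborFinset_eq_degree, this]
    exact Finset.card_pair (by simp)
  have dl : (Std n).degree l = 2 := by
    have : (Std n).neighborFinset l = ({⟨0, by omega⟩, ⟨n - 2, by omega⟩} : Finset (Fin n)) := by
      ext j
      simp only [SimpleGraph.mem_neighborFinset, std_adj, R, Finset.mem_insert,
        Finset.mem_singleton, Fin.ext_iff, l]
      omega
    rw [← SimpleGraph.card_neighborFinset_eq_degree, this]
    exact Finset.card_pair (by simp [Fin.ext_iff]; omega)
  have dr : ∀ i ∈ Tᶜ, (Std n).degree i = 3 := by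
    intro i hi
    simp only [T, Finset.mem_compl, Finset.mem_insert, Finset.mem_singleton, Fin.ext_iff, z, t, l]
      at hi
    obtain ⟨a, b, c, hab, hac, hbc, ha⟩ : ∃ a b c : Fin n, a ≠ b ∧ a ≠ c ∧ b ≠ c ∧
        ∀ j : Fin n, R i.val j.val ∨ R j.val i.val ↔ (j = a ∨ j = b ∨ j = c) := by
      simp only [R, Fin.ext_iff, Ne]
      by_cases h1 : i.val = 1
      · exact ⟨⟨0, by omega⟩, ⟨2, by omega⟩, ⟨3, by omega⟩, by simp, by simp, by simp,
          fun j => by simp only; omega⟩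
      by_cases h3 : i.val = 3
      · exact ⟨⟨1, by omega⟩, ⟨2, by omega⟩, ⟨4, by omega⟩, by simp, by simp, by simp,
          fun j => by simp only; omega⟩
      · exact ⟨⟨0, by omega⟩, ⟨i.val - 1, by omega⟩, ⟨i.val + 1, by omega⟩, by simp only; omega,
          by simp only; omega, by simp only; omega, fun j => by simp only; omega⟩
    have : (Std n).neighborFinset i = ({a, b, c} : Finset (Fin n)) := by
      ext j
      simp only [SimpleGraph.mem_neighborFinset, std_adj, ha, Finset.mem_insert,
        Finset.mem_singleton]
    rw [← SimpleGraph.card_neighborFinset_eq_degree, this]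
    exact Finset.card_eq_three.2 ⟨_, _, _, hab, hac, hbc, rfl⟩
  rw [hU, Multiset.map_add]
  have h2 : Multiset.map (fun v => (Std n).degree v) Tᶜ.val = Multiset.replicate (n - 3) 3 := by
    rw [Multiset.map_congr rfl dr, Multiset.map_const', Finset.card_val, Finset.card_compl, hT,
      Fintype.card_fin]
  have h1 : Multiset.map (fun v => (Std n).degree v) T.val = (n - 3) ::ₘ Multiset.replicate 2 2 := by
    simp only [T, Finset.insert_val_of_notMem hzt, Finset.insert_val_of_notMem htl,
      Multiset.map_cons, Finset.singleton_val, Multiset.map_singleton, dz, dt, dl]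
    rfl
  rw [h1]
  erw [h2]
  rw [Multiset.cons_add, add_comm]

/-- consequences of the degree multiset -/
lemma deg_facts {V : Type*} [Fintype V] [DecidableEq V] (G : SimpleGraph V) [DecidableRel G.Adj]
    (n : ℕ) (hn : 7 ≤ n)
    (h : degMultiset G = (n - 3) ::ₘ (Multiset.replicate (n - 3) 3 + Multiset.replicate 2 2)) :
    (∃ v, G.degree v = n - 3 ∧ ∀ u, u ≠ v → G.degree u = 2 ∨ G.degree u = 3) ∧
    (Finset.univ.filter fun v => G.degree v = 2).card = 2 := by
  have h' : Finset.univ.val.map (fun v => G.degree v) =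
      (n - 3) ::ₘ (Multiset.replicate (n - 3) 3 + Multiset.replicate 2 2) := by
    rw [← h]; unfold degMultiset
    refine Multiset.map_congr rfl fun v _ => ?_
    congr!
  clear h
  have cnt : ∀ k, (Finset.univ.filter fun v => G.degree v = k).card =
      Multiset.count k ((n - 3) ::ₘ (Multiset.replicate (n - 3) 3 + Multiset.replicate 2 2)) := by
    intro k
    rw [← h', Multiset.count_map]
    simp only [eq_comm (a := k)]
    rfl
  have mem : ∀ v, G.degree v = n - 3 ∨ G.degree v = 2 ∨ G.degree v = 3 := by
    intro v
    have : G.degree v ∈ Finset.univ.val.map (fun v => G.degree v) :=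
      Multiset.mem_map_of_mem _ (Finset.mem_univ v)
    rw [h'] at this
    simp only [Multiset.mem_cons, Multiset.mem_add, Multiset.mem_replicate] at this
    tauto
  constructor
  · have := cnt (n - 3)
    have e : Multiset.count (n - 3) ((n - 3) ::ₘ (Multiset.replicate (n - 3) 3 + Multiset.replicate 2 2)) = 1 := by
      rw [Multiset.count_cons_self, Multiset.count_add, Multiset.count_replicate,
        Multiset.count_replicate, if_neg (by omega), if_neg (by omega)]
    rw [e, Finset.card_eq_one] at this
    obtain ⟨v, hv⟩ := this
    have hv' : ∀ u, G.degree u = n - 3 ↔ u = v := by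
      intro u
      have := Finset.ext_iff.1 hv u
      simpa using this
    exact ⟨v, (hv' v).2 rfl, fun u hu => (mem u).resolve_left fun h => hu ((hv' u).1 h)⟩
  · rw [cnt 2, Multiset.count_cons_of_ne (by omega), Multiset.count_add, Multiset.count_replicate,
        Multiset.count_replicate, if_neg (by omega), if_pos rfl]


lemma two_nb {V : Type*} [Fintype V] [DecidableEq V] {K : SimpleGraph V} [DecidableRel K.Adj]
    {i a b : V} (hd : K.degree i = 2) (ha : K.Adj i a) (hb : K.Adj i b) (hab : a ≠ b) (j : V)
    (hj : K.Adj i j) : j = a ∨ j = b := by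
  have hs : ({a, b} : Finset V) ⊆ K.neighborFinset i := by
    intro u hu; simp at hu ⊢; rcases hu with rfl | rfl <;> assumption
  have := Finset.eq_of_subset_of_card_le hs (by
    rw [SimpleGraph.card_neighborFinset_eq_degree, hd, Finset.card_pair hab])
  have h2 : j ∈ ({a, b} : Finset V) := by rw [this]; simpa using hj
  simpa using h2

lemma three_nb {V : Type*} [Fintype V] [DecidableEq V] {K : SimpleGraph V} [DecidableRel K.Adj]
    {i a b c : V} (hd : K.degree i = 2 ∨ K.degree i = 3) (ha : K.Adj i a) (hb : K.Adj i b)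
    (hc : K.Adj i c)
    (hab : a ≠ b) (hac : a ≠ c) (hbc : b ≠ c) :
    K.degree i = 3 ∧ ∀ j, K.Adj i j → j = a ∨ j = b ∨ j = c := by
  have hs : ({a, b, c} : Finset V) ⊆ K.neighborFinset i := by
    intro u hu; simp at hu ⊢; rcases hu with rfl | rfl | rfl <;> assumption
  have h3 : ({a, b, c} : Finset V).card = 3 := Finset.card_eq_three.2 ⟨a, b, c, hab, hac, hbc, rfl⟩
  have hle := Finset.card_le_card hs
  rw [SimpleGraph.card_neighborFinset_eq_degree, h3] at hle
  have := Finset.eq_of_subset_of_card_le hs (by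
    rw [SimpleGraph.card_neighborFinset_eq_degree, h3]; omega)
  refine ⟨by omega, fun j hj => ?_⟩
  have h2 : j ∈ ({a, b, c} : Finset V) := by rw [this]; simpa using hj
  simpa using h2

lemma third_nb {V : Type*} [Fintype V] [DecidableEq V] {K : SimpleGraph V} [DecidableRel K.Adj]
    {i : V} (a b : V) (hd : K.degree i = 3) : ∃ c, K.Adj i c ∧ c ≠ a ∧ c ≠ b := by
  have : ∃ c ∈ K.neighborFinset i, c ∉ ({a, b} : Finset V) := by
    by_contra! h
    have := Finset.card_le_card (show K.neighborFinset i ⊆ {a, b} from h)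
    rw [SimpleGraph.card_neighborFinset_eq_degree, hd] at this
    have := Finset.card_le_two (a := a) (b := b)
    omega
  obtain ⟨c, h1, h2⟩ := this
  simp at h1 h2
  exact ⟨c, h1, h2.1, h2.2⟩

def mir (n i : ℕ) : ℕ := if i = 0 then 0 else n - i

lemma arith (n p q x y : ℕ) (hn : 7 ≤ n) (bp : 2 ≤ p ∧ p + 2 ≤ n) (bq : 2 ≤ q ∧ q + 2 ≤ n)
    (hpq : p ≠ q) (hx : x = 1 ∨ x + 1 = n ∨ x = p ∨ x = q) (hy : y = 1 ∨ y + 1 = n ∨ y = p ∨ y = q)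
    (hxy : x + 1 < y) (hb : ∀ i, x < i → i < y → i = p ∨ i = q) :
    (x = 1 ∧ y = 3 ∧ ((p = 2 ∧ q = 3) ∨ (p = 3 ∧ q = 2))) ∨
    (x + 3 = n ∧ y + 1 = n ∧ ((p + 2 = n ∧ q + 3 = n) ∨ (p + 3 = n ∧ q + 2 = n))) := by
  have b1 := hb (x + 1) (by omega) hxy
  by_cases h2 : x + 2 < y
  · exfalso
    have b2 := hb (x + 2) (by omega) h2
    by_cases h3 : x + 3 < y
    · have b3 := hb (x + 3) (by omega) h3
      omega
    · omega
  · have : y = x + 2 := by omega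
    subst this
    omega

lemma arith1 (n p q x y i j : ℕ) (hi : i < n) (hj : j < n)
    (h : (x = 1 ∧ y = 3) ∨ (x = 3 ∧ y = 1)) (h' : (p = 2 ∧ q = 3) ∨ (p = 3 ∧ q = 2)) :
    (i + 1 = j ∨ j + 1 = i ∨ (i = 0 ∧ j ≠ 0 ∧ j ≠ p ∧ j ≠ q) ∨
      (j = 0 ∧ i ≠ 0 ∧ i ≠ p ∧ i ≠ q) ∨ (i = x ∧ j = y) ∨ (i = y ∧ j = x)) ↔ R i j ∨ R j i := by
  unfold R
  rcases h with ⟨rfl, rfl⟩ | ⟨rfl, rfl⟩ <;> rcases h' with ⟨rfl, rfl⟩ | ⟨rfl, rfl⟩ <;>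
    constructor <;> intro h <;> omega

lemma arith2 (n p q x y i j : ℕ) (hn : 7 ≤ n) (hi : i < n) (hj : j < n)
    (h : (x + 1 = n ∧ y + 3 = n) ∨ (x + 3 = n ∧ y + 1 = n))
    (h' : (p + 2 = n ∧ q + 3 = n) ∨ (p + 3 = n ∧ q + 2 = n)) :
    (i + 1 = j ∨ j + 1 = i ∨ (i = 0 ∧ j ≠ 0 ∧ j ≠ p ∧ j ≠ q) ∨
      (j = 0 ∧ i ≠ 0 ∧ i ≠ p ∧ i ≠ q) ∨ (i = x ∧ j = y) ∨ (i = y ∧ j = x)) ↔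
    R (mir n i) (mir n j) ∨ R (mir n j) (mir n i) := by
  have e : (i + 1 = j ∨ j + 1 = i ∨ (i = 0 ∧ j ≠ 0 ∧ j + 2 ≠ n ∧ j + 3 ≠ n) ∨
      (j = 0 ∧ i ≠ 0 ∧ i + 2 ≠ n ∧ i + 3 ≠ n) ∨ (i + 1 = n ∧ j + 3 = n) ∨ (i + 3 = n ∧ j + 1 = n)) ↔
      R (mir n i) (mir n j) ∨ R (mir n j) (mir n i) := by
    have mi : (i = 0 ∧ mir n i = 0) ∨ (i ≠ 0 ∧ mir n i + i = n) := by
      unfold mir; split_ifs <;> omega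
    have mj : (j = 0 ∧ mir n j = 0) ∨ (j ≠ 0 ∧ mir n j + j = n) := by
      unfold mir; split_ifs <;> omega
    clear h h'
    generalize mir n i = a at *
    generalize mir n j = b at *
    unfold R
    rcases mi with ⟨h1, h2⟩ | ⟨h1, h2⟩ <;> rcases mj with ⟨h3, h4⟩ | ⟨h3, h4⟩
    · subst h1 h2 h3 h4; simp; omega
    · subst h1 h2
      constructor
      · rintro (h | h | h | h | h | h) <;> omega
      · rintro ((h | h | h) | (h | h | h)) <;> omega
    · subst h3 h4
      constructor
      · rintro (h | h | h | h | h | h) <;> omega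
      · rintro ((h | h | h) | (h | h | h)) <;> omega
    · constructor
      · rintro (h | h | h | h | h | h) <;> omega
      · rintro ((h | h | h) | (h | h | h)) <;> omega
  rw [← e]
  clear e
  have k1 : ∀ t : ℕ, (t ≠ p ∧ t ≠ q) ↔ (t + 2 ≠ n ∧ t + 3 ≠ n) := by intro t; omega
  have k2 : (i = x ∧ j = y) ∨ (i = y ∧ j = x) ↔ (i + 1 = n ∧ j + 3 = n) ∨ (i + 3 = n ∧ j + 1 = n) := by
    omega
  rw [k1 i, k1 j, k2]

set_option maxHeartbeats 2000000 in
lemma core (n : ℕ) (hn : 7 ≤ n) (K : SimpleGraph (Fin n)) [DecidableRel K.Adj]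
    (hcyc : ∀ i j : Fin n, (i.val + 1 = j.val ∨ (i.val = 0 ∧ j.val + 1 = n)) → K.Adj i j)
    (hnc : ∀ o i x y : Fin n, o.val = 0 → 0 < x.val → x.val < i.val → i.val < y.val →
      K.Adj o i → K.Adj x y → False)
    (hd0 : ∀ o : Fin n, o.val = 0 → K.degree o = n - 3)
    (hd : ∀ o : Fin n, o.val ≠ 0 → K.degree o = 2 ∨ K.degree o = 3)
    (hB : (Finset.univ.filter fun v => K.degree v = 2).card = 2) :
    (∀ i j : Fin n, K.Adj i j ↔ R i.val j.val ∨ R j.val i.val) ∨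
    (∀ i j : Fin n, K.Adj i j ↔ R (mir n i.val) (mir n j.val) ∨ R (mir n j.val) (mir n i.val)) := by
  obtain ⟨o, ho⟩ : ∃ o : Fin n, o.val = 0 := ⟨⟨0, by omega⟩, rfl⟩
  obtain ⟨f, hf⟩ : ∃ o : Fin n, o.val = 1 := ⟨⟨1, by omega⟩, rfl⟩
  obtain ⟨l, hl⟩ : ∃ o : Fin n, o.val + 1 = n := ⟨⟨n - 1, by omega⟩, by simp only; omega⟩
  -- cycle neighbours
  have cn : ∀ i : Fin n, ∃ a b : Fin n, K.Adj i a ∧ K.Adj i b ∧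
      (a.val + 1 = i.val ∨ (i.val = 0 ∧ a.val + 1 = n)) ∧
      (i.val + 1 = b.val ∨ (b.val = 0 ∧ i.val + 1 = n)) := by
    intro i
    have h1 : ∃ a : Fin n, (a.val + 1 = i.val ∨ (i.val = 0 ∧ a.val + 1 = n)) := by
      by_cases h : i.val = 0
      · exact ⟨l, by omega⟩
      · exact ⟨⟨i.val - 1, by omega⟩, by simp only; omega⟩
    have h2 : ∃ b : Fin n, (i.val + 1 = b.val ∨ (b.val = 0 ∧ i.val + 1 = n)) := by
      by_cases h : i.val + 1 = n
      · exact ⟨o, by omega⟩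
      · exact ⟨⟨i.val + 1, by omega⟩, Or.inl rfl⟩
    obtain ⟨a, ha⟩ := h1
    obtain ⟨b, hb⟩ := h2
    refine ⟨a, b, ?_, ?_, ha, hb⟩
    · rcases ha with h | h
      · exact (hcyc a i (by omega)).symm
      · exact hcyc i a (by omega)
    · rcases hb with h | h
      · exact hcyc i b (by omega)
      · exact (hcyc b i (by omega)).symm
  -- the two non-neighbours of o
  obtain ⟨p, q, hpq, hW⟩ : ∃ p q : Fin n, p.val ≠ q.val ∧
      ∀ j : Fin n, (¬ K.Adj o j ∧ j.val ≠ 0) ↔ (j.val = p.val ∨ j.val = q.val) := by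
    have hc : ((insert o (K.neighborFinset o))ᶜ).card = 2 := by
      rw [Finset.card_compl, Finset.card_insert_of_notMem (by simp),
        SimpleGraph.card_neighborFinset_eq_degree, hd0 o ho, Fintype.card_fin]
      omega
    obtain ⟨p, q, hpq, h⟩ := Finset.card_eq_two.1 hc
    refine ⟨p, q, fun h => hpq (Fin.ext h), fun j => ?_⟩
    have := Finset.ext_iff.1 h j
    simp [Fin.ext_iff, ho] at this
    tauto
  have hof := hcyc o f (by omega)
  have hol := hcyc o l (by omega)
  have hp := (hW p).2 (Or.inl rfl)
  have hq := (hW q).2 (Or.inr rfl)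
  have nf : ¬ (f.val = p.val ∨ f.val = q.val) := fun h => ((hW f).2 h).1 hof
  have nl : ¬ (l.val = p.val ∨ l.val = q.val) := fun h => ((hW l).2 h).1 hol
  have oadj : ∀ j : Fin n, K.Adj o j ↔ j.val ≠ 0 ∧ j.val ≠ p.val ∧ j.val ≠ q.val := by
    intro j
    have h := hW j
    have h0 : K.Adj o j → j.val ≠ 0 := fun h e => h.ne (Fin.ext (by omega))
    constructor
    · intro h1
      have h2 : ¬ (j.val = p.val ∨ j.val = q.val) := fun h2 => (h.2 h2).1 h1
      have := h0 h1
      omega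
    · intro h1
      by_contra h2
      have := h.1 ⟨h2, h1.1⟩
      omega
  -- interior neighbours
  have hint : ∀ i : Fin n, i.val ≠ 0 → i.val ≠ 1 → i.val + 1 ≠ n → i.val ≠ p.val → i.val ≠ q.val →
      K.degree i = 3 ∧ ∀ j : Fin n, K.Adj i j → j.val = 0 ∨ j.val + 1 = i.val ∨ i.val + 1 = j.val := by
    intro i h0 h1 h2 h3 h4
    obtain ⟨a, b, ha, hb, ha', hb'⟩ := cn i
    obtain ⟨e, h⟩ := three_nb (hd i h0) ((oadj i).2 ⟨h0, h3, h4⟩).symm ha hb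
      (fun h => by have := congrArg Fin.val h; omega)
      (fun h => by have := congrArg Fin.val h; omega)
      (fun h => by have := congrArg Fin.val h; omega)
    refine ⟨e, fun j hj => ?_⟩
    have := h j hj
    simp only [Fin.ext_iff] at this
    omega
  obtain ⟨z, w, hzw, hB'⟩ := Finset.card_eq_two.1 hB
  have hB' : ∀ j : Fin n, K.degree j = 2 ↔ j.val = z.val ∨ j.val = w.val := by
    intro j
    have := Finset.ext_iff.1 hB' j
    simpa [Fin.ext_iff] using this
  have hzw : z.val ≠ w.val := fun h => hzw (Fin.ext h)
  have hspec : ∀ j : Fin n, K.degree j = 2 → j.val = 1 ∨ j.val + 1 = n ∨ j.val = p.val ∨ j.val = q.val := by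
    intro j hj
    by_contra! h
    by_cases h0 : j.val = 0
    · have := hd0 j h0; omega
    · have := (hint j h0 h.1 h.2.1 h.2.2.1 h.2.2.2).1; omega
  have hz := hspec z ((hB' z).2 (Or.inl rfl))
  have hw := hspec w ((hB' w).2 (Or.inr rfl))
  -- chord partner
  have partner : ∀ x : Fin n, (x.val = 1 ∨ x.val + 1 = n ∨ x.val = p.val ∨ x.val = q.val) →
      x.val ≠ z.val → x.val ≠ w.val → ∃ y : Fin n, K.Adj x y ∧
      (y.val = 1 ∨ y.val + 1 = n ∨ y.val = p.val ∨ y.val = q.val) ∧ y.val ≠ z.val ∧ y.val ≠ w.val ∧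
      y.val ≠ x.val ∧ y.val + 1 ≠ x.val ∧ x.val + 1 ≠ y.val ∧
      ∀ j : Fin n, K.Adj x j → j.val = y.val ∨ j.val + 1 = x.val ∨ x.val + 1 = j.val ∨ 
        (j.val = 0 ∧ x.val + 1 = n) := by
    intro x hx hxz hxw
    have x0 : x.val ≠ 0 := by omega
    have dx : K.degree x = 3 := by
      rcases hd x x0 with h | h
      · have := (hB' x).1 h; omega
      · exact h
    obtain ⟨a, b, ha, hb, ha', hb'⟩ := cn x
    obtain ⟨y, hy, hya, hyb⟩ := third_nb a b dx
    rw [Ne, Fin.ext_iff] at hya hyb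
    have y0 : y.val ≠ 0 := by
      intro h
      have e : y = o := Fin.ext (by omega)
      rw [e] at hy
      have := (oadj x).1 hy.symm
      omega
    have hxy : y.val ≠ x.val := fun h => hy.ne (Fin.ext h.symm)
    have ys : y.val = 1 ∨ y.val + 1 = n ∨ y.val = p.val ∨ y.val = q.val := by
      by_contra! h
      have := (hint y y0 h.1 h.2.1 h.2.2.1 h.2.2.2).2 x hy.symm
      omega
    have y2 : K.degree y = 3 := by
      clear hx ys hz hw nf nl
      obtain ⟨c, d, hc, hd', hc', hd''⟩ := cn y
      refine (three_nb (hd y y0) hy.symm hc hd' ?_ ?_ ?_).1 <;> rw [Ne, Fin.ext_iff] <;> omega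
    have yB := hB' y
    refine ⟨y, hy, ys, by omega, by omega, hxy, by omega, by omega, fun j hj => ?_⟩
    clear hx ys hz hw nf nl
    have := (three_nb (Or.inr dx) hy ha hb (by rw [Ne, Fin.ext_iff]; omega)
      (by rw [Ne, Fin.ext_iff]; omega) (by rw [Ne, Fin.ext_iff]; omega)).2 j hj
    simp only [Fin.ext_iff] at this
    omega
  obtain ⟨x, hx, hxz, hxw⟩ : ∃ x : Fin n, (x.val = 1 ∨ x.val + 1 = n ∨ x.val = p.val ∨ x.val = q.val) ∧
      x.val ≠ z.val ∧ x.val ≠ w.val := by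
    by_contra! h
    have h1 := h f; have h2 := h l; have h3 := h p; have h4 := h q
    omega
  obtain ⟨y, hxy, hy, hyz, hyw, hne, hy1, hy2, hxn⟩ := partner x hx hxz hxw
  have hyn : ∀ j : Fin n, K.Adj y j → j.val = x.val ∨ j.val + 1 = y.val ∨ y.val + 1 = j.val ∨ 
        (j.val = 0 ∧ y.val + 1 = n) := by
    obtain ⟨x', -, hx', h1, h2, h3, -, -, h4⟩ := partner y hy hyz hyw
    have : x'.val = x.val := by omega
    rw [this] at h4
    exact h4
  have htwo : ∀ i : Fin n, (i.val = z.val ∨ i.val = w.val) → ∀ j : Fin n, K.Adj i j →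
      j.val + 1 = i.val ∨ i.val + 1 = j.val ∨ (j.val = 0 ∧ i.val + 1 = n) := by
    intro i hi j hj
    obtain ⟨a, b, ha, hb, ha', hb'⟩ := cn i
    have := two_nb ((hB' i).2 hi) ha hb (by rw [Ne, Fin.ext_iff]; omega) j hj
    simp only [Fin.ext_iff] at this
    omega
  -- full description
  have full : ∀ i j : Fin n, K.Adj i j ↔ (i.val + 1 = j.val ∨ j.val + 1 = i.val ∨
      (i.val = 0 ∧ j.val ≠ 0 ∧ j.val ≠ p.val ∧ j.val ≠ q.val) ∨
      (j.val = 0 ∧ i.val ≠ 0 ∧ i.val ≠ p.val ∧ i.val ≠ q.val) ∨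
      (i.val = x.val ∧ j.val = y.val) ∨ (i.val = y.val ∧ j.val = x.val)) := by
    intro i j
    constructor
    · intro h
      by_cases i0 : i.val = 0
      · have e : i = o := Fin.ext (by omega)
        clear hx hy hz hw nf nl; have := (oadj j).1 (e ▸ h); omega
      by_cases j0 : j.val = 0
      · have e : j = o := Fin.ext (by omega)
        clear hx hy hz hw nf nl; have := (oadj i).1 (e ▸ h.symm); omega
      by_cases ix : i.val = x.val
      · have e : i = x := Fin.ext ix
        clear hx hy hz hw nf nl; have := hxn j (e ▸ h); omega
      by_cases iy : i.val = y.val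
      · have e : i = y := Fin.ext iy
        clear hx hy hz hw nf nl; have := hyn j (e ▸ h); omega
      by_cases iz : i.val = z.val ∨ i.val = w.val
      · clear hx hy hz hw nf nl; have := htwo i iz j h; omega
      · have := (hint i i0 (by omega) (by omega) (by omega) (by omega)).2 j h
        omega
    · clear hx hy hz hw nf nl
      rintro (h | h | h | h | h | h)
      · exact hcyc i j (by omega)
      · exact (hcyc j i (by omega)).symm
      · have e : i = o := Fin.ext (by omega)
        rw [e]; exact (oadj j).2 h.2
      · have e : j = o := Fin.ext (by omega)
        rw [e]; exact ((oadj i).2 h.2).symm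
      · rw [Fin.ext h.1, Fin.ext h.2]; exact hxy
      · rw [Fin.ext h.1, Fin.ext h.2]; exact hxy.symm
  have nc : ∀ i : ℕ, i < n → i ≠ p.val → i ≠ q.val →
      ¬ (x.val < i ∧ i < y.val) ∧ ¬ (y.val < i ∧ i < x.val) := by
    intro i hi h1 h2
    refine ⟨fun h => ?_, fun h => ?_⟩
    · exact hnc o ⟨i, hi⟩ x y ho (by omega) h.1 h.2 ((oadj _).2 ⟨by simp only; omega, h1, h2⟩) hxy
    · exact hnc o ⟨i, hi⟩ y x ho (by omega) h.1 h.2 ((oadj _).2 ⟨by simp only; omega, h1, h2⟩) hxy.symm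
  have fin : (((x.val = 1 ∧ y.val = 3) ∨ (x.val = 3 ∧ y.val = 1)) ∧
      ((p.val = 2 ∧ q.val = 3) ∨ (p.val = 3 ∧ q.val = 2))) ∨
      (((x.val + 1 = n ∧ y.val + 3 = n) ∨ (x.val + 3 = n ∧ y.val + 1 = n)) ∧
      ((p.val + 2 = n ∧ q.val + 3 = n) ∨ (p.val + 3 = n ∧ q.val + 2 = n))) := by
    have bp : 2 ≤ p.val ∧ p.val + 2 ≤ n := by omega
    have bq : 2 ≤ q.val ∧ q.val + 2 ≤ n := by omega
    by_cases hlt : x.val < y.val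
    · have := arith n p.val q.val x.val y.val hn bp bq hpq hx hy (by omega) (fun i h1 h2 => by
        by_contra! h
        exact (nc i (by omega) h.1 h.2).1 ⟨h1, h2⟩)
      rcases this with ⟨h1, h2, h3⟩ | ⟨h1, h2, h3⟩
      · exact Or.inl ⟨Or.inl ⟨h1, h2⟩, h3⟩
      · exact Or.inr ⟨Or.inr ⟨h1, h2⟩, h3⟩
    · have := arith n p.val q.val y.val x.val hn bp bq hpq hy hx (by omega) (fun i h1 h2 => by
        by_contra! h
        exact (nc i (by omega) h.1 h.2).2 ⟨h1, h2⟩)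
      rcases this with ⟨h1, h2, h3⟩ | ⟨h1, h2, h3⟩
      · exact Or.inl ⟨Or.inr ⟨h2, h1⟩, h3⟩
      · exact Or.inr ⟨Or.inl ⟨h2, h1⟩, h3⟩
  clear hW oadj hint hB' hspec partner htwo hcyc hnc nc hxn hyn hd hd0 cn
  rcases fin with ⟨h, h'⟩ | ⟨h, h'⟩
  · left
    intro i j
    rw [full]
    exact arith1 n _ _ _ _ _ _ i.2 j.2 h h'
  · right
    intro i j
    rw [full]
    exact arith2 n _ _ _ _ _ _ hn i.2 j.2 h h'

def mirEquiv (n : ℕ) : Fin n ≃ Fin n where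
  toFun i := ⟨mir n i.val, by unfold mir; split_ifs <;> omega⟩
  invFun i := ⟨mir n i.val, by unfold mir; split_ifs <;> omega⟩
  left_inv i := by ext; simp only [mir]; split_ifs <;> omega
  right_inv i := by ext; simp only [mir]; split_ifs <;> omega

lemma iso_std (n : ℕ) (hn : 7 ≤ n) [NeZero n] (G : SimpleGraph (ZMod n)) (hG : IsOuterplane n G)
    (hM : degMultiset G = (n - 3) ::ₘ (Multiset.replicate (n - 3) 3 + Multiset.replicate 2 2)) :
    Nonempty (G ≃g Std n) := by
  classical
  obtain ⟨⟨v, hv, hv'⟩, -⟩ := deg_facts G n hn hM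
  let K : SimpleGraph (Fin n) := G.comap (coord n v)
  let e : K ≃g G := SimpleGraph.Iso.comap (coord n v) G
  have hKM := (degMultiset_iso K G e).trans hM
  have hB := (deg_facts K n hn hKM).2
  have hdeg : ∀ i, K.degree i = G.degree (coord n v i) := fun i => (e.degree_eq i).symm
  have c0 : ∀ i : Fin n, i.val = 0 ↔ coord n v i = v := by
    intro i
    have := cast_inj n i.val 0 i.2 (by omega)
    rw [Nat.cast_zero] at this
    rw [coord_apply, add_eq_left, this]
  have := core n hn K (fun i j h => cyc_adj hG v i.val j.val i.2 j.2 h)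
    (fun o i x y ho hx hxi hiy h1 h2 => noncross hG v i.val x.val y.val hx hxi hiy y.2
      (by
        have h1 : G.Adj (coord n v o) (coord n v i) := h1
        rwa [coord_apply, coord_apply, ho] at h1) h2)
    (fun o ho => by rw [hdeg, (c0 o).1 ho, hv])
    (fun o ho => by rw [hdeg]; exact hv' _ (fun h => ho ((c0 o).2 h)))
    hB
  rcases this with h | h
  · exact ⟨e.symm.trans ⟨Equiv.refl _, fun {i j} => (h i j).symm⟩⟩
  · exact ⟨e.symm.trans ⟨mirEquiv n, fun {i j} => (h i j).symm⟩⟩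

end A2

/-- Type A2 of the paper's Theorem 1: for `n ≥ 7`, the multiset
`{n-3, 3^(n-3), 2^2}` is outerplane-unigraphic. -/
theorem unigraphic_A2 (n : ℕ) (hn : 7 ≤ n) :
    OuterplaneUnigraphic n
      ((n - 3) ::ₘ (Multiset.replicate (n - 3) 3 + Multiset.replicate 2 2)) := by
  have h0 : n ≠ 0 := by omega
  haveI : NeZero n := ⟨h0⟩
  have hdm : ∀ G : SimpleGraph (ZMod n), degreeMultiset n G = degMultiset G := by
    intro G
    unfold degreeMultiset
    rw [dif_neg h0]
  refine ⟨⟨_, A2.std_outer n hn, ?_⟩, ?_⟩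
  · rw [hdm]
    exact (A2.degMultiset_iso _ _ (SimpleGraph.Iso.map (A2.coord n 0) (A2.Std n))).symm.trans
      (A2.std_deg n hn)
  · intro G G' hG hG' h h'
    rw [hdm] at h h'
    obtain ⟨e⟩ := A2.iso_std n hn G hG h
    obtain ⟨e'⟩ := A2.iso_std n hn G' hG' h'
    exact ⟨e.trans e'.symm⟩
end

section
/- Let n ≥ 5 and x ≥ 2 be integers such that x−1 divides n−4. Then the multiset {(x+2)^((n−4)/(x−1)), 3^((n−4)(x−2)/(x−1)+2), 2^2} is outerplane-unigraphic: there exists an outerplane graph on n vertices with this degree multiset, and any two outerplane graphs on n vertices with this degree multiset are isomorphic. (Type A3 of the paper's Theorem 1, corresponding to the polytope degree sequence p−1, (x+3)^((p−5)/(x−1)), 4^((p−5)(x−2)/(x−1)+2), 3^2 with p = n+1 ≥ 6.) -/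
section A3proof

lemma a3_val_sub {n : ℕ} (hn : 0 < n) {a b : ℕ} (ha : a < n) (hb : b < n) :
    ((b : ZMod n) - (a : ZMod n)).val = if a ≤ b then b - a else b + n - a := by
  have : NeZero n := ⟨by omega⟩
  split_ifs with h
  · rw [← Nat.cast_sub h, ZMod.val_natCast, Nat.mod_eq_of_lt (by omega)]
  · have : ((b : ZMod n) - (a : ZMod n)) = ((b + n - a : ℕ) : ZMod n) := by
      rw [Nat.cast_sub (by omega)]; simp
    rw [this, ZMod.val_natCast, Nat.mod_eq_of_lt (by omega)]

lemma a3_cast_eq {n : ℕ} {a b : ℕ} (ha : a < n) (hb : b < n) :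
    ((a : ZMod n) = (b : ZMod n)) ↔ a = b := by
  rw [ZMod.natCast_eq_natCast_iff', Nat.mod_eq_of_lt ha, Nat.mod_eq_of_lt hb]

lemma a3_cast_succ {n : ℕ} {a b : ℕ} (ha : a < n) (hb : b < n) :
    ((b : ZMod n) = (a : ZMod n) + 1) ↔ (b = a + 1 ∨ (a + 1 = n ∧ b = 0)) := by
  have : (a : ZMod n) + 1 = ((a + 1 : ℕ) : ZMod n) := by push_cast; rfl
  rw [this, ZMod.natCast_eq_natCast_iff', Nat.mod_eq_of_lt hb]
  by_cases h : a + 1 = n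
  · rw [h, Nat.mod_self]; omega
  · rw [Nat.mod_eq_of_lt (by omega)]; omega

lemma a3_cyc {n : ℕ} (s : ZMod n) {a b : ℕ} (hab : a < b) (hb : b < n) :
    IsCycleEdge n s(s + a, s + b) ↔ (b = a + 1 ∨ (a = 0 ∧ b + 1 = n)) := by
  constructor
  · rintro ⟨i, hi⟩
    rw [Sym2.eq_iff] at hi
    rcases hi with ⟨h1, h2⟩ | ⟨h1, h2⟩
    · have : (b : ZMod n) = a + 1 := by
        apply add_left_cancel (a := s); rw [h2, ← h1]; ring
      rw [a3_cast_succ (by omega) hb] at this; omega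
    · have : (a : ZMod n) = b + 1 := by
        apply add_left_cancel (a := s); rw [h1, ← h2]; ring
      rw [a3_cast_succ hb (by omega)] at this; omega
  · rintro (h | ⟨h1, h2⟩)
    · exact ⟨s + a, by subst h; push_cast; rw [add_assoc]⟩
    · refine ⟨s + b, ?_⟩
      have : (a : ZMod n) = b + 1 := by
        rw [a3_cast_succ hb (by omega)]; omega
      rw [this, Sym2.eq_swap, add_assoc]

lemma a3_between {n : ℕ} (hn : 0 < n) (s : ZMod n) {a b v : ℕ} (ha : a < n) (hb : b < n)
    (hv : v < n) : Between n (s + a) (s + b) (s + v) ↔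
      ((a < v ∧ v < b) ∨ (b < a ∧ a < v) ∨ (v < b ∧ b < a)) := by
  unfold Between
  rw [add_sub_add_left_eq_sub, add_sub_add_left_eq_sub, a3_val_sub hn ha hv, a3_val_sub hn ha hb]
  split_ifs <;> omega

lemma a3_op_nc {n : ℕ} {G : SimpleGraph (ZMod n)} (hG : IsOuterplane n G) (s : ZMod n)
    {a b c d : ℕ} (h1 : a < c) (h2 : c < b) (h3 : b < d) (h4 : d < n)
    (h5 : G.Adj (s + a) (s + b)) (h6 : G.Adj (s + c) (s + d)) : False := by
  obtain ⟨S, ⟨-, hS⟩, hE⟩ := hG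
  rw [← SimpleGraph.mem_edgeSet, hE] at h5 h6
  have hn : 0 < n := by omega
  have e1 : s(s + (a : ZMod n), s + b) ∈ S := by
    rcases h5 with h | h
    · have := (a3_cyc s (by omega) (by omega)).1 h; omega
    · exact h
  have e2 : s(s + (c : ZMod n), s + d) ∈ S := by
    rcases h6 with h | h
    · have := (a3_cyc s (by omega) (by omega)).1 h; omega
    · exact h
  refine hS _ e1 _ e2 ?_ ?_
  · intro h
    rw [Sym2.eq_iff] at h
    simp only [add_right_inj] at h
    rw [a3_cast_eq (by omega) (by omega), a3_cast_eq (by omega) (by omega),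
      a3_cast_eq (by omega) (by omega), a3_cast_eq (by omega) (by omega)] at h
    omega
  · intro a' b' c' d' h h'
    rw [Sym2.eq_iff] at h h'
    unfold Xor' Xor
    rcases h with ⟨rfl, rfl⟩ | ⟨rfl, rfl⟩ <;> rcases h' with ⟨rfl, rfl⟩ | ⟨rfl, rfl⟩ <;>
    rw [a3_between hn s (by omega) (by omega) (by omega),
      a3_between hn s (by omega) (by omega) (by omega)] <;> omega

lemma a3_op_cyc {n : ℕ} {G : SimpleGraph (ZMod n)} (hG : IsOuterplane n G) (v : ZMod n) :
    G.Adj v (v + 1) := by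
  obtain ⟨S, -, hE⟩ := hG
  rw [← SimpleGraph.mem_edgeSet, hE]
  exact Or.inl ⟨v, rfl⟩

/-- linear triangulation -/
inductive A3Tri (A : ℕ → ℕ → Prop) : ℕ → ℕ → Prop
  | base (i : ℕ) : A i (i + 1) → A3Tri A i (i + 1)
  | step (i k j : ℕ) : i < k → k < j → A i j → A3Tri A i k → A3Tri A k j → A3Tri A i j

open Classical in
/-- number of edges in an interval -/
noncomputable def a3F (A : ℕ → ℕ → Prop) (n i j : ℕ) : ℕ :=
  ((Finset.range n ×ˢ Finset.range n).filter
    (fun p => i ≤ p.1 ∧ p.1 < p.2 ∧ p.2 ≤ j ∧ A p.1 p.2)).card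

open Classical in
lemma a3F_split (A : ℕ → ℕ → Prop) (n i k j : ℕ)
    (h : ∀ a b, i ≤ a → a < b → b ≤ j → A a b → b ≤ k ∨ k ≤ a ∨ (a = i ∧ b = j)) :
    a3F A n i j ≤ a3F A n i k + a3F A n k j + (if A i j then 1 else 0) := by
  unfold a3F
  have : ((Finset.range n ×ˢ Finset.range n).filter
    (fun p => i ≤ p.1 ∧ p.1 < p.2 ∧ p.2 ≤ j ∧ A p.1 p.2)) ⊆
    (((Finset.range n ×ˢ Finset.range n).filter
    (fun p => i ≤ p.1 ∧ p.1 < p.2 ∧ p.2 ≤ k ∧ A p.1 p.2)) ∪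
    ((Finset.range n ×ˢ Finset.range n).filter
    (fun p => k ≤ p.1 ∧ p.1 < p.2 ∧ p.2 ≤ j ∧ A p.1 p.2))) ∪
    (if A i j then {(i, j)} else ∅) := by
    rintro ⟨a, b⟩ hp
    simp only [Finset.mem_filter, Finset.mem_union, Finset.mem_product, Finset.mem_range] at hp ⊢
    obtain ⟨hp0, h1, h2, h3, h4⟩ := hp
    rcases h a b h1 h2 h3 h4 with h5 | h5 | ⟨h5, h6⟩
    · exact Or.inl (Or.inl ⟨hp0, h1, h2, h5, h4⟩)
    · exact Or.inl (Or.inr ⟨hp0, h5, h2, h3, h4⟩)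
    · right; subst h5 h6; simp [h4]
  refine (Finset.card_le_card this).trans ((Finset.card_union_le _ _).trans ?_)
  refine Nat.add_le_add (Finset.card_union_le _ _) ?_
  split_ifs <;> simp

open Classical in
lemma a3_tight (A : ℕ → ℕ → Prop) (n : ℕ)
    (hnc : ∀ a c b d, a < c → c < b → b < d → d < n → A a b → A c d → False)
    (hs : ∀ i, i + 1 < n → A i (i + 1)) :
    ∀ d i j, j = i + d → 1 ≤ d → j < n →
      a3F A n i j + 1 ≤ 2 * d ∧ (a3F A n i j + 1 = 2 * d → A3Tri A i j) := by
  intro d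
  induction d using Nat.strong_induction_on with
  | _ d ih =>
  intro i j hj hd hjn
  rcases Nat.lt_or_ge 1 d with h1 | h1
  · let Q : ℕ → Prop := fun m => i < m ∧ m < j ∧ A i m
    have hQ : Q (i + 1) := ⟨by omega, by omega, hs i (by omega)⟩
    let k := Nat.findGreatest Q j
    have hk : Q k := Nat.findGreatest_spec (P := Q) (by omega : i + 1 ≤ j) hQ
    have hk' : ∀ m, Q m → m ≤ k := fun m hm => Nat.le_findGreatest (by have := hm.2.1; omega) hm
    obtain ⟨hk1, hk2, hk3⟩ := hk
    have hsp := a3F_split A n i k j (by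
      intro a b ha hab hb hA
      by_contra hcon
      push Not at hcon
      obtain ⟨c1, c2, c3⟩ := hcon
      rcases Nat.lt_or_ge i a with h | h
      · exact hnc i a k b h c2 c1 (by omega) hk3 hA
      · have : a = i := by omega
        subst this
        have := hk' b ⟨by omega, by have := c3 rfl; omega, hA⟩
        omega)
    obtain ⟨b1, t1⟩ := ih (k - i) (by omega) i k (by omega) (by omega) (by omega)
    obtain ⟨b2, t2⟩ := ih (j - k) (by omega) k j (by omega) (by omega) (by omega)
    by_cases hA : A i j
    · rw [if_pos hA] at hsp
      refine ⟨by omega, fun he => ?_⟩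
      exact A3Tri.step i k j hk1 hk2 hA (t1 (by omega)) (t2 (by omega))
    · rw [if_neg hA] at hsp
      refine ⟨by omega, fun he => by omega⟩
  · have : d = 1 := by omega
    subst this; subst hj
    refine ⟨?_, fun _ => A3Tri.base i (hs i hjn)⟩
    have : a3F A n i (i + 1) ≤ 1 := by
      unfold a3F
      rw [Finset.card_le_one]
      rintro ⟨a, b⟩ ha ⟨c, e⟩ hc
      simp only [Finset.mem_filter] at ha hc
      ext <;> simp <;> omega
    omega

lemma A3Tri.adj {A : ℕ → ℕ → Prop} {i j : ℕ} (h : A3Tri A i j) : A i j := by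
  cases h <;> assumption

lemma A3Tri.lt {A : ℕ → ℕ → Prop} {i j : ℕ} (h : A3Tri A i j) : i < j := by
  cases h <;> omega

lemma A3Tri.sub {A : ℕ → ℕ → Prop} {n i j : ℕ}
    (hnc : ∀ a c b d, a < c → c < b → b < d → d < n → A a b → A c d → False)
    (h : A3Tri A i j) (hj : j < n) : ∀ a b, i ≤ a → a < b → b ≤ j → A a b → A3Tri A a b := by
  induction h with
  | base i h =>
    intro a b h1 h2 h3 h4
    have : a = i := by omega
    have : b = i + 1 := by omega
    subst a b; exact A3Tri.base i h
  | step i k j hik hkj hA t1 t2 ih1 ih2 =>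
    intro a b h1 h2 h3 h4
    by_cases hb : b ≤ k
    · exact ih1 (by omega) a b h1 h2 hb h4
    by_cases ha : k ≤ a
    · exact ih2 hj a b ha h2 h3 h4
    by_cases ha' : i < a
    · exact (hnc i a k b ha' (by omega) (by omega) (by omega) t1.adj h4).elim
    have : a = i := by omega
    subst this
    by_cases hb' : b < j
    · exact (hnc a k b j hik (by omega) hb' hj h4 t2.adj).elim
    have : b = j := by omega
    subst this
    exact A3Tri.step _ k _ hik hkj hA t1 t2

lemma A3Tri.ear {A : ℕ → ℕ → Prop} {n i j : ℕ} (hsym : ∀ a b, A a b → A b a)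
    (hirr : ∀ a, ¬ A a a)
    (hnc : ∀ a c b d, a < c → c < b → b < d → d < n → A a b → A c d → False)
    (h : A3Tri A i j) (hj : j < n) (hij : i + 2 ≤ j) :
    ∃ v, i < v ∧ v < j ∧ ∀ u, u < n → A v u → u + 1 = v ∨ u = v + 1 := by
  induction h with
  | base i h => omega
  | step i k j hik hkj hA t1 t2 ih1 ih2 =>
    by_cases h1 : i + 2 ≤ k
    · obtain ⟨v, h⟩ := ih1 (by omega) h1
      exact ⟨v, h.1, by omega, h.2.2⟩
    by_cases h2 : k + 2 ≤ j
    · obtain ⟨v, h⟩ := ih2 hj h2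
      exact ⟨v, by omega, h.2⟩
    refine ⟨k, hik, hkj, fun u hu hku => ?_⟩
    by_cases h3 : u < i
    · exact (hnc u i k j h3 hik hkj hj (hsym _ _ hku) hA).elim
    by_cases h4 : j < u
    · exact (hnc i k j u hik hkj h4 hu hA hku).elim
    by_cases h5 : u = k
    · subst h5; exact (hirr _ hku).elim
    omega

open Classical in
/-- degree on representatives -/
noncomputable def a3deg (A : ℕ → ℕ → Prop) (n v : ℕ) : ℕ :=
  ((Finset.range n).filter (A v)).card

/-- normal form -/
structure A3Norm (n x : ℕ) (A P : ℕ → ℕ → Prop) : Prop where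
  deg : ∀ v, v < n → a3deg A n v = 2 ∨ a3deg A n v = 3 ∨ a3deg A n v = x + 2
  symm : ∀ a b, A a b → A b a
  irr : ∀ a, ¬ A a a
  adj : ∀ a b, a < b → b < n → (A a b ↔ (b = a + 1 ∨ (a = 0 ∧ b + 1 = n) ∨ P a b))
  len : ∀ a b, P a b → a + 2 ≤ b ∧ b + 2 ≤ n
  top : P 0 (n - 2)
  nest : ∀ a b c d, P a b → P c d → (a ≤ c ∧ d ≤ b) ∨ (c ≤ a ∧ b ≤ d)
  step : ∀ a b, P a b → a + 3 ≤ b → P (a + 1) b ∨ P a (b - 1)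

lemma a3_key0 {n x : ℕ} {A P A' P' : ℕ → ℕ → Prop} (N : A3Norm n x A P)
    (N' : A3Norm n x A' P') {c u : ℕ} (hc : c < n) (hu : u < n)
    (hsub : ∀ v, v < n → A' c v → A c v) (h1 : A c u) (h2 : ¬ A' c u)
    (s : Finset ℕ) (hs : s.card = 4) (hs' : ∀ v ∈ s, v < n ∧ A' c v) : False := by
  classical
  have k1 : a3deg A' n c < a3deg A n c := by
    unfold a3deg
    apply Finset.card_lt_card
    refine Finset.ssubset_iff_subset_ne.2 ⟨?_, ?_⟩
    · intro v hv
      simp only [Finset.mem_filter, Finset.mem_range] at hv ⊢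
      exact ⟨hv.1, hsub v hv.1 hv.2⟩
    · intro h
      have : u ∈ (Finset.range n).filter (A c) := by simp [hu, h1]
      rw [← h] at this
      simp [h2] at this
  have k2 : 4 ≤ a3deg A' n c := by
    unfold a3deg
    rw [← hs]
    apply Finset.card_le_card
    intro v hv
    simpa using hs' v hv
  have := N.deg c hc
  have := N'.deg c hc
  omega

lemma A3Norm.adj' {n x : ℕ} {A P : ℕ → ℕ → Prop} (N : A3Norm n x A P) {a b : ℕ} (ha : a < n)
    (hb : b < n) : A a b ↔ (b = a + 1 ∨ a = b + 1 ∨ (a = 0 ∧ b + 1 = n ∧ 1 < n)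
      ∨ (b = 0 ∧ a + 1 = n ∧ 1 < n) ∨ P a b ∨ P b a) := by
  rcases Nat.lt_trichotomy a b with h | h | h
  · rw [N.adj a b h hb]
    have : ¬ P b a := fun h => by have := N.len _ _ h; omega
    simp only [this]; constructor
    · rintro (h | h | h) <;> first | omega | exact h.elim | simp [h]
    · rintro (h | h | h | h | h | h) <;> first | omega | exact h.elim | simp [h]
  · subst h
    have : ¬ P a a := fun h => by have := N.len _ _ h; omega
    simp only [N.irr, this]
    constructor
    · exact fun h => h.elim
    · rintro (h | h | h | h | h | h) <;> first | omega | exact h.elim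
  · have e : A a b ↔ A b a := ⟨N.symm _ _, N.symm _ _⟩
    rw [e, N.adj b a h ha]
    have : ¬ P a b := fun h => by have := N.len _ _ h; omega
    simp only [this]; constructor
    · rintro (h | h | h) <;> first | omega | exact h.elim | simp [h]
    · rintro (h | h | h | h | h | h) <;> first | omega | exact h.elim | simp [h]

lemma a3_key1 {n x : ℕ} {A P A' P' : ℕ → ℕ → Prop} (N : A3Norm n x A P)
    (N' : A3Norm n x A' P') {i j : ℕ} (hij : i + 4 ≤ j)
    (hag : ∀ a b, a + j ≤ b + (i + 1) → P' a b → P a b)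
    (h0 : P' i j) (h1 : P' (i + 1) j) (h2 : P' (i + 1) (j - 1)) (h3 : P (i + 2) j) : False := by
  have hl := N'.len _ _ h0
  refine a3_key0 N N' (c := j) (u := i + 2) (by omega) (by omega) ?_ ?_ ?_
    {j - 1, j + 1, i, i + 1} ?_ ?_
  · intro v hv h
    rw [N'.adj' (by omega) hv] at h
    rw [N.adj' (by omega) hv]
    rcases h with h | h | h | h | h | h
    · simp [h]
    · simp [h]
    · omega
    · omega
    · have := N'.nest _ _ _ _ h h0
      have := N'.len _ _ h
      omega
    · have := N'.nest _ _ _ _ h h2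
      have := hag v j (by omega) h
      simp [this]
  · rw [N.adj' (by omega) (by omega)]; simp [h3]
  · rw [N'.adj' (by omega) (by omega)]
    rintro (h | h | h | h | h | h)
    · omega
    · omega
    · omega
    · omega
    · have := N'.len _ _ h
      omega
    · have := N'.nest _ _ _ _ h h2
      omega
  · rw [Finset.card_insert_of_notMem, Finset.card_insert_of_notMem,
      Finset.card_insert_of_notMem, Finset.card_singleton] <;> simp <;> omega
  · intro v hv
    simp only [Finset.mem_insert, Finset.mem_singleton] at hv
    refine ⟨by omega, ?_⟩
    rw [N'.adj' (by omega) (by omega)]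
    rcases hv with rfl | rfl | rfl | rfl
    · omega
    · omega
    · simp [h0]
    · simp [h1]

lemma a3_key2 {n x : ℕ} {A P A' P' : ℕ → ℕ → Prop} (N : A3Norm n x A P)
    (N' : A3Norm n x A' P') {i j : ℕ} (hij : i + 3 ≤ j)
    (hag : ∀ a b, a + j ≤ b + i → P' a b → P a b)
    (h0 : P' i (j + 1)) (h1 : P' i j) (h2 : P' (i + 1) j) (h3 : P i (j - 1)) : False := by
  have hl := N'.len _ _ h0
  refine a3_key0 N N' (c := i) (u := j - 1) (by omega) (by omega) ?_ ?_ ?_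
    {(if i = 0 then n - 1 else i - 1), i + 1, j, j + 1} ?_ ?_
  · intro v hv h
    rw [N'.adj' (by omega) hv] at h
    rw [N.adj' (by omega) hv]
    rcases h with h | h | h | h | h | h
    · simp [h]
    · simp [h]
    · simp [h]
    · omega
    · have := N'.nest _ _ _ _ h h2
      have := hag i v (by omega) h
      simp [this]
    · have := N'.nest _ _ _ _ h h0
      have := N'.len _ _ h
      omega
  · rw [N.adj' (by omega) (by omega)]; simp [h3]
  · rw [N'.adj' (by omega) (by omega)]
    rintro (h | h | h | h | h | h)
    · omega
    · omega
    · omega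
    · omega
    · have := N'.nest _ _ _ _ h h2
      omega
    · have := N'.len _ _ h
      omega
  · rw [Finset.card_insert_of_notMem, Finset.card_insert_of_notMem,
      Finset.card_insert_of_notMem, Finset.card_singleton] <;> simp <;> (try split_ifs) <;> omega
  · intro v hv
    simp only [Finset.mem_insert, Finset.mem_singleton] at hv
    refine ⟨by split_ifs at hv <;> omega, ?_⟩
    rw [N'.adj' (by omega) (by split_ifs at hv <;> omega)]
    rcases hv with rfl | rfl | rfl | rfl
    · split_ifs <;> omega
    · omega
    · simp [h1]
    · simp [h0]

lemma A3Norm.lenEx {n x : ℕ} {A P : ℕ → ℕ → Prop} (N : A3Norm n x A P) :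
    ∀ t, t + 4 ≤ n → ∃ i, P i (i + (n - 2 - t)) := by
  intro t
  induction t with
  | zero => intro _; exact ⟨0, by simpa using N.top⟩
  | succ t ih =>
    intro ht
    obtain ⟨i, hi⟩ := ih (by omega)
    rcases N.step _ _ hi (by omega) with h | h
    · refine ⟨i + 1, ?_⟩
      convert h using 1; omega
    · refine ⟨i, ?_⟩
      convert h using 1; omega

lemma a3_uniq {n x : ℕ} {A P A' P' : ℕ → ℕ → Prop} (N : A3Norm n x A P)
    (N' : A3Norm n x A' P') (hP : P 1 (n - 2)) (hP' : P' 1 (n - 2)) :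
    ∀ t, t + 4 ≤ n → ∀ a b, a + (n - 2 - t) ≤ b → (P a b ↔ P' a b) := by
  intro t
  induction t with
  | zero =>
    intro _ a b hab
    constructor
    · intro h
      have := N.len _ _ h
      have : a = 0 := by omega
      have : b = n - 2 := by omega
      subst a b; exact N'.top
    · intro h
      have := N'.len _ _ h
      have : a = 0 := by omega
      have : b = n - 2 := by omega
      subst a b; exact N.top
  | succ t ih =>
    intro ht
    replace ih := ih (by omega)
    obtain ⟨i, hi⟩ := N.lenEx t (by omega)
    obtain ⟨j, hj⟩ : ∃ j, j = i + (n - 2 - t) := ⟨_, rfl⟩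
    rw [← hj] at hi
    have hi' : P' i j := (ih _ _ (by omega)).1 hi
    have key : (P (i + 1) j ∧ P' (i + 1) j) ∨ (P i (j - 1) ∧ P' i (j - 1)) := by
      have hl := N.len _ _ hi
      rcases Nat.eq_zero_or_pos t with h0 | h0
      · have : i = 0 := by omega
        have : j = n - 2 := by omega
        subst i j
        exact Or.inl ⟨hP, hP'⟩
      · obtain ⟨i0, hi0⟩ := N.lenEx (t - 1) (by omega)
        have hi0' := (ih _ _ (by omega)).1 hi0
        have hne := N.nest _ _ _ _ hi hi0
        rcases N.step _ _ hi (by omega) with h1 | h1 <;>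
        rcases N'.step _ _ hi' (by omega) with h2 | h2
        · exact Or.inl ⟨h1, h2⟩
        · exfalso
          have : i0 = i ∨ i0 + 1 = i := by omega
          rcases this with h | h
          · subst h
            have e : i0 + (n - 2 - (t - 1)) = j + 1 := by omega
            rw [e] at hi0 hi0'
            exact a3_key2 N' N (by omega) (fun a b hab h => (ih a b (by omega)).1 h)
              hi0 hi h1 h2
          · subst h
            have e : i0 + (n - 2 - (t - 1)) = j := by omega
            rw [e] at hi0 hi0'
            exact a3_key1 N N' (by omega) (fun a b hab h => (ih a b (by omega)).2 h)
              hi0' hi' h2 h1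
        · exfalso
          have : i0 = i ∨ i0 + 1 = i := by omega
          rcases this with h | h
          · subst h
            have e : i0 + (n - 2 - (t - 1)) = j + 1 := by omega
            rw [e] at hi0 hi0'
            exact a3_key2 N N' (by omega) (fun a b hab h => (ih a b (by omega)).2 h)
              hi0' hi' h2 h1
          · subst h
            have e : i0 + (n - 2 - (t - 1)) = j := by omega
            rw [e] at hi0 hi0'
            exact a3_key1 N' N (by omega) (fun a b hab h => (ih a b (by omega)).1 h)
              hi0 hi h1 h2
        · exact Or.inr ⟨h1, h2⟩
    intro a b hab
    by_cases hlt : a + (n - 2 - t) ≤ b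
    · exact ih a b hlt
    rcases key with ⟨k1, k2⟩ | ⟨k1, k2⟩
    · constructor
      · intro h
        have := N.nest _ _ _ _ h k1
        have : a = i + 1 := by omega
        have : b = j := by omega
        subst a b; exact k2
      · intro h
        have := N'.nest _ _ _ _ h k2
        have : a = i + 1 := by omega
        have : b = j := by omega
        subst a b; exact k1
    · constructor
      · intro h
        have := N.nest _ _ _ _ h k1
        have : a = i := by omega
        have : b = j - 1 := by omega
        subst a b; exact k2
      · intro h
        have := N'.nest _ _ _ _ h k2
        have : a = i := by omega
        have : b = j - 1 := by omega
        subst a b; exact k1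

lemma a3_uniq' {n x : ℕ} (hn : 5 ≤ n) {A P A' P' : ℕ → ℕ → Prop} (N : A3Norm n x A P)
    (N' : A3Norm n x A' P') (hP : P 1 (n - 2)) (hP' : P' 1 (n - 2)) {a b : ℕ} (ha : a < n)
    (hb : b < n) : A a b ↔ A' a b := by
  have h : ∀ a b, P a b ↔ P' a b := by
    intro a b
    by_cases h : a + 2 ≤ b
    · exact a3_uniq N N' hP hP' (n - 4) (by omega) a b (by omega)
    · constructor
      · intro h'; have := N.len _ _ h'; omega
      · intro h'; have := N'.len _ _ h'; omega
  rw [N.adj' ha hb, N'.adj' ha hb, h, h]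

lemma A3Tri.apex {A : ℕ → ℕ → Prop} {i j : ℕ} (h : A3Tri A i j) (hij : i + 2 ≤ j) :
    ∃ k, i < k ∧ k < j ∧ A i k ∧ A k j := by
  induction h with
  | base i h => omega
  | step i k j h1 h2 h3 h4 h5 ih1 ih2 => exact ⟨k, h1, h2, h4.adj, h5.adj⟩

open Classical in
lemma a3_deg_eq {n : ℕ} [NeZero n] (G : SimpleGraph (ZMod n)) (s : ZMod n) (v : ℕ) :
    G.degree (s + (v : ZMod n)) = a3deg (fun a b => G.Adj (s + a) (s + b)) n v := by
  unfold a3deg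
  rw [← SimpleGraph.card_neighborFinset_eq_degree]
  symm
  apply Finset.card_bij (fun (u : ℕ) _ => s + (u : ZMod n))
  · intro u hu
    simpa using (Finset.mem_filter.1 hu).2
  · intro u hu w hw h
    simp only [Finset.mem_filter, Finset.mem_range] at hu hw
    exact (a3_cast_eq hu.1 hw.1).1 (add_left_cancel h)
  · intro u hu
    refine ⟨(u - s).val, ?_, by simp⟩
    simp only [Finset.mem_filter, Finset.mem_range]
    refine ⟨ZMod.val_lt _, ?_⟩
    simpa using hu

open Classical in
/-- degree facts -/
structure A3Facts (n x : ℕ) [NeZero n] (G : SimpleGraph (ZMod n)) : Prop where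
  deg : ∀ v, G.degree v = 2 ∨ G.degree v = 3 ∨ G.degree v = x + 2
  two : (Finset.univ.filter (fun v => G.degree v = 2)).card = 2
  sum : ∑ v, G.degree v + 6 = 4 * n

/-- the multiset -/
def a3M (k x : ℕ) : Multiset ℕ := Multiset.replicate k (x + 2) +
        Multiset.replicate (k * (x - 2) + 2) 3 + Multiset.replicate 2 2

lemma a3_facts {n x k : ℕ} [NeZero n] (hx : 2 ≤ x) (hk : n = k * (x - 1) + 4)
    (G : SimpleGraph (ZMod n)) (h : degreeMultiset n G = a3M k x) : A3Facts n x G := by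
  classical
  have h0 : n ≠ 0 := NeZero.ne n
  have h' : Finset.univ.val.map (fun v => G.degree v) = a3M k x := by
    rw [← h]; unfold degreeMultiset; rw [dif_neg h0]; unfold degMultiset; congr!
  refine ⟨?_, ?_, ?_⟩
  · intro v
    have : G.degree v ∈ a3M k x := by
      rw [← h']; exact Multiset.mem_map_of_mem _ (Finset.mem_univ_val v)
    simp only [a3M, Multiset.mem_add, Multiset.mem_replicate] at this
    convert (by omega : G.degree v = 2 ∨ G.degree v = 3 ∨ G.degree v = x + 2)
  · have := congrArg (Multiset.count 2) h'
    rw [Multiset.count_map] at this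
    have e : Multiset.count 2 (a3M k x) = 2 := by
      simp only [a3M, Multiset.count_add, Multiset.count_replicate]
      rw [if_neg (by omega), if_neg (by omega)]; simp
    rw [e] at this
    rw [Finset.card_def, Finset.filter_val]
    convert this using 3
    exact eq_comm
  · have := congrArg Multiset.sum h'
    have e : (a3M k x).sum + 6 = 4 * n := by
      simp only [a3M, Multiset.sum_add, Multiset.sum_replicate, smul_eq_mul]
      obtain ⟨y, rfl⟩ : ∃ y, x = y + 2 := ⟨x - 2, by omega⟩
      rw [hk]
      simp only [Nat.add_sub_cancel, show y + 2 - 1 = y + 1 from rfl]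
      ring
    rw [← this] at e
    convert e
    simp only [Finset.sum]

lemma a3_edges {n : ℕ} [NeZero n] (G : SimpleGraph (ZMod n)) (s : ZMod n)
    (h : by classical exact ∑ v, G.degree v + 6 = 4 * n) :
    2 * n ≤ a3F (fun a b => G.Adj (s + a) (s + b)) n 0 (n - 1) + 3 := by
  classical
  have h1 := G.sum_degrees_eq_twice_card_edges
  have h2 : G.edgeFinset.card ≤ a3F (fun a b => G.Adj (s + a) (s + b)) n 0 (n - 1) := by
    unfold a3F
    apply Finset.card_le_card_of_surjOn
      (fun p : ℕ × ℕ => s(s + (p.1 : ZMod n), s + (p.2 : ZMod n)))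
    intro e he
    induction e using Sym2.ind with
    | _ u v =>
    have huv : G.Adj u v := by simpa using he
    have l1 := ZMod.val_lt (u - s)
    have l2 := ZMod.val_lt (v - s)
    rcases Nat.lt_trichotomy (u - s).val (v - s).val with hl | hl | hl
    · refine ⟨((u - s).val, (v - s).val), ?_, by simp⟩
      simp only [Finset.coe_filter, Finset.mem_product, Finset.mem_range, Set.mem_ofPred_eq]
      refine ⟨⟨l1, l2⟩, by omega, hl, by omega, by simpa using huv⟩
    · have := ZMod.val_injective n hl
      exact (huv.ne (sub_left_injective this)).elim
    · refine ⟨((v - s).val, (u - s).val), ?_, by simp [Sym2.eq_swap]⟩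
      simp only [Finset.coe_filter, Finset.mem_product, Finset.mem_range, Set.mem_ofPred_eq]
      refine ⟨⟨l2, l1⟩, by omega, hl, by omega, by simpa using huv.symm⟩
  have h3 : ∑ v, G.degree v + 6 = 4 * n := by convert h
  omega

lemma a3_norm {n x : ℕ} [NeZero n] (hn : 5 ≤ n) (G : SimpleGraph (ZMod n))
    (hG : IsOuterplane n G) (F : A3Facts n x G) (s : ZMod n)
    (hd : a3deg (fun a b => G.Adj (s + a) (s + b)) n (n - 1) = 2) :
    A3Norm n x (fun a b => G.Adj (s + a) (s + b))
      (fun a b => G.Adj (s + a) (s + b) ∧ a + 2 ≤ b ∧ b + 2 ≤ n) := by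
  classical
  have hdg := a3_deg_eq G s
  have hedge := a3_edges G s (by convert F.sum)
  have hnc : ∀ a c b d : ℕ, a < c → c < b → b < d → d < n → G.Adj (s + a) (s + b) →
      G.Adj (s + c) (s + d) → False := fun a c b d h1 h2 h3 h4 h5 h6 =>
    a3_op_nc hG s h1 h2 h3 h4 h5 h6
  have hcyc : ∀ i : ℕ, G.Adj (s + i) (s + (i + 1 : ℕ)) := by
    intro i; have := a3_op_cyc hG (s + i); push_cast; rwa [add_assoc] at this
  have hlast : G.Adj (s + (0 : ℕ)) (s + (n - 1 : ℕ)) := by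
    have := hcyc (n - 1)
    rw [show n - 1 + 1 = n by omega] at this
    simpa using this.symm
  have hsym : ∀ a b : ℕ, G.Adj (s + a) (s + b) → G.Adj (s + b) (s + a) := fun a b h => h.symm
  have hirr : ∀ a : ℕ, ¬ G.Adj (s + a) (s + a) := fun a => G.irrefl
  generalize hA : (fun a b : ℕ => G.Adj (s + a) (s + b)) = A at *
  have hA' : ∀ a b : ℕ, G.Adj (s + a) (s + b) = A a b := fun a b => by rw [← hA]
  simp only [hA'] at *
  have hdeg : ∀ v, a3deg A n v = 2 ∨ a3deg A n v = 3 ∨ a3deg A n v = x + 2 := by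
    intro v; rw [← hdg v]; convert F.deg (s + v)
  have h3 : ∀ v w, v < n - 1 → w < n - 1 → v ≠ w → a3deg A n v = 2 → a3deg A n w = 2 → False := by
    intro v w hv hw hvw h1 h2
    have : ({s + (v : ZMod n), s + (w : ZMod n), s + ((n - 1 : ℕ) : ZMod n)} : Finset (ZMod n)) ⊆
        Finset.univ.filter (fun v => G.degree v = 2) := by
      intro u hu
      simp only [Finset.mem_insert, Finset.mem_singleton] at hu
      simp only [Finset.mem_filter, Finset.mem_univ, true_and]
      rcases hu with rfl | rfl | rfl
      · rw [← h1, ← hdg]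
      · rw [← h2, ← hdg]
      · rw [← hd, ← hdg]
    have c := Finset.card_le_card this
    have c2 := F.two
    rw [Finset.card_insert_of_notMem, Finset.card_insert_of_notMem, Finset.card_singleton] at c
    · have : (Finset.univ.filter (fun v => G.degree v = 2)).card = 2 := by convert c2
      omega
    · simp only [Finset.mem_singleton, add_right_inj]
      rw [a3_cast_eq (by omega) (by omega)]; omega
    · simp only [Finset.mem_insert, Finset.mem_singleton, add_right_inj]
      rw [a3_cast_eq (by omega) (by omega), a3_cast_eq (by omega) (by omega)]; omega
  have htri : A3Tri A 0 (n - 1) := by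
    have := a3_tight A n hnc (fun i _ => hcyc i) (n - 1) 0 (n - 1) (by omega) (by omega) (by omega)
    exact this.2 (by omega)
  have hear : ∀ i j, j < n → i + 2 ≤ j → A i j → ∃ v, i < v ∧ v < j ∧ a3deg A n v = 2 := by
    intro i j hj hij h
    obtain ⟨v, h1, h2, h4⟩ := (htri.sub hnc (by omega) i j (by omega) (by omega) (by omega) h).ear
      hsym hirr hnc hj hij
    refine ⟨v, h1, h2, ?_⟩
    have : a3deg A n v ≤ 2 := by
      unfold a3deg
      refine (Finset.card_le_card (t := {v - 1, v + 1}) ?_).trans Finset.card_le_two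
      intro u hu
      simp only [Finset.mem_filter, Finset.mem_range] at hu
      have := h4 u hu.1 hu.2
      simp only [Finset.mem_insert, Finset.mem_singleton]; omega
    have := hdeg v
    omega
  have hear2 : ∀ i j k l, l + 1 < n → i + 2 ≤ j → j ≤ k → k + 2 ≤ l → A i j → A k l → False := by
    intro i j k l h1 h2 h4 h5 h6 h7
    obtain ⟨v, v1, v2, v3⟩ := hear i j (by omega) h2 h6
    obtain ⟨w, w1, w2, w3⟩ := hear k l (by omega) h5 h7
    exact h3 v w (by omega) (by omega) (by omega) v3 w3
  have hnl : ∀ u, u < n → A u (n - 1) → u = 0 ∨ u = n - 2 := by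
    intro u hu h
    have e : ({0, n - 2} : Finset ℕ) = (Finset.range n).filter (A (n - 1)) := by
      apply Finset.eq_of_subset_of_card_le
      · intro w hw
        simp only [Finset.mem_insert, Finset.mem_singleton] at hw
        simp only [Finset.mem_filter, Finset.mem_range]
        rcases hw with rfl | rfl
        · exact ⟨by omega, hsym _ _ hlast⟩
        · refine ⟨by omega, hsym _ _ ?_⟩
          have := hcyc (n - 2)
          rwa [show n - 2 + 1 = n - 1 by omega] at this
      · have : ((Finset.range n).filter (A (n - 1))).card = 2 := by
          rw [← hd]; unfold a3deg; congr!
        rw [this, Finset.card_pair (by omega)]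
    have : u ∈ (Finset.range n).filter (A (n - 1)) := by simp [hu, hsym _ _ h]
    rw [← e] at this
    simpa using this
  refine ⟨fun v _ => hdeg v, hsym, hirr, ?_, fun a b h => h.2, ?_, ?_, ?_⟩
  · intro a b hab hb
    constructor
    · intro h
      by_cases h1 : b = n - 1
      · subst h1; have := hnl a (by omega) h; omega
      · by_cases h2 : b = a + 1
        · exact Or.inl h2
        · exact Or.inr (Or.inr ⟨h, by omega, by omega⟩)
    · rintro (h | ⟨h1, h2⟩ | h)
      · subst h; exact hcyc a
      · subst h1; have : b = n - 1 := by omega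
        subst this; exact hlast
      · exact h.1
  · have hk : ∃ k, 0 < k ∧ k < n - 1 ∧ A 0 k ∧ A k (n - 1) := by
      exact htri.apex (by omega)
    obtain ⟨k, k1, k2, k3, k4⟩ := hk
    have : k = n - 2 := by have := hnl k (by omega) k4; omega
    subst this
    exact ⟨k3, by omega, by omega⟩
  · rintro a b c d ⟨h1, h2, h4⟩ ⟨h5, h6, h7⟩
    by_contra hcon
    by_cases q1 : b ≤ c
    · exact hear2 a b c d (by omega) h2 q1 h6 h1 h5
    by_cases q2 : d ≤ a
    · exact hear2 c d a b (by omega) h6 q2 h2 h5 h1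
    rcases Nat.lt_or_ge a c with q3 | q3
    · exact hnc a c b d q3 (by omega) (by omega) (by omega) h1 h5
    · exact hnc c a d b (by omega) (by omega) (by omega) (by omega) h5 h1
  · rintro a b ⟨h1, h2, h4⟩ h5
    have ht := htri.sub hnc (by omega) a b (by omega) (by omega) (by omega) h1
    obtain ⟨k, q1, q2, q4, q5⟩ := ht.apex (by omega)
    by_cases r1 : k = a + 1
    · subst r1; exact Or.inl ⟨q5, by omega, by omega⟩
    by_cases r2 : k = b - 1
    · subst r2; exact Or.inr ⟨q4, by omega, by omega⟩
    exact (hear2 a k k b (by omega) (by omega) le_rfl (by omega) q4 q5).elim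

/-- reflection -/
def a3rho (n v : ℕ) : ℕ := if v + 1 = n then v else n - 2 - v

lemma a3rho_lt {n v : ℕ} (hv : v < n) : a3rho n v < n := by
  unfold a3rho; split_ifs <;> omega

lemma a3rho_inv {n v : ℕ} (hv : v < n) : a3rho n (a3rho n v) = v := by
  unfold a3rho; split_ifs <;> omega

lemma A3Norm.refl {n x : ℕ} (hn : 5 ≤ n) {A P : ℕ → ℕ → Prop} (N : A3Norm n x A P) :
    A3Norm n x (fun a b => A (a3rho n a) (a3rho n b))
      (fun a b => a ≤ b ∧ b + 2 ≤ n ∧ P (n - 2 - b) (n - 2 - a)) := by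
  classical
  refine ⟨?_, fun a b h => N.symm _ _ h, fun a => N.irr _, ?_, ?_, ?_, ?_, ?_⟩
  · intro v hv
    have : a3deg (fun a b => A (a3rho n a) (a3rho n b)) n v = a3deg A n (a3rho n v) := by
      unfold a3deg
      apply Finset.card_bij (fun u _ => a3rho n u)
      · intro u hu
        simp only [Finset.mem_filter, Finset.mem_range] at hu ⊢
        exact ⟨a3rho_lt hu.1, hu.2⟩
      · intro u hu w hw h
        simp only [Finset.mem_filter, Finset.mem_range] at hu hw
        rw [← a3rho_inv hu.1, h, a3rho_inv hw.1]
      · intro u hu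
        simp only [Finset.mem_filter, Finset.mem_range] at hu
        refine ⟨a3rho n u, ?_, a3rho_inv hu.1⟩
        simp only [Finset.mem_filter, Finset.mem_range]
        refine ⟨a3rho_lt hu.1, ?_⟩
        rw [a3rho_inv hu.1]; exact hu.2
    rw [this]
    exact N.deg _ (a3rho_lt hv)
  · intro a b hab hb
    beta_reduce
    rw [N.adj' (a3rho_lt (by omega)) (a3rho_lt hb)]
    have ea : a3rho n a = n - 2 - a := by unfold a3rho; rw [if_neg (by omega)]
    rw [ea]
    by_cases h : b + 1 = n
    · have eb : a3rho n b = b := by unfold a3rho; rw [if_pos h]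
      rw [eb]
      constructor
      · rintro (q | q | q | q | q | q)
        · omega
        · omega
        · omega
        · omega
        · have := N.len _ _ q; omega
        · have := N.len _ _ q; omega
      · rintro (q | q | q) <;> omega
    · have eb : a3rho n b = n - 2 - b := by unfold a3rho; rw [if_neg h]
      rw [eb]
      constructor
      · rintro (q | q | q | q | q | q)
        · omega
        · omega
        · omega
        · omega
        · have := N.len _ _ q; omega
        · exact Or.inr (Or.inr ⟨by omega, by omega, q⟩)
      · rintro (q | q | q)
        · omega
        · omega
        · simp [q.2.2]
  · rintro a b ⟨h1, h2, h3⟩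
    have := N.len _ _ h3; omega
  · refine ⟨by omega, by omega, ?_⟩
    have := N.top
    simpa using this
  · rintro a b c d ⟨h1, h2, h3⟩ ⟨h4, h5, h6⟩
    have := N.nest _ _ _ _ h3 h6
    omega
  · rintro a b ⟨h1, h2, h3⟩ h4
    rcases N.step _ _ h3 (by omega) with h | h
    · right
      refine ⟨by omega, by omega, ?_⟩
      convert h using 1; omega
    · left
      refine ⟨by omega, by omega, ?_⟩
      convert h using 1; omega

lemma a3_exNorm {n x : ℕ} [NeZero n] (hn : 5 ≤ n) (G : SimpleGraph (ZMod n))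
    (hG : IsOuterplane n G) (F : A3Facts n x G) :
    ∃ (e : ZMod n ≃ ZMod n) (A P : ℕ → ℕ → Prop), A3Norm n x A P ∧ P 1 (n - 2) ∧
      ∀ a b : ℕ, a < n → b < n → (A a b ↔ G.Adj (e a) (e b)) := by
  classical
  obtain ⟨v0, hv0⟩ : ∃ v0, G.degree v0 = 2 := by
    have h2 := F.two
    have : (Finset.univ.filter (fun v => G.degree v = 2)).Nonempty := by
      rw [← Finset.card_pos]
      have : (Finset.univ.filter (fun v => G.degree v = 2)).card = 2 := by convert h2
      omega
    obtain ⟨v, hv⟩ := this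
    exact ⟨v, by simpa using hv⟩
  have hc : v0 + 1 + ((n - 1 : ℕ) : ZMod n) = v0 := by
    rw [Nat.cast_sub (by omega)]; simp
  have N := a3_norm hn G hG F (v0 + 1) (by
    rw [← a3_deg_eq, hc]; convert hv0)
  rcases N.step _ _ N.top (by omega) with h | h
  · exact ⟨Equiv.addLeft (v0 + 1), _, _, N, h, fun a b _ _ => by simp only [Equiv.coe_addLeft]⟩
  · refine ⟨Equiv.subLeft (v0 - 1), _, _, N.refl hn, ⟨by omega, by omega, ?_⟩, ?_⟩
    · convert h using 1 <;> simp <;> omega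
    · have key : ∀ a : ℕ, a < n → v0 + 1 + ((a3rho n a : ℕ) : ZMod n) = v0 - 1 - a := by
        intro a ha
        unfold a3rho
        split_ifs with h
        · have : (a : ZMod n) = -1 := by
            have : ((a + 1 : ℕ) : ZMod n) = 0 := by rw [h]; simp
            push_cast at this
            exact eq_neg_of_add_eq_zero_left this
          rw [this]; ring
        · rw [Nat.cast_sub (by omega), Nat.cast_sub (by omega)]
          simp; ring
      intro a b ha hb
      simp only [Equiv.subLeft_apply]
      rw [key a ha, key b hb]

lemma a3_unique {n x : ℕ} [NeZero n] (hn : 5 ≤ n) (G G' : SimpleGraph (ZMod n))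
    (hG : IsOuterplane n G) (F : A3Facts n x G) (hG' : IsOuterplane n G') (F' : A3Facts n x G') :
    Nonempty (G ≃g G') := by
  obtain ⟨e, A, P, N, hP, he⟩ := a3_exNorm hn G hG F
  obtain ⟨e', A', P', N', hP', he'⟩ := a3_exNorm hn G' hG' F'
  refine ⟨⟨e.symm.trans e', ?_⟩⟩
  intro u v
  have hu := ZMod.val_lt (e.symm u)
  have hv := ZMod.val_lt (e.symm v)
  have h1 := he _ _ hu hv
  have h2 := he' _ _ hu hv
  have h3 := a3_uniq' hn N N' hP hP' hu hv
  simp only [ZMod.natCast_zmod_val, Equiv.apply_symm_apply] at h1 h2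
  simp only [Equiv.trans_apply]
  rw [← h2, ← h3, h1]

/-- counter -/
def a3c (ε y : ℕ) : ℕ → ℕ
  | 0 => 0
  | t + 1 => a3c ε y t + if (t / y) % 2 = ε then 1 else 0

lemma a3c_succ (ε y t : ℕ) : a3c ε y (t + 1) = a3c ε y t + if (t / y) % 2 = ε then 1 else 0 := rfl

lemma a3c_mono (ε y : ℕ) : Monotone (a3c ε y) := by
  apply monotone_nat_of_le_succ
  intro t; rw [a3c_succ]; omega

lemma a3c_add (y t : ℕ) : a3c 0 y t + a3c 1 y t = t := by
  induction t with
  | zero => rfl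
  | succ t ih => rw [a3c_succ, a3c_succ]; split_ifs <;> omega

lemma a3c_surj (ε y m v : ℕ) (h : v ≤ a3c ε y m) : ∃ t, t ≤ m ∧ a3c ε y t = v := by
  induction m with
  | zero => exact ⟨0, le_rfl, by simp only [a3c] at *; omega⟩
  | succ m ih =>
    by_cases h' : v ≤ a3c ε y m
    · obtain ⟨t, h1, h2⟩ := ih h'; exact ⟨t, by omega, h2⟩
    · refine ⟨m + 1, le_rfl, ?_⟩
      rw [a3c_succ] at *; split_ifs at * <;> omega

lemma a3c_fib {ε y k : ℕ} (hε : ε < 2) (hy : 1 ≤ y) {m t0 w : ℕ} (hm : m = k * y) (ht0 : t0 ≤ m)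
    (hw : a3c ε y t0 = w) :
    ((Finset.range (m + 1)).filter (fun t => a3c ε y t = w)).card = 1 ∨
    ((Finset.range (m + 1)).filter (fun t => a3c ε y t = w)).card = y + 1 := by
  classical
  have hex : ∃ t, a3c ε y t = w := ⟨t0, hw⟩
  obtain ⟨t, ht⟩ : ∃ t, t = Nat.find hex := ⟨_, rfl⟩
  have htw : a3c ε y t = w := by rw [ht]; exact Nat.find_spec hex
  have htm : t ≤ m := by rw [ht]; exact (Nat.find_min' hex hw).trans ht0
  have hmin : ∀ u, a3c ε y u = w → t ≤ u := fun u hu => by rw [ht]; exact Nat.find_min' hex hu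
  have mono := a3c_mono ε y
  have fib : ∀ e, t ≤ e → e ≤ m → a3c ε y e = w → (e = m ∨ (e / y) % 2 = ε) →
      ((Finset.range (m + 1)).filter (fun t => a3c ε y t = w)).card = e + 1 - t := by
    intro e h1 h2 h3 h4
    rw [← Nat.card_Icc]
    congr 1
    ext u
    simp only [Finset.mem_filter, Finset.mem_range, Finset.mem_Icc]
    constructor
    · rintro ⟨h5, h6⟩
      refine ⟨hmin u h6, ?_⟩
      by_contra hc
      rcases h4 with h4 | h4
      · omega
      · have := mono (show e + 1 ≤ u by omega)
        rw [a3c_succ, if_pos h4] at this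
        omega
    · rintro ⟨h5, h6⟩
      refine ⟨by omega, ?_⟩
      have := mono h5
      have := mono h6
      omega
  by_cases hs : t = m ∨ (t / y) % 2 = ε
  · left
    rw [fib t le_rfl htm htw hs]; omega
  · right
    push Not at hs
    obtain ⟨hs1, hs2⟩ := hs
    have hdv : y ∣ t := by
      rcases Nat.eq_zero_or_pos t with h | h
      · rw [h]; exact dvd_zero _
      · obtain ⟨t', rfl⟩ : ∃ t', t = t' + 1 := ⟨t - 1, by omega⟩
        have h5 : (t' / y) % 2 = ε := by
          by_contra hc
          have := hmin t' (by rw [← htw, a3c_succ, if_neg hc]; rfl)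
          omega
        by_contra hc
        rw [Nat.succ_div, if_neg hc] at hs2
        exact hs2 h5
    obtain ⟨q, rfl⟩ := hdv
    have hqk : q < k := by
      by_contra hc
      have : k * y ≤ y * q := by rw [mul_comm]; exact Nat.mul_le_mul_left _ (by omega)
      omega
    have hle : y * q + y ≤ m := by
      rw [hm, mul_comm k, ← Nat.mul_succ]; exact Nat.mul_le_mul_left _ (by omega)
    have hq : (y * q) / y = q := Nat.mul_div_cancel_left _ (by omega)
    rw [hq] at hs2
    have hflat : ∀ o, o ≤ y → a3c ε y (y * q + o) = w := by
      intro o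
      induction o with
      | zero => intro _; exact htw
      | succ o ih =>
        intro ho
        have e1 : (y * q + o) / y = q := by
          rw [Nat.mul_add_div (by omega), Nat.div_eq_of_lt (by omega)]; rfl
        rw [← add_assoc, a3c_succ, e1, if_neg hs2, ih (by omega)]; rfl
    have e2 : (y * q + y) / y = q + 1 := by
      rw [← Nat.mul_succ, Nat.mul_div_cancel_left _ (by omega)]
    rw [fib (y * q + y) (by omega) hle (hflat y le_rfl) (by right; rw [e2]; omega)]
    omega

lemma a3_ofFacts {n x k : ℕ} [NeZero n] (hx : 2 ≤ x) (hk : n = k * (x - 1) + 4)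
    (G : SimpleGraph (ZMod n)) (F : A3Facts n x G) : degreeMultiset n G = a3M k x := by
  classical
  have h0 : n ≠ 0 := NeZero.ne n
  obtain ⟨s, hs⟩ : ∃ s, s = Finset.univ.val.map (fun v => G.degree v) := ⟨_, rfl⟩
  have h' : degreeMultiset n G = s := by
    rw [hs]; unfold degreeMultiset; rw [dif_neg h0]; unfold degMultiset; congr!
  rw [h']
  have hmem : ∀ z ∈ s, z = 2 ∨ z = 3 ∨ z = x + 2 := by
    intro z hz
    rw [hs, Multiset.mem_map] at hz
    obtain ⟨v, -, rfl⟩ := hz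
    convert F.deg v
  have h2 : s.count 2 = 2 := by
    rw [hs, Multiset.count_map]
    have := F.two
    rw [Finset.card_def, Finset.filter_val] at this
    convert this using 3
    exact eq_comm
  have hdec : s = Multiset.replicate (s.count (x + 2)) (x + 2) +
      Multiset.replicate (s.count 3) 3 + Multiset.replicate (s.count 2) 2 := by
    ext z
    simp only [Multiset.count_add, Multiset.count_replicate]
    by_cases hz : z ∈ s
    · rcases hmem z hz with rfl | rfl | rfl
      · rw [if_neg (by omega), if_neg (by omega), if_pos rfl]; omega
      · rw [if_neg (by omega), if_pos rfl, if_neg (by omega)]; omega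
      · rw [if_pos rfl, if_neg (by omega), if_neg (by omega)]; omega
    · have e := Multiset.count_eq_zero_of_notMem hz
      rw [e]
      split_ifs with q1 q2 q3 q4 q5 <;> subst_vars <;> omega
  have hcard : s.card = n := by
    rw [hs, Multiset.card_map]; simp
  have hsum : s.sum + 6 = 4 * n := by
    have := F.sum
    rw [← this, hs]
    simp only [Finset.sum]
  have c1 := congrArg Multiset.card hdec
  have c2 := congrArg Multiset.sum hdec
  simp only [Multiset.card_add, Multiset.card_replicate] at c1
  simp only [Multiset.sum_add, Multiset.sum_replicate, smul_eq_mul] at c2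
  rw [h2] at c1 c2 hdec
  obtain ⟨y, rfl⟩ : ∃ y, x = y + 2 := ⟨x - 2, by omega⟩
  obtain ⟨c, hc⟩ : ∃ c, c = s.count (y + 2 + 2) := ⟨_, rfl⟩
  obtain ⟨b, hb⟩ : ∃ b, b = s.count 3 := ⟨_, rfl⟩
  rw [← hc, ← hb] at hdec c1 c2
  simp only [show y + 2 - 1 = y + 1 from rfl] at hk
  have e1 : c * (y + 1) = k * (y + 1) := by
    have : c * (y + 2 + 2) = c * (y + 1) + 3 * c := by ring
    omega
  have e2 : c = k := Nat.eq_of_mul_eq_mul_right (by omega) e1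
  have e3 : b = k * y + 2 := by
    have : k * (y + 1) = k * y + k := by ring
    omega
  rw [hdec, e2, e3]
  rfl

/-- the chords -/
def a3S (n y m : ℕ) : Set (Sym2 (ZMod n)) :=
  {e | ∃ t, t ≤ m ∧ e = s((a3c 0 y t : ZMod n), ((n - 2 - a3c 1 y t : ℕ) : ZMod n))}

/-- the graph -/
def a3G (n y m : ℕ) : SimpleGraph (ZMod n) :=
  SimpleGraph.fromEdgeSet ({e | IsCycleEdge n e} ∪ a3S n y m)

lemma a3_cyc0 {n : ℕ} {a b : ℕ} (hab : a < b) (hb : b < n) :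
    IsCycleEdge n s((a : ZMod n), (b : ZMod n)) ↔ (b = a + 1 ∨ (a = 0 ∧ b + 1 = n)) := by
  have := a3_cyc (0 : ZMod n) hab hb
  simpa using this

lemma a3_between0 {n : ℕ} (hn : 0 < n) {a b v : ℕ} (ha : a < n) (hb : b < n)
    (hv : v < n) : Between n (a : ZMod n) b v ↔
      ((a < v ∧ v < b) ∨ (b < a ∧ a < v) ∨ (v < b ∧ b < a)) := by
  have := a3_between hn (0 : ZMod n) ha hb hv
  simpa using this

lemma a3G_op {n y m : ℕ} (hn : 5 ≤ n) (hm : m + 4 = n) : IsOuterplane n (a3G n y m) := by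
  have hadd := a3c_add y
  have hS : ∀ e ∈ a3S n y m, IsChord n e := by
    rintro e ⟨t, ht, rfl⟩
    have := hadd t
    refine ⟨?_, ?_⟩
    · rw [Sym2.mk_isDiag_iff, a3_cast_eq (by omega) (by omega)]; omega
    · rw [a3_cyc0 (by omega) (by omega)]; omega
  refine ⟨a3S n y m, ⟨hS, ?_⟩, ?_⟩
  · rintro e ⟨t, ht, rfl⟩ f ⟨u, hu, rfl⟩ - hcr
    have h1 := hadd t
    have h2 := hadd u
    rcases le_total t u with h | h
    · have m1 := a3c_mono 0 y h
      have m2 := a3c_mono 1 y h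
      have := hcr _ _ _ _ Sym2.eq_swap rfl
      unfold Xor' Xor at this
      rw [a3_between0 (by omega) (by omega) (by omega) (by omega),
        a3_between0 (by omega) (by omega) (by omega) (by omega)] at this
      omega
    · have m1 := a3c_mono 0 y h
      have m2 := a3c_mono 1 y h
      have := hcr _ _ _ _ rfl rfl
      unfold Xor' Xor at this
      rw [a3_between0 (by omega) (by omega) (by omega) (by omega),
        a3_between0 (by omega) (by omega) (by omega) (by omega)] at this
      omega
  · unfold a3G
    rw [SimpleGraph.edgeSet_fromEdgeSet]
    ext e
    constructor
    · exact fun h => h.1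
    · intro h
      refine ⟨h, ?_⟩
      rcases h with ⟨i, rfl⟩ | h
      · intro hd
        have hd' : i = i + 1 := by simpa using hd
        have : ((0 : ℕ) : ZMod n) = ((1 : ℕ) : ZMod n) := by
          have := add_left_cancel (a := i) (b := 0) (c := 1) (by simpa using hd')
          simpa using this
        rw [a3_cast_eq (by omega) (by omega)] at this
        omega
      · exact (hS e h).1

lemma a3G_adj {n y m : ℕ} (hn : 5 ≤ n) (hm : m + 4 = n) {a b : ℕ} (hab : a < b) (hb : b < n) :
    (a3G n y m).Adj a b ↔ (b = a + 1 ∨ (a = 0 ∧ b + 1 = n) ∨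
      ∃ t, t ≤ m ∧ a3c 0 y t = a ∧ n - 2 - a3c 1 y t = b) := by
  unfold a3G
  rw [SimpleGraph.fromEdgeSet_adj]
  have hne : (a : ZMod n) ≠ b := by rw [Ne, a3_cast_eq (by omega) hb]; omega
  have h1 : IsCycleEdge n s((a : ZMod n), (b : ZMod n)) ↔ (b = a + 1 ∨ (a = 0 ∧ b + 1 = n)) :=
    a3_cyc0 hab hb
  have h2 : s((a : ZMod n), (b : ZMod n)) ∈ a3S n y m ↔
      ∃ t, t ≤ m ∧ a3c 0 y t = a ∧ n - 2 - a3c 1 y t = b := by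
    constructor
    · rintro ⟨t, ht, h⟩
      have := a3c_add y t
      rw [Sym2.eq_iff, a3_cast_eq (by omega) (by omega), a3_cast_eq (by omega) (by omega),
        a3_cast_eq (by omega) (by omega), a3_cast_eq (by omega) (by omega)] at h
      exact ⟨t, ht, by omega, by omega⟩
    · rintro ⟨t, ht, h3, h4⟩
      exact ⟨t, ht, by rw [h3, h4]⟩
  rw [Set.mem_union, h2, ← or_assoc, ← h1]
  simp [hne]

open Classical in
lemma a3G_deg {n y m : ℕ} (hn : 5 ≤ n) (hm : m + 4 = n) {v : ℕ} (hv : v < n) :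
    a3deg (fun a b => (a3G n y m).Adj a b) n v = 2 +
      ((Finset.range (m + 1)).filter (fun t => a3c 0 y t = v)).card +
      ((Finset.range (m + 1)).filter (fun t => n - 2 - a3c 1 y t = v)).card := by
  have hadd := a3c_add y
  have e : (Finset.range n).filter (fun b : ℕ => (a3G n y m).Adj (v : ZMod n) b) =
      (({(if v = 0 then n - 1 else v - 1), (if v + 1 = n then 0 else v + 1)} : Finset ℕ) ∪
      ((Finset.range (m + 1)).filter (fun t => a3c 0 y t = v)).image
        (fun t => n - 2 - a3c 1 y t)) ∪
      ((Finset.range (m + 1)).filter (fun t => n - 2 - a3c 1 y t = v)).image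
        (fun t => a3c 0 y t) := by
    ext u
    simp only [Finset.mem_filter, Finset.mem_range, Finset.mem_union, Finset.mem_insert,
      Finset.mem_singleton, Finset.mem_image]
    constructor
    · rintro ⟨hu, h⟩
      rcases Nat.lt_trichotomy v u with hl | hl | hl
      · rw [a3G_adj hn hm hl hu] at h
        rcases h with h | h | ⟨t, h1, h2, h3⟩
        · left; left; split_ifs <;> omega
        · left; left; split_ifs <;> omega
        · exact Or.inl (Or.inr ⟨t, ⟨by omega, h2⟩, h3⟩)
      · subst hl; exact ((a3G n y m).irrefl h).elim
      · rw [SimpleGraph.adj_comm, a3G_adj hn hm hl hv] at h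
        rcases h with h | h | ⟨t, h1, h2, h3⟩
        · left; left; split_ifs <;> omega
        · left; left; split_ifs <;> omega
        · exact Or.inr ⟨t, ⟨by omega, h3⟩, h2⟩
    · rintro ((h | ⟨t, ⟨h1, h2⟩, h3⟩) | ⟨t, ⟨h1, h2⟩, h3⟩)
      · have hu : u < n := by split_ifs at h <;> omega
        refine ⟨hu, ?_⟩
        rcases Nat.lt_trichotomy v u with hl | hl | hl
        · rw [a3G_adj hn hm hl hu, ← or_assoc]; left; split_ifs at h <;> omega
        · split_ifs at h <;> omega
        · rw [SimpleGraph.adj_comm, a3G_adj hn hm hl hv, ← or_assoc]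
          left; split_ifs at h <;> omega
      · have := hadd t
        refine ⟨by omega, ?_⟩
        rw [a3G_adj hn hm (by omega) (by omega)]
        exact Or.inr (Or.inr ⟨t, by omega, h2, h3⟩)
      · have := hadd t
        refine ⟨by omega, ?_⟩
        rw [SimpleGraph.adj_comm, a3G_adj hn hm (by omega) (by omega)]
        exact Or.inr (Or.inr ⟨t, by omega, h3, h2⟩)
  unfold a3deg
  have e' := congrArg Finset.card e
  rw [Finset.card_union_of_disjoint, Finset.card_union_of_disjoint, Finset.card_pair,
    Finset.card_image_of_injOn, Finset.card_image_of_injOn] at e'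
  · convert e'
  · intro t ht u hu h
    simp only [Finset.coe_filter, Finset.mem_range, Set.mem_ofPred_eq] at ht hu
    have := hadd t
    have := hadd u
    simp only at h
    omega
  · intro t ht u hu h
    simp only [Finset.coe_filter, Finset.mem_range, Set.mem_ofPred_eq] at ht hu
    have := hadd t
    have := hadd u
    simp only at h
    omega
  · split_ifs <;> omega
  · rw [Finset.disjoint_left]
    intro u h1 h2
    simp only [Finset.mem_filter, Finset.mem_range, Finset.mem_insert,
      Finset.mem_singleton, Finset.mem_image] at h1 h2
    obtain ⟨t, ⟨h3, h4⟩, h5⟩ := h2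
    have := hadd t
    split_ifs at h1 <;> omega
  · rw [Finset.disjoint_left]
    intro u h1 h2
    simp only [Finset.mem_filter, Finset.mem_range, Finset.mem_insert, Finset.mem_union,
      Finset.mem_singleton, Finset.mem_image] at h1 h2
    obtain ⟨t, ⟨h3, h4⟩, h5⟩ := h2
    have := hadd t
    rcases h1 with h1 | ⟨t', ⟨h6, h7⟩, h8⟩
    · split_ifs at h1 <;> omega
    · have := hadd t'
      omega

lemma a3G_facts {n x k : ℕ} [NeZero n] (hn : 5 ≤ n) (hx : 2 ≤ x) (hk : n = k * (x - 1) + 4) :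
    A3Facts n x (a3G n (x - 1) (n - 4)) := by
  classical
  obtain ⟨m, hm⟩ : ∃ m, m = n - 4 := ⟨_, rfl⟩
  obtain ⟨y, hy⟩ : ∃ y, y = x - 1 := ⟨_, rfl⟩
  rw [← hm, ← hy]
  rw [← hy] at hk
  have hm' : m + 4 = n := by omega
  have hmk : m = k * y := by omega
  have hadd := a3c_add y
  obtain ⟨cL, hL⟩ : ∃ c : ℕ → ℕ, c = fun v =>
    ((Finset.range (m + 1)).filter (fun t => a3c 0 y t = v)).card := ⟨_, rfl⟩
  obtain ⟨cR, hR⟩ : ∃ c : ℕ → ℕ, c = fun v =>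
    ((Finset.range (m + 1)).filter (fun t => n - 2 - a3c 1 y t = v)).card := ⟨_, rfl⟩
  have hdeg : ∀ v : ℕ, v < n → (a3G n y m).degree (v : ZMod n) = 2 + cL v + cR v := by
    intro v hv
    have h1 := a3_deg_eq (a3G n y m) 0 v
    simp only [zero_add] at h1
    rw [hL, hR]
    rw [← a3G_deg hn hm' hv, ← h1]
    congr! 1
    rw [zero_add]
  have hlm := hadd m
  have hL0 : ∀ v, a3c 0 y m < v → cL v = 0 := by
    intro v hv
    rw [hL]
    simp only [Finset.card_eq_zero, Finset.filter_eq_empty_iff, Finset.mem_range]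
    intro t ht
    have := a3c_mono 0 y (show t ≤ m by omega)
    omega
  have hL1 : ∀ v, v ≤ a3c 0 y m → cL v = 1 ∨ cL v = x := by
    intro v hv
    obtain ⟨t, ht, ht'⟩ := a3c_surj 0 y m v hv
    have := a3c_fib (by omega) (by omega) hmk ht ht'
    rw [hL, show x = y + 1 by omega]
    exact this
  have hR0 : ∀ v, (v + a3c 1 y m < n - 2 ∨ n - 2 < v) → cR v = 0 := by
    intro v hv
    rw [hR]
    simp only [Finset.card_eq_zero, Finset.filter_eq_empty_iff, Finset.mem_range]
    intro t ht
    have := a3c_mono 1 y (show t ≤ m by omega)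
    omega
  have hR1 : ∀ v, n - 2 ≤ v + a3c 1 y m → v ≤ n - 2 → cR v = 1 ∨ cR v = x := by
    intro v hv hv'
    obtain ⟨t, ht, ht'⟩ := a3c_surj 1 y m (n - 2 - v) (by omega)
    have := a3c_fib (by omega) (by omega) hmk ht ht'
    have e : cR v = ((Finset.range (m + 1)).filter (fun t => a3c 1 y t = n - 2 - v)).card := by
      rw [hR]
      simp only
      congr 1
      ext u
      simp only [Finset.mem_filter, Finset.mem_range]
      have := hadd u
      omega
    rw [e, show x = y + 1 by omega]
    exact this
  have hval : ∀ v : ZMod n, (a3G n y m).degree v = 2 + cL v.val + cR v.val := by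
    intro v
    have := hdeg v.val (ZMod.val_lt v)
    rwa [ZMod.natCast_zmod_val] at this
  refine ⟨?_, ?_, ?_⟩
  · intro v
    have e := hval v
    have h : (a3G n y m).degree v = 2 ∨ (a3G n y m).degree v = 3 ∨
        (a3G n y m).degree v = x + 2 := by
      rw [e]
      have := hL0 v.val
      have := hL1 v.val
      have := hR0 v.val
      have := hR1 v.val
      omega
    convert h
  · have e : (Finset.univ.filter (fun v => (a3G n y m).degree v = 2)) =
        {((n - 1 : ℕ) : ZMod n), ((a3c 0 y m + 1 : ℕ) : ZMod n)} := by
      ext v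
      simp only [Finset.mem_filter, Finset.mem_univ, true_and, Finset.mem_insert,
        Finset.mem_singleton]
      have hlt := ZMod.val_lt v
      have q : ∀ w : ℕ, w < n → (v = (w : ZMod n) ↔ v.val = w) := by
        intro w hw
        have := a3_cast_eq (n := n) hlt hw
        rwa [ZMod.natCast_zmod_val] at this
      rw [q _ (by omega), q _ (by omega), hval v]
      have := hL0 v.val
      have := hL1 v.val
      have := hR0 v.val
      have := hR1 v.val
      omega
    have h2 := congrArg Finset.card e
    rw [Finset.card_pair (by rw [Ne, a3_cast_eq (by omega) (by omega)]; omega)] at h2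
    convert h2
  · have e1 : ∑ v, (a3G n y m).degree v = ∑ v ∈ Finset.range n, (2 + cL v + cR v) := by
      refine Finset.sum_bij (fun v _ => v.val) ?_ ?_ ?_ ?_
      · intro v _; simpa using ZMod.val_lt v
      · intro v _ w _ h; exact ZMod.val_injective n h
      · intro w hw
        exact ⟨(w : ZMod n), Finset.mem_univ _, ZMod.val_cast_of_lt (by simpa using hw)⟩
      · intro v _; exact hval v
    have e2 : ∑ v ∈ Finset.range n, cL v = m + 1 := by
      rw [hL]
      rw [← Finset.card_eq_sum_card_fiberwise (f := fun t => a3c 0 y t), Finset.card_range]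
      intro t ht
      simp only [Finset.coe_range, Set.mem_Iio] at ht ⊢
      have := hadd t
      omega
    have e3 : ∑ v ∈ Finset.range n, cR v = m + 1 := by
      rw [hR]
      rw [← Finset.card_eq_sum_card_fiberwise (f := fun t => n - 2 - a3c 1 y t), Finset.card_range]
      intro t ht
      simp only [Finset.coe_range, Set.mem_Iio] at ht ⊢
      omega
    have e4 : ∑ v, (a3G n y m).degree v + 6 = 4 * n := by
      rw [e1, Finset.sum_add_distrib, Finset.sum_add_distrib, e2, e3]
      simp
      omega
    convert e4

end A3proof

/-- Type A3 of the paper's Theorem 1: for `n ≥ 5`, `x ≥ 2` with `x - 1 ∣ n - 4`,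
the multiset `{(x+2)^((n-4)/(x-1)), 3^((n-4)(x-2)/(x-1)+2), 2^2}` is
outerplane-unigraphic. -/
theorem unigraphic_A3 (n x : ℕ) (hn : 5 ≤ n) (hx : 2 ≤ x)
    (hdvd : (x - 1) ∣ (n - 4)) :
    OuterplaneUnigraphic n
      (Multiset.replicate ((n - 4) / (x - 1)) (x + 2) +
        Multiset.replicate ((n - 4) * (x - 2) / (x - 1) + 2) 3 +
        Multiset.replicate 2 2) := by
  have : NeZero n := ⟨by omega⟩
  obtain ⟨k, hk⟩ := hdvd
  have hx1 : 0 < x - 1 := by omega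
  have hk' : n = k * (x - 1) + 4 := by rw [mul_comm]; omega
  have e1 : (n - 4) / (x - 1) = k := by rw [hk]; exact Nat.mul_div_cancel_left _ hx1
  have e2 : (n - 4) * (x - 2) / (x - 1) = k * (x - 2) := by
    rw [hk, mul_assoc]; exact Nat.mul_div_cancel_left _ hx1
  rw [e1, e2]
  refine ⟨⟨a3G n (x - 1) (n - 4), a3G_op hn (by omega), ?_⟩, ?_⟩
  · exact a3_ofFacts hx hk' _ (a3G_facts hn hx hk')
  · intro G G' hG hG' h h'
    exact a3_unique hn G G' hG (a3_facts hx hk' G h) hG' (a3_facts hx hk' G' h')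
end

section
/- Let n ≥ 7 and let x be an integer with ⌊n/2⌋ ≤ x ≤ n−4. Then the multiset {x+2, n−x, 3^(n−4), 2^2} is outerplane-unigraphic: there exists an outerplane graph on n vertices with this degree multiset, and any two outerplane graphs on n vertices with this degree multiset are isomorphic. (Type A4 of the paper's Theorem 1, corresponding to the polytope degree sequence p−1, x+3, p−x, 4^(p−5), 3^2 with p = n+1 ≥ 8 and ⌊(p−1)/2⌋ ≤ x ≤ p−5.) -/
namespace A4

lemma val_sub' {n : ℕ} (hn : 7 ≤ n) (v a : ZMod n) :
    (v - a).val = if a.val ≤ v.val then v.val - a.val else v.val + n - a.val := by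
  have : NeZero n := ⟨by omega⟩
  have hv := ZMod.val_lt v
  have ha := ZMod.val_lt a
  split_ifs with h
  · exact ZMod.val_sub h
  · have h1 : (a - v).val = a.val - v.val := ZMod.val_sub (by omega)
    have h2 : v - a = -(a - v) := by ring
    rw [h2, ZMod.neg_val, if_neg, h1]
    · omega
    · intro h0
      rw [h0, ZMod.val_zero] at h1
      omega

lemma val_one' {n : ℕ} (hn : 7 ≤ n) : (1 : ZMod n).val = 1 := by
  have : Fact (1 < n) := ⟨by omega⟩
  exact ZMod.val_one n

/-- cycle adjacency in coordinates -/
def Cyc (n i j : ℕ) : Prop :=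
  j = i + 1 ∨ i = j + 1 ∨ (i = 0 ∧ j + 1 = n) ∨ (j = 0 ∧ i + 1 = n)

lemma succ_iff {n : ℕ} (hn : 7 ≤ n) (A u v : ZMod n) :
    v = u + 1 ↔ ((v - A).val = (u - A).val + 1 ∨ ((v - A).val = 0 ∧ (u - A).val + 1 = n)) := by
  have : NeZero n := ⟨by omega⟩
  have e : v = u + 1 ↔ ((v - A) - (u - A)).val = (1 : ZMod n).val := by
    rw [(ZMod.val_injective n).eq_iff]
    constructor
    · intro h; rw [h]; ring
    · intro h; linear_combination h
  rw [e, val_one' hn, val_sub' hn (v - A) (u - A)]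
  have h1 := ZMod.val_lt (v - A)
  have h2 := ZMod.val_lt (u - A)
  split_ifs <;> omega

lemma cyc_iff {n : ℕ} (hn : 7 ≤ n) (A u v : ZMod n) :
    IsCycleEdge n s(u, v) ↔ Cyc n (u - A).val (v - A).val := by
  have : IsCycleEdge n s(u, v) ↔ (v = u + 1 ∨ u = v + 1) := by
    unfold IsCycleEdge
    constructor
    · rintro ⟨i, hi⟩
      rw [Sym2.eq_iff] at hi
      rcases hi with ⟨rfl, rfl⟩ | ⟨rfl, rfl⟩ <;> simp
    · rintro (rfl | rfl)
      · exact ⟨_, rfl⟩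
      · exact ⟨_, Sym2.eq_swap⟩
  rw [this, succ_iff hn A u v, succ_iff hn A v u]
  unfold Cyc
  grind

/-- betweenness in coordinates -/
def Btw (a b v : ℕ) : Prop := (a < b ∧ a < v ∧ v < b) ∨ (b < a ∧ (a < v ∨ v < b))

lemma between_iff {n : ℕ} (hn : 7 ≤ n) (A a b v : ZMod n) :
    Between n a b v ↔ Btw (a - A).val (b - A).val (v - A).val := by
  have : NeZero n := ⟨by omega⟩
  unfold Between Btw
  have e1 : v - a = (v - A) - (a - A) := by ring
  have e2 : b - a = (b - A) - (a - A) := by ring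
  rw [e1, e2, val_sub' hn (v - A), val_sub' hn (b - A)]
  have h1 := ZMod.val_lt (v - A)
  have h2 := ZMod.val_lt (a - A)
  have h3 := ZMod.val_lt (b - A)
  split_ifs <;> omega

lemma cross_iff {n : ℕ} (hn : 7 ≤ n) (A a b c d : ZMod n) :
    Cross n s(a, b) s(c, d) ↔
      (Xor (Btw (a - A).val (b - A).val (c - A).val) (Btw (a - A).val (b - A).val (d - A).val) ∧
       Xor (Btw (b - A).val (a - A).val (c - A).val) (Btw (b - A).val (a - A).val (d - A).val)) := by
  simp only [← between_iff hn A]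
  constructor
  · intro h
    exact ⟨h a b c d rfl rfl, h b a c d Sym2.eq_swap rfl⟩
  · rintro ⟨h1, h2⟩ a' b' c' d' e f
    rw [Sym2.eq_iff] at e f
    rcases e with ⟨rfl, rfl⟩ | ⟨rfl, rfl⟩ <;> rcases f with ⟨rfl, rfl⟩ | ⟨rfl, rfl⟩
    · exact h1
    · exact (xor_comm _ _).mp h1
    · exact h2
    · exact (xor_comm _ _).mp h2

/-- adjacency of the model graph in coordinates (one direction) -/
def E (n x i j : ℕ) : Prop :=
  j = i + 1 ∨ (i = 0 ∧ j + 1 = n) ∨ (i = 0 ∧ 1 ≤ j ∧ j ≤ x + 1) ∨ (i = x + 1 ∧ x + 2 ≤ j)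

def R (n x i j : ℕ) : Prop := E n x i j ∨ E n x j i

def model (n x : ℕ) (hn : 7 ≤ n) : SimpleGraph (ZMod n) where
  Adj u v := R n x u.val v.val
  symm := ⟨fun u v h => Or.symm h⟩
  loopless := ⟨fun u h => by unfold R E at h; omega⟩

lemma cyc_R {n x i j : ℕ} (h : Cyc n i j) : R n x i j := by
  rcases h with h | h | h | h
  · exact Or.inl (Or.inl h)
  · exact Or.inr (Or.inl h)
  · exact Or.inl (Or.inr (Or.inl h))
  · exact Or.inr (Or.inr (Or.inl h))

set_option maxHeartbeats 1000000 in
lemma model_outer (n x : ℕ) (hn : 7 ≤ n) (hx1 : n / 2 ≤ x) (hx2 : x ≤ n - 4) :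
    IsOuterplane n (model n x hn) := by
  have : NeZero n := ⟨by omega⟩
  refine ⟨{e | e ∈ (model n x hn).edgeSet ∧ ¬ IsCycleEdge n e}, ⟨?_, ?_⟩, ?_⟩
  · rintro e ⟨h1, h2⟩
    exact ⟨(model n x hn).not_isDiag_of_mem_edgeSet h1, h2⟩
  · intro e
    induction e using Sym2.ind with | _ a b
    intro he f
    induction f using Sym2.ind with | _ c d
    intro hf _ hc
    obtain ⟨he1, he2⟩ := he
    obtain ⟨hf1, hf2⟩ := hf
    rw [SimpleGraph.mem_edgeSet] at he1 hf1
    rw [cyc_iff hn 0] at he2 hf2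
    rw [cross_iff hn 0] at hc
    simp only [sub_zero] at *
    change R n x a.val b.val at he1
    change R n x c.val d.val at hf1
    have h1 := ZMod.val_lt a
    have h2 := ZMod.val_lt b
    have h3 := ZMod.val_lt c
    have h4 := ZMod.val_lt d
    generalize a.val = a at *
    generalize b.val = b at *
    generalize c.val = c at *
    generalize d.val = d at *
    have he3 : (a = 0 ∧ 2 ≤ b ∧ b ≤ x + 1) ∨ (b = 0 ∧ 2 ≤ a ∧ a ≤ x + 1) ∨
      (a = x + 1 ∧ x + 3 ≤ b) ∨ (b = x + 1 ∧ x + 3 ≤ a) := by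
      clear hc; unfold R E at he1; unfold Cyc at he2; grind (splits := 25)
    have hf3 : (c = 0 ∧ 2 ≤ d ∧ d ≤ x + 1) ∨ (d = 0 ∧ 2 ≤ c ∧ c ≤ x + 1) ∨
      (c = x + 1 ∧ x + 3 ≤ d) ∨ (d = x + 1 ∧ x + 3 ≤ c) := by
      clear hc he1 he2; unfold R E at hf1; unfold Cyc at hf2; grind (splits := 25)
    clear he1 he2 hf1 hf2
    unfold Xor Btw at hc
    rcases he3 with h | h | h | h <;> rcases hf3 with h' | h' | h' | h' <;> omega
  · ext e
    induction e using Sym2.ind with | _ a b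
    simp only [Set.mem_union, Set.mem_ofPred_eq]
    have : IsCycleEdge n s(a, b) → s(a, b) ∈ (model n x hn).edgeSet := by
      rw [cyc_iff hn 0, SimpleGraph.mem_edgeSet]
      simp only [sub_zero]
      intro h
      change R n x a.val b.val
      exact cyc_R h
    constructor
    · intro h
      by_cases hc : IsCycleEdge n s(a, b)
      · exact Or.inl hc
      · exact Or.inr ⟨h, hc⟩
    · rintro (h | h)
      · exact this h
      · exact h.1

lemma model_degree (n x : ℕ) (hn : 7 ≤ n) (v : ZMod n) [Fintype ((model n x hn).neighborSet v)] 
    (s : Finset ℕ) (hs : ∀ i, i ∈ s ↔ i < n ∧ R n x v.val i) :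
    (model n x hn).degree v = s.card := by
  have : NeZero n := ⟨by omega⟩
  rw [← SimpleGraph.card_neighborFinset_eq_degree]
  apply Finset.card_bij (fun u _ => u.val)
  · intro u hu
    rw [SimpleGraph.mem_neighborFinset] at hu
    exact (hs _).2 ⟨ZMod.val_lt u, hu⟩
  · intro u _ w _ h
    exact ZMod.val_injective n h
  · intro i hi
    obtain ⟨h1, h2⟩ := (hs _).1 hi
    have e : ((i : ZMod n)).val = i := ZMod.val_cast_of_lt h1
    refine ⟨(i : ZMod n), ?_, e⟩
    rw [SimpleGraph.mem_neighborFinset]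
    change R n x v.val _
    rwa [e]

lemma degreeMultiset_eq (n : ℕ) [NeZero n] (G : SimpleGraph (ZMod n)) [∀ v, Fintype (G.neighborSet v)] :
    degreeMultiset n G = (Finset.univ : Finset (ZMod n)).val.map fun v => G.degree v := by
  unfold degreeMultiset degMultiset
  rw [dif_neg (NeZero.ne n)]
  apply Multiset.map_congr
  · congr!
  · intros; congr!

set_option maxHeartbeats 1000000 in
lemma model_deg (n x : ℕ) (hn : 7 ≤ n) (hx1 : n / 2 ≤ x) (hx2 : x ≤ n - 4) :
    degreeMultiset n (model n x hn) = ((x + 2) ::ₘ (n - x) ::ₘ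
        (Multiset.replicate (n - 4) 3 + Multiset.replicate 2 2)) := by
  classical
  have : NeZero n := ⟨by omega⟩
  rw [degreeMultiset_eq]
  have c1 : ∀ i, i < n → ((i : ℕ) : ZMod n).val = i := fun i h => ZMod.val_cast_of_lt h
  obtain ⟨A, v0⟩ : ∃ A : ZMod n, A.val = 0 := ⟨_, c1 0 (by omega)⟩
  obtain ⟨P, v1⟩ : ∃ A : ZMod n, A.val = 1 := ⟨_, c1 1 (by omega)⟩
  obtain ⟨B, v2⟩ : ∃ A : ZMod n, A.val = x + 1 := ⟨_, c1 (x + 1) (by omega)⟩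
  obtain ⟨Q, v3⟩ : ∃ A : ZMod n, A.val = x + 2 := ⟨_, c1 (x + 2) (by omega)⟩
  have ne : ∀ u v : ZMod n, u.val ≠ v.val → u ≠ v := fun u v h h' => h (by rw [h'])
  have dA : (model n x hn).degree A = x + 2 := by
    rw [model_degree n x hn A (insert (n-1) (Finset.Icc 1 (x+1)))]
    · rw [Finset.card_insert_of_notMem]
      · simp
      · simp; omega
    · intro i
      rw [v0]; simp only [Finset.mem_insert, Finset.mem_Icc]; unfold R E; grind (splits := 25)
  have dB : (model n x hn).degree B = n - x := by
    rw [model_degree n x hn B (insert 0 (insert x (Finset.Ico (x+2) n)))]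
    · rw [Finset.card_insert_of_notMem, Finset.card_insert_of_notMem]
      · simp; omega
      · simp
      · simp; omega
    · intro i
      rw [v2]; simp only [Finset.mem_insert, Finset.mem_Ico]; unfold R E; grind (splits := 25)
  have dP : (model n x hn).degree P = 2 := by
    rw [model_degree n x hn P {0, 2}]
    · simp
    · intro i
      rw [v1]; simp only [Finset.mem_insert, Finset.mem_singleton]; unfold R E; grind (splits := 25)
  have dQ : (model n x hn).degree Q = 2 := by
    rw [model_degree n x hn Q {x+1, x+3}]
    · simp
    · intro i
      rw [v3]; simp only [Finset.mem_insert, Finset.mem_singleton]; unfold R E; grind (splits := 25)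
  have dO : ∀ v, v ≠ A → v ≠ B → v ≠ P → v ≠ Q → (model n x hn).degree v = 3 := by
    intro v h1 h2 h3 h4
    have k := fun w (h : v ≠ w) => (ZMod.val_injective n).ne h
    have k1 := k _ h1
    have k2 := k _ h2
    have k3 := k _ h3
    have k4 := k _ h4
    have k5 := ZMod.val_lt v
    rw [v0] at k1; rw [v2] at k2; rw [v1] at k3; rw [v3] at k4
    by_cases hc : v.val < x + 1
    · rw [model_degree n x hn v {0, v.val - 1, v.val + 1}]
      · rw [Finset.card_eq_three]
        exact ⟨0, v.val - 1, v.val + 1, by omega, by omega, by omega, rfl⟩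
      · intro i
        simp only [Finset.mem_insert, Finset.mem_singleton]; unfold R E; grind (splits := 25)
    · rw [model_degree n x hn v {x + 1, v.val - 1, if v.val + 1 = n then 0 else v.val + 1}]
      · rw [Finset.card_eq_three]
        exact ⟨x+1, v.val - 1, _, by omega, by split_ifs <;> omega, by split_ifs <;> omega, rfl⟩
      · intro i
        simp only [Finset.mem_insert, Finset.mem_singleton]; unfold R E; grind (splits := 25)
  set D : Finset (ZMod n) := ((((Finset.univ).erase A).erase B).erase P).erase Q with hD
  have nBA : B ≠ A := ne _ _ (by omega)
  have nPA : P ≠ A := ne _ _ (by omega)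
  have nPB : P ≠ B := ne _ _ (by omega)
  have nQA : Q ≠ A := ne _ _ (by omega)
  have nQB : Q ≠ B := ne _ _ (by omega)
  have nQP : Q ≠ P := ne _ _ (by omega)
  have hDc : D.card = n - 4 := by
    rw [hD, Finset.card_erase_of_mem, Finset.card_erase_of_mem, Finset.card_erase_of_mem, Finset.card_erase_of_mem, Finset.card_univ, ZMod.card]
    · omega
    all_goals simp [nBA, nPA, nPB, nQA, nQB, nQP]
  have e : (Finset.univ : Finset (ZMod n)).val = A ::ₘ B ::ₘ P ::ₘ Q ::ₘ D.val := by
    have : (Finset.univ : Finset (ZMod n)) = insert A (insert B (insert P (insert Q D))) := by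
      rw [hD, Finset.insert_erase, Finset.insert_erase, Finset.insert_erase, Finset.insert_erase]
      all_goals simp [nBA, nPA, nPB, nQA, nQB, nQP]
    rw [this, Finset.insert_val_of_notMem, Finset.insert_val_of_notMem, Finset.insert_val_of_notMem, Finset.insert_val_of_notMem]
    all_goals simp [hD, nBA, nPA, nPB, nQA, nQB, nQP, Ne.symm nBA, Ne.symm nPA, Ne.symm nPB, Ne.symm nQA, Ne.symm nQB, Ne.symm nQP]
  rw [e]
  simp only [Multiset.map_cons, dA, dB, dP, dQ]
  have hm : D.val.map (fun v => (model n x hn).degree v) = Multiset.replicate (n-4) 3 := by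
    rw [Multiset.eq_replicate]
    constructor
    · rw [Multiset.card_map]; exact hDc
    · intro b hb
      rw [Multiset.mem_map] at hb
      obtain ⟨v, hv, rfl⟩ := hb
      have hv' : v ∈ D := hv
      simp only [hD, Finset.mem_erase, Finset.mem_univ] at hv'
      exact dO v (by tauto) (by tauto) (by tauto) (by tauto)
  rw [hm]
  congr 2
  rw [add_comm]
  rfl
end A4
namespace A4
set_option maxHeartbeats 2000000 in
lemma comb (n x k p q : ℕ) (al be : ℕ → Prop) [DecidablePred al] (hn : 7 ≤ n) (hx1 : n / 2 ≤ x) (hx2 : x ≤ n - 4)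
    (hk1 : 2 ≤ k) (hk2 : k + 2 ≤ n) (hp0 : 0 < p) (hpn : p < n) (hpk : p ≠ k)
    (hq0 : 0 < q) (hqn : q < n) (hqk : q ≠ k)
    (h1 : ∀ i, 0 < i → i < n → i ≠ k → i ≠ p → i ≠ q → (al i ∨ be i))
    (h2 : ∀ i, 0 < i → i < n → i ≠ k → al i → be i → False)
    (hp : ¬ al p ∧ ¬ be p) (hq : ¬ al q ∧ ¬ be q)
    (ha1 : ¬ al 1) (ha2 : ¬ al (n - 1)) (hb1 : ¬ be (k - 1)) (hb2 : ¬ be (k + 1))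
    (h5 : ∀ i j, 0 < j → j < i → i < k → al i → be j → False)
    (h6 : ∀ i j, k < i → i < j → j < n → al i → be j → False)
    (hc : ((Finset.range n).filter fun i => 0 < i ∧ i ≠ k ∧ al i).card = x - 1) :
    (k = x + 1 ∧ ∀ i, 0 < i → i < n → i ≠ k → ((al i ↔ 2 ≤ i ∧ i ≤ x) ∧ (be i ↔ x + 3 ≤ i))) ∨
    (k + x + 1 = n ∧ ∀ i, 0 < i → i < n → i ≠ k →
      ((al i ↔ k + 1 ≤ i ∧ i + 2 ≤ n) ∧ (be i ↔ i + 2 ≤ k))) := by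
  wlog hpq : p < q generalizing p q
  · refine this q p hq0 hqn hqk hp0 hpn hpk (fun i a b c d e => h1 i a b c e d) hq hp ?_
    by_contra h
    have : p = q := by omega
    subst this
    have s1 : be 1 ∨ p = 1 := by
      by_contra! h
      rcases h1 1 (by omega) (by omega) (by omega) (by omega) (by omega) <;> tauto
    have s2 : al (k-1) ∨ p = k - 1 := by
      by_contra! h
      rcases h1 (k-1) (by omega) (by omega) (by omega) (by omega) (by omega) <;> tauto
    have s3 : be (n-1) ∨ p = n-1 := by
      by_contra! h
      rcases h1 (n-1) (by omega) (by omega) (by omega) (by omega) (by omega) <;> tauto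
    have s4 : al (k+1) ∨ p = k + 1 := by
      by_contra! h
      rcases h1 (k+1) (by omega) (by omega) (by omega) (by omega) (by omega) <;> tauto
    by_cases hpk' : p < k
    · have s3' := s3.resolve_right (by omega)
      have s4' := s4.resolve_right (by omega)
      by_cases hh : n - 1 = k + 1
      · rw [hh] at s3'; tauto
      · exact h6 (k+1) (n-1) (by omega) (by omega) (by omega) s4' s3'
    · have s3' := s1.resolve_right (by omega)
      have s4' := s2.resolve_right (by omega)
      by_cases hh : k - 1 = 1
      · rw [hh] at s4'; tauto
      · exact h5 (k-1) 1 (by omega) (by omega) (by omega) s4' s3'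
  have s1 : be 1 ∨ p = 1 := by
    by_contra! h
    rcases h1 1 (by omega) (by omega) (by omega) (by omega) (by omega) <;> tauto
  have s2 : al (k-1) ∨ p = k - 1 ∨ q = k - 1 := by
    by_contra! h
    rcases h1 (k-1) (by omega) (by omega) (by omega) (by omega) (by omega) <;> tauto
  have s3 : be (n-1) ∨ q = n-1 := by
    by_contra! h
    rcases h1 (n-1) (by omega) (by omega) (by omega) (by omega) (by omega) <;> tauto
  have s4 : al (k+1) ∨ p = k + 1 ∨ q = k+1 := by
    by_contra! h
    rcases h1 (k+1) (by omega) (by omega) (by omega) (by omega) (by omega) <;> tauto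
  have hqk' : k < q := by
    by_contra hh
    have s3' := s3.resolve_right (by omega)
    have s4' := s4.resolve_right (by omega)
    by_cases hh : n - 1 = k + 1
    · rw [hh] at s3'; tauto
    · exact h6 (k+1) (n-1) (by omega) (by omega) (by omega) s4' s3'
  have hpk' : p < k := by
    by_contra hh
    have s3' := s1.resolve_right (by omega)
    have s4' := s2.resolve_right (by omega)
    by_cases hh : k - 1 = 1
    · rw [hh] at s4'; tauto
    · exact h5 (k-1) 1 (by omega) (by omega) (by omega) s4' s3'
  have L : (p = 1 ∧ ∀ i, 2 ≤ i → i < k → al i) ∨ (p + 1 = k ∧ ∀ i, 0 < i → i + 2 ≤ k → be i) := by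
    by_cases hp1 : p = 1
    · left
      refine ⟨hp1, fun i hi hik => ?_⟩
      have s2' := s2.resolve_right (by omega)
      rcases h1 i (by omega) (by omega) (by omega) (by omega) (by omega) with h | h
      · exact h
      · exfalso
        by_cases hh : i = k - 1
        · rw [hh] at h; tauto
        · exact h5 (k-1) i (by omega) (by omega) (by omega) s2' h
    · right
      have s1' := s1.resolve_right hp1
      have hpp : p + 1 = k := by
        by_contra hh
        have s2' := s2.resolve_right (by omega)
        exact h5 (k-1) 1 (by omega) (by omega) (by omega) s2' s1'
      refine ⟨hpp, fun i hi hik => ?_⟩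
      rcases h1 i (by omega) (by omega) (by omega) (by omega) (by omega) with h | h
      · exfalso
        by_cases hh : i = 1
        · rw [hh] at h; tauto
        · exact h5 i 1 (by omega) (by omega) (by omega) h s1'
      · exact h
  have U : (q + 1 = n ∧ ∀ i, k < i → i + 2 ≤ n → al i) ∨ (q = k + 1 ∧ ∀ i, k + 2 ≤ i → i < n → be i) := by
    by_cases hp1 : q + 1 = n
    · left
      refine ⟨hp1, fun i hi hik => ?_⟩
      have s2' : al (k+1) ∨ q = k + 1 := s4.imp_right (by omega)
      rcases h1 i (by omega) (by omega) (by omega) (by omega) (by omega) with h | h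
      · exact h
      · exfalso
        by_cases hh : i = k + 1
        · rw [hh] at h; tauto
        · exact h6 (k+1) i (by omega) (by omega) (by omega) (s2'.resolve_right (by omega)) h
    · right
      have s1' := s3.resolve_right (by omega)
      have hpp : q = k + 1 := by
        by_contra hh
        have s2' := s4.resolve_right (by omega)
        exact h6 (k+1) (n-1) (by omega) (by omega) (by omega) s2' s1'
      refine ⟨hpp, fun i hi hik => ?_⟩
      rcases h1 i (by omega) (by omega) (by omega) (by omega) (by omega) with h | h
      · exfalso
        by_cases hh : i = n - 1
        · rw [hh] at h; tauto
        · exact h6 i (n-1) (by omega) (by omega) (by omega) h s1'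
      · exact h
  rcases L with ⟨rfl, L⟩ | ⟨hpp, L⟩ <;> rcases U with ⟨hqq, U⟩ | ⟨hqq, U⟩
  · exfalso
    have : ((Finset.range n).filter fun i => 0 < i ∧ i ≠ k ∧ al i) = (Finset.Icc 2 (n-2)).erase k := by
      ext i
      simp only [Finset.mem_filter, Finset.mem_range, Finset.mem_erase, Finset.mem_Icc]
      constructor
      · rintro ⟨a, b, c, d⟩
        have : i ≠ 1 := by rintro rfl; tauto
        have : i ≠ n - 1 := by rintro rfl; tauto
        omega
      · rintro ⟨a, b, c⟩
        refine ⟨by omega, by omega, a, ?_⟩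
        by_cases i < k
        · exact L i b (by omega)
        · exact U i (by omega) (by omega)
    rw [this, Finset.card_erase_of_mem (by simp; omega)] at hc
    simp at hc
    omega
  · left
    have F : ∀ i, 0 < i → i < n → i ≠ k → ((al i ↔ 2 ≤ i ∧ i < k) ∧ (be i ↔ k + 2 ≤ i)) := by
      intro i a b c
      have e1 : 2 ≤ i ∧ i < k → al i := fun h => L i h.1 h.2
      have e2 : k + 2 ≤ i → be i := fun h => U i h b
      have e3 := h2 i a b c
      have e4 : i = 1 → ¬ al i ∧ ¬ be i := by rintro rfl; exact hp
      have e5 : i = k + 1 → ¬ al i ∧ ¬ be i := by rintro rfl; rw [← hqq]; exact hq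
      refine ⟨⟨fun h => ?_, e1⟩, ⟨fun h => ?_, e2⟩⟩
      · by_contra hh
        have : i = 1 ∨ i = k + 1 ∨ k + 2 ≤ i := by omega
        rcases this with t | t | t
        · exact (e4 t).1 h
        · exact (e5 t).1 h
        · exact e3 h (e2 t)
      · by_contra hh
        have : i = 1 ∨ i = k + 1 ∨ (2 ≤ i ∧ i < k) := by omega
        rcases this with t | t | t
        · exact (e4 t).2 h
        · exact (e5 t).2 h
        · exact e3 (e1 t) h
    have : ((Finset.range n).filter fun i => 0 < i ∧ i ≠ k ∧ al i) = Finset.Ico 2 k := by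
      ext i
      simp only [Finset.mem_filter, Finset.mem_range, Finset.mem_Ico]
      constructor
      · rintro ⟨a, b, c, d⟩
        exact ((F i b a c).1.1 d)
      · rintro ⟨b, c⟩
        exact ⟨by omega, by omega, by omega, L i b c⟩
    rw [this, Nat.card_Ico] at hc
    have hkx : k = x + 1 := by omega
    subst hkx
    refine ⟨rfl, fun i a b c => ?_⟩
    have := F i a b c
    rw [this.1, this.2]
    omega
  · right
    have F : ∀ i, 0 < i → i < n → i ≠ k → ((al i ↔ k + 1 ≤ i ∧ i + 2 ≤ n) ∧ (be i ↔ i + 2 ≤ k)) := by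
      intro i a b c
      have e1 : k + 1 ≤ i ∧ i + 2 ≤ n → al i := fun h => U i h.1 h.2
      have e2 : i + 2 ≤ k → be i := fun h => L i a h
      have e3 := h2 i a b c
      have e4 : i + 1 = k → ¬ al i ∧ ¬ be i := by
        intro h
        have : i = p := by omega
        rw [this]; exact hp
      have e5 : i + 1 = n → ¬ al i ∧ ¬ be i := by
        intro h
        have : i = q := by omega
        rw [this]; exact hq
      refine ⟨⟨fun h => ?_, e1⟩, ⟨fun h => ?_, e2⟩⟩
      · by_contra hh
        have : i + 1 = k ∨ i + 1 = n ∨ i + 2 ≤ k := by omega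
        rcases this with t | t | t
        · exact (e4 t).1 h
        · exact (e5 t).1 h
        · exact e3 h (e2 t)
      · by_contra hh
        have : i + 1 = k ∨ i + 1 = n ∨ (k + 1 ≤ i ∧ i + 2 ≤ n) := by omega
        rcases this with t | t | t
        · exact (e4 t).2 h
        · exact (e5 t).2 h
        · exact e3 (e1 t) h
    have : ((Finset.range n).filter fun i => 0 < i ∧ i ≠ k ∧ al i) = Finset.Icc (k+1) (n-2) := by
      ext i
      simp only [Finset.mem_filter, Finset.mem_range, Finset.mem_Icc]
      constructor
      · rintro ⟨a, b, c, d⟩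
        have := ((F i b a c).1.1 d)
        omega
      · rintro ⟨b, c⟩
        exact ⟨by omega, by omega, by omega, U i b (by omega)⟩
    rw [this, Nat.card_Icc] at hc
    exact ⟨by omega, F⟩
  · exfalso
    have : ((Finset.range n).filter fun i => 0 < i ∧ i ≠ k ∧ al i) = ∅ := by
      ext i
      simp only [Finset.mem_filter, Finset.mem_range, Finset.notMem_empty, iff_false]
      rintro ⟨a, b, c, d⟩
      have e3 := h2 i b a c d
      have : i + 1 = k ∨ i = k + 1 ∨ i + 2 ≤ k ∨ k + 2 ≤ i := by omega
      rcases this with h | h | h | h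
      · have : i = p := by omega
        subst this; tauto
      · have : i = q := by omega
        subst this; tauto
      · exact e3 (L i b h)
      · exact e3 (U i h a)
    rw [this] at hc
    simp at hc
    omega
end A4
namespace A4
lemma extract {n x : ℕ} [NeZero n] (f : ZMod n → ℕ)
    (h : (Finset.univ : Finset (ZMod n)).val.map f = (x + 2) ::ₘ (n - x) ::ₘ
        (Multiset.replicate (n - 4) 3 + Multiset.replicate 2 2)) :
    ∃ A B P Q : ZMod n, B ≠ A ∧ P ≠ A ∧ P ≠ B ∧ Q ≠ A ∧ Q ≠ B ∧ Q ≠ P ∧ f A = x + 2 ∧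
      f B = n - x ∧ f P = 2 ∧ f Q = 2 ∧
      ∀ v, v ≠ A → v ≠ B → v ≠ P → v ≠ Q → f v = 3 := by
  classical
  have e : Multiset.replicate (n - 4) 3 + Multiset.replicate 2 2 =
      2 ::ₘ 2 ::ₘ Multiset.replicate (n - 4) 3 := by
    rw [add_comm]; rfl
  rw [e, ← Multiset.map_eq_cons] at h
  obtain ⟨A, hA, fA, h⟩ := h
  rw [← Finset.erase_val, ← Multiset.map_eq_cons] at h
  obtain ⟨B, hB, fB, h⟩ := h
  rw [← Finset.erase_val, ← Multiset.map_eq_cons] at h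
  obtain ⟨P, hP, fP, h⟩ := h
  rw [← Finset.erase_val, ← Multiset.map_eq_cons] at h
  obtain ⟨Q, hQ, fQ, h⟩ := h
  rw [← Finset.erase_val] at h
  simp only [Finset.mem_val, Finset.mem_erase, Finset.mem_univ, and_true] at hB hP hQ
  refine ⟨A, B, P, Q, hB, hP.2, hP.1, hQ.2.2, hQ.2.1, hQ.1, fA, fB, fP, fQ, ?_⟩
  intro v h1 h2 h3 h4
  have : f v ∈ Multiset.replicate (n - 4) 3 := by
    rw [← h]
    apply Multiset.mem_map_of_mem
    simp only [Finset.mem_val, Finset.mem_erase, Finset.mem_univ, and_true]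
    exact ⟨h4, h3, h2, h1⟩
  exact Multiset.eq_of_mem_replicate this

/-- counting: every chord meets A or B -/
lemma count {n x : ℕ} [NeZero n] (hn : 7 ≤ n) (hx1 : n / 2 ≤ x) (hx2 : x ≤ n - 4)
    (C : ZMod n → Finset (ZMod n)) (hs : ∀ u v, u ∈ C v ↔ v ∈ C u) (hi : ∀ v, v ∉ C v)
    (A B P Q : ZMod n) (nBA : B ≠ A) (nPA : P ≠ A) (nPB : P ≠ B) (nQA : Q ≠ A) (nQB : Q ≠ B)
    (nQP : Q ≠ P) (fA : (C A).card = x) (fB : (C B).card = n - x - 2) (fP : (C P).card = 0)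
    (fQ : (C Q).card = 0) (fO : ∀ v, v ≠ A → v ≠ B → v ≠ P → v ≠ Q → (C v).card = 1) :
    B ∈ C A ∧ ((C A).erase B).card = x - 1 ∧
    (∀ v, v ≠ A → v ≠ B → v ∈ C A → v ∈ C B → False) ∧
    (∀ v, v ≠ A → v ≠ B → v ≠ P → v ≠ Q → v ∈ C A ∨ v ∈ C B) ∧
    (∀ u v, u ∈ C v → u = A ∨ u = B ∨ v = A ∨ v = B) ∧
    (P ∉ C A ∧ P ∉ C B) ∧ (Q ∉ C A ∧ Q ∉ C B) := by
  classical
  have zP : ∀ w, P ∉ C w := by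
    intro w hw
    rw [hs, Finset.card_eq_zero.1 fP] at hw
    simp at hw
  have zQ : ∀ w, Q ∉ C w := by
    intro w hw
    rw [hs, Finset.card_eq_zero.1 fQ] at hw
    simp at hw
  have one : ∀ v, v ≠ A → v ≠ B → (C v).card ≤ 1 := by
    intro v h1 h2
    by_cases h3 : v = P
    · rw [h3, fP]; omega
    by_cases h4 : v = Q
    · rw [h4, fQ]; omega
    rw [fO v h1 h2 h3 h4]
  have both : ∀ v, v ≠ A → v ≠ B → v ∈ C A → v ∈ C B → False := by
    intro v h1 h2 h3 h4
    have := Finset.card_le_one.1 (one v h1 h2) A ((hs _ _).1 h3) B ((hs _ _).1 h4)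
    exact nBA this.symm
  set D : Finset (ZMod n) := ((((Finset.univ).erase A).erase B).erase P).erase Q with hD
  have hDc : D.card = n - 4 := by
    rw [hD, Finset.card_erase_of_mem, Finset.card_erase_of_mem, Finset.card_erase_of_mem, Finset.card_erase_of_mem, Finset.card_univ, ZMod.card]
    · omega
    all_goals simp [nBA, nPA, nPB, nQA, nQB, nQP]
  have disj : Disjoint ((C A).erase B) ((C B).erase A) := by
    rw [Finset.disjoint_left]
    intro v h1 h2
    rw [Finset.mem_erase] at h1 h2
    exact both v h2.1 h1.1 h1.2 h2.2
  have sub : (C A).erase B ∪ (C B).erase A ⊆ D := by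
    intro v hv
    rw [Finset.mem_union, Finset.mem_erase, Finset.mem_erase] at hv
    simp only [hD, Finset.mem_erase, Finset.mem_univ, and_true]
    refine ⟨?_, ?_, ?_, ?_⟩
    · rintro rfl; rcases hv with h | h
      exacts [zQ _ h.2, zQ _ h.2]
    · rintro rfl; rcases hv with h | h
      exacts [zP _ h.2, zP _ h.2]
    · rintro rfl; rcases hv with h | h
      exacts [h.1 rfl, hi _ h.2]
    · rintro rfl; rcases hv with h | h
      exacts [hi _ h.2, h.1 rfl]
  have cle := Finset.card_le_card sub
  rw [Finset.card_union_of_disjoint disj, hDc] at cle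
  have hBA : B ∈ C A := by
    by_contra hh
    have hh' : A ∉ C B := fun h => hh ((hs _ _).1 h)
    rw [Finset.erase_eq_of_notMem hh, Finset.erase_eq_of_notMem hh', fA, fB] at cle
    omega
  have cA : ((C A).erase B).card = x - 1 := by rw [Finset.card_erase_of_mem hBA, fA]
  have cB : ((C B).erase A).card = n - x - 3 := by
    rw [Finset.card_erase_of_mem ((hs _ _).1 hBA), fB]; omega
  have eqD : (C A).erase B ∪ (C B).erase A = D := by
    apply Finset.eq_of_subset_of_card_le sub
    rw [Finset.card_union_of_disjoint disj, hDc, cA, cB]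
    omega
  have cov : ∀ v, v ≠ A → v ≠ B → v ≠ P → v ≠ Q → v ∈ C A ∨ v ∈ C B := by
    intro v h1 h2 h3 h4
    have : v ∈ D := by
      simp only [hD, Finset.mem_erase, Finset.mem_univ, and_true]
      exact ⟨h4, h3, h2, h1⟩
    rw [← eqD, Finset.mem_union, Finset.mem_erase, Finset.mem_erase] at this
    exact this.imp (fun h => h.2) (fun h => h.2)
  refine ⟨hBA, cA, both, cov, ?_, ⟨zP _, zP _⟩, ⟨zQ _, zQ _⟩⟩
  intro u v huv
  by_contra! hh
  obtain ⟨h1, h2, h3, h4⟩ := hh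
  have nP : v ≠ P := by rintro rfl; exact zP _ ((hs _ _).1 huv)
  have nQ : v ≠ Q := by rintro rfl; exact zQ _ ((hs _ _).1 huv)
  rcases cov v h3 h4 nP nQ with h | h
  · exact h1 (Finset.card_le_one.1 (one v h3 h4) u huv A ((hs _ _).1 h))
  · exact h2 (Finset.card_le_one.1 (one v h3 h4) u huv B ((hs _ _).1 h))

lemma deg_chord {n : ℕ} [NeZero n] (hn : 7 ≤ n) (G : SimpleGraph (ZMod n))
    [∀ v, Fintype (G.neighborSet v)] (Ch : ZMod n → ZMod n → Prop)
    [∀ v, DecidablePred (Ch v)]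
    (h1 : ∀ u v, G.Adj u v ↔ IsCycleEdge n s(u, v) ∨ Ch u v)
    (h2 : ∀ u v, Ch u v → ¬ IsCycleEdge n s(u, v)) (v : ZMod n) :
    (Finset.univ.filter (Ch v)).card = G.degree v - 2 := by
  classical
  have cy : ∀ u, IsCycleEdge n s(v, u) ↔ (u = v + 1 ∨ u = v - 1) := by
    intro u
    unfold IsCycleEdge
    constructor
    · rintro ⟨i, hi⟩
      rw [Sym2.eq_iff] at hi
      rcases hi with ⟨rfl, rfl⟩ | ⟨rfl, rfl⟩ <;> simp
    · rintro (rfl | rfl)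
      · exact ⟨_, rfl⟩
      · exact ⟨v - 1, by rw [sub_add_cancel, Sym2.eq_swap]⟩
  have e : G.neighborFinset v = {v + 1, v - 1} ∪ Finset.univ.filter (Ch v) := by
    ext u
    rw [SimpleGraph.mem_neighborFinset, h1, cy]
    simp [or_assoc]
  have d : Disjoint ({v + 1, v - 1} : Finset (ZMod n)) (Finset.univ.filter (Ch v)) := by
    rw [Finset.disjoint_left]
    intro u hu hu'
    simp only [Finset.mem_insert, Finset.mem_singleton, Finset.mem_filter, Finset.mem_univ, true_and] at hu hu'
    exact h2 _ _ hu' ((cy u).2 hu)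
  have ne : v + 1 ≠ v - 1 := by
    intro h
    have h4 : (2 : ZMod n) = 0 := by linear_combination h
    have h5 : ((2 : ℕ) : ZMod n).val = 2 := ZMod.val_cast_of_lt (by omega)
    rw [Nat.cast_ofNat, h4, ZMod.val_zero] at h5
    omega
  rw [← SimpleGraph.card_neighborFinset_eq_degree, e, Finset.card_union_of_disjoint d,
    Finset.card_pair ne]
  omega

set_option maxHeartbeats 2000000 in
lemma final1 {n x k i j : ℕ} {al be : ℕ → Prop} {ch : Prop} (hn : 7 ≤ n) (hx1 : n / 2 ≤ x) (hx2 : x ≤ n - 4)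
    (hi : i < n) (hj : j < n) (hij : i ≠ j) (hk : k = x + 1)
    (F : ∀ i, 0 < i → i < n → i ≠ k → ((al i ↔ 2 ≤ i ∧ i ≤ x) ∧ (be i ↔ x + 3 ≤ i)))
    (hch : ch ↔ ((i = 0 ∧ (j = k ∨ al j)) ∨ (j = 0 ∧ (i = k ∨ al i)) ∨
      (i = k ∧ j ≠ 0 ∧ be j) ∨ (j = k ∧ i ≠ 0 ∧ be i))) :
    (Cyc n i j ∨ ch) ↔ R n x i j := by
  subst hk
  rw [hch]; clear hch
  have Fi := F i
  have Fj := F j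
  unfold Cyc R E
  by_cases i0 : i = 0
  · subst i0
    by_cases jk : j = x + 1
    · subst jk; simp
    · have := Fj (by omega) hj jk
      rw [this.1]
      clear F Fi Fj; grind (splits := 25)
  · by_cases j0 : j = 0
    · subst j0
      by_cases ik : i = x + 1
      · subst ik; simp
      · have := Fi (by omega) hi ik
        rw [this.1]
        clear F Fi Fj; grind (splits := 25)
    · by_cases jk : j = x + 1
      · have := Fi (by omega) hi (by omega)
        rw [this.2]
        clear F Fi Fj; grind (splits := 25)
      · by_cases ik : i = x + 1
        · have := Fj (by omega) hj (by omega)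
          rw [this.2]
          clear F Fi Fj; grind (splits := 25)
        · clear F Fi Fj; grind (splits := 25)

set_option maxHeartbeats 2000000 in
lemma final2 {n x k i j i' j' : ℕ} {al be : ℕ → Prop} {ch : Prop} (hn : 7 ≤ n) (hx1 : n / 2 ≤ x) (hx2 : x ≤ n - 4)
    (hi : i < n) (hj : j < n) (hij : i ≠ j) (hk : k + x + 1 = n)
    (hi' : (i = 0 ∧ i' = 0) ∨ (0 < i ∧ i' = n - i))
    (hj' : (j = 0 ∧ j' = 0) ∨ (0 < j ∧ j' = n - j))
    (F : ∀ i, 0 < i → i < n → i ≠ k →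
      ((al i ↔ k + 1 ≤ i ∧ i + 2 ≤ n) ∧ (be i ↔ i + 2 ≤ k)))
    (hch : ch ↔ ((i = 0 ∧ (j = k ∨ al j)) ∨ (j = 0 ∧ (i = k ∨ al i)) ∨
      (i = k ∧ j ≠ 0 ∧ be j) ∨ (j = k ∧ i ≠ 0 ∧ be i))) :
    (Cyc n i j ∨ ch) ↔ R n x i' j' := by
  rw [hch]; clear hch
  have Fi := F i
  have Fj := F j
  unfold Cyc R E
  by_cases i0 : i = 0
  · obtain rfl : i' = 0 := by omega
    obtain rfl : j' = n - j := by omega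
    subst i0
    by_cases jk : j = k
    · subst jk; simp; grind
    · have := Fj (by omega) hj jk
      rw [this.1]
      clear F Fi Fj; grind (splits := 25)
  · obtain rfl : i' = n - i := by omega
    by_cases j0 : j = 0
    · obtain rfl : j' = 0 := by omega
      subst j0
      by_cases ik : i = k
      · subst ik; simp; grind
      · have := Fi (by omega) hi ik
        rw [this.1]
        clear F Fi Fj; grind (splits := 25)
    · obtain rfl : j' = n - j := by omega
      by_cases jk : j = k
      · have := Fi (by omega) hi (by omega)
        rw [this.2]
        clear F Fi Fj; grind (splits := 25)
      · by_cases ik : i = k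
        · have := Fj (by omega) hj (by omega)
          rw [this.2]
          clear F Fi Fj; grind (splits := 25)
        · clear F Fi Fj; grind (splits := 25)

set_option maxHeartbeats 1000000 in
lemma uniq (n x : ℕ) (hn : 7 ≤ n) (hx1 : n / 2 ≤ x) (hx2 : x ≤ n - 4)
    (G : SimpleGraph (ZMod n)) (hG : IsOuterplane n G)
    (hd : degreeMultiset n G = ((x + 2) ::ₘ (n - x) ::ₘ
        (Multiset.replicate (n - 4) 3 + Multiset.replicate 2 2))) :
    Nonempty (G ≃g model n x hn) := by
  classical
  have : NeZero n := ⟨by omega⟩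
  obtain ⟨S, ⟨hS1, hS2⟩, hS3⟩ := hG
  have adj : ∀ u v, G.Adj u v ↔ IsCycleEdge n s(u, v) ∨ s(u, v) ∈ S := by
    intro u v
    rw [← SimpleGraph.mem_edgeSet, hS3]
    rfl
  have nc : ∀ u v, s(u, v) ∈ S → ¬ IsCycleEdge n s(u, v) := fun u v h => (hS1 _ h).2
  rw [degreeMultiset_eq] at hd
  obtain ⟨A, B, P, Q, nBA, nPA, nPB, nQA, nQB, nQP, fA, fB, fP, fQ, fO⟩ := extract _ hd
  have dc := deg_chord hn G (fun u v => s(u, v) ∈ S) adj nc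
  obtain ⟨hAB, cA, both, cov, inc, ⟨hP1, hP2⟩, ⟨hQ1, hQ2⟩⟩ := count hn hx1 hx2
    (fun v => Finset.univ.filter (fun u => s(v, u) ∈ S))
    (by intro u v; simp [Sym2.eq_swap])
    (by intro v hv
        simp only [Finset.mem_filter, Finset.mem_univ, true_and] at hv
        exact (hS1 _ hv).1 rfl)
    A B P Q nBA nPA nPB nQA nQB nQP
    (by rw [dc, fA]; omega) (by rw [dc, fB]) (by rw [dc, fP]) (by rw [dc, fQ])
    (by intro v h1 h2 h3 h4; rw [dc, fO v h1 h2 h3 h4])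
  simp only [Finset.mem_filter, Finset.mem_univ, true_and] at hAB both cov inc hP1 hP2 hQ1 hQ2
  -- coordinates
  have valA : (A - A).val = 0 := by simp
  have inj : ∀ u v : ZMod n, (u - A).val = (v - A).val → u = v := by
    intro u v h
    exact sub_left_injective (ZMod.val_injective n h)
  have vlt : ∀ v : ZMod n, (v - A).val < n := fun v => ZMod.val_lt _
  obtain ⟨k, hk⟩ : ∃ k, (B - A).val = k := ⟨_, rfl⟩
  have crd : ∀ i, i < n → ((A + (i : ℕ)) - A).val = i := by
    intro i hi
    rw [add_sub_cancel_left]; exact ZMod.val_cast_of_lt hi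
  have rcd : ∀ v : ZMod n, A + (((v - A).val : ℕ) : ZMod n) = v := by
    intro v
    rw [ZMod.natCast_zmod_val]; ring
  have ncA : ∀ v, s(A, v) ∈ S → ¬ Cyc n 0 (v - A).val := by
    intro v hv
    have := nc _ _ hv
    rwa [cyc_iff hn A, valA] at this
  have ncB : ∀ v, s(B, v) ∈ S → ¬ Cyc n k (v - A).val := by
    intro v hv
    have := nc _ _ hv
    rwa [cyc_iff hn A, hk] at this
  have kA := ncA B hAB
  rw [hk] at kA
  have k0 : k ≠ 0 := by
    rintro rfl
    exact nBA (inj _ _ (by rw [hk, valA]))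
  have kn : k < n := hk ▸ vlt B
  have hk1 : 2 ≤ k ∧ k + 2 ≤ n := by unfold Cyc at kA; omega
  have neA : ∀ i, 0 < i → i < n → A + (i : ZMod n) ≠ A := by
    intro i h0 hi h
    have := crd i hi
    rw [h, valA] at this; omega
  have neB : ∀ i, i ≠ k → i < n → A + (i : ZMod n) ≠ B := by
    intro i h0 hi h
    have := crd i hi
    rw [h, hk] at this; omega
  have neV : ∀ i v, i ≠ (v - A).val → i < n → A + (i : ZMod n) ≠ v := by
    intro i v h0 hi h
    have := crd i hi
    rw [h] at this; omega
  have pos : ∀ v, v ≠ A → 0 < (v - A).val := by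
    intro v hv
    by_contra h
    exact hv (inj _ _ (by rw [valA]; omega))
  have nek : ∀ v, v ≠ B → (v - A).val ≠ k := by
    intro v hv h
    exact hv (inj _ _ (by rw [hk, h]))
  have key := comb n x k (P - A).val (Q - A).val (fun i => s(A, A + (i : ZMod n)) ∈ S)
    (fun i => s(B, A + (i : ZMod n)) ∈ S) hn hx1 hx2 hk1.1 hk1.2 (pos P nPA) (vlt P) (nek P nPB)
    (pos Q nQA) (vlt Q) (nek Q nQB)
    (fun i a b c d e => cov _ (neA i a b) (neB i c b) (neV i P d b) (neV i Q e b))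
    (fun i a b c => both _ (neA i a b) (neB i c b))
    (by simp only [rcd]; exact ⟨hP1, hP2⟩) (by simp only [rcd]; exact ⟨hQ1, hQ2⟩)
    (by intro h
        have := ncA _ h
        rw [crd 1 (by omega)] at this
        unfold Cyc at this; omega)
    (by intro h
        have := ncA _ h
        rw [crd (n-1) (by omega)] at this
        unfold Cyc at this; omega)
    (by intro h
        have := ncB _ h
        rw [crd (k-1) (by omega)] at this
        unfold Cyc at this; omega)
    (by intro h
        have := ncB _ h
        rw [crd (k+1) (by omega)] at this
        unfold Cyc at this; omega)
    (by intro i j h0 hji hik h1 h2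
        refine hS2 _ h1 _ h2 ?_ ?_
        · intro h
          rw [Sym2.eq_iff] at h
          rcases h with h | h
          · exact nBA h.1.symm
          · exact neA j h0 (by omega) h.1.symm
        · rw [cross_iff hn A, valA, hk, crd i (by omega), crd j (by omega)]
          unfold Xor Btw
          omega)
    (by intro i j h0 hji hik h1 h2
        refine hS2 _ h1 _ h2 ?_ ?_
        · intro h
          rw [Sym2.eq_iff] at h
          rcases h with h | h
          · exact nBA h.1.symm
          · exact neA j (by omega) (by omega) h.1.symm
        · rw [cross_iff hn A, valA, hk, crd i (by omega), crd j (by omega)]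
          unfold Xor Btw
          omega)
    (by rw [← cA]
        symm
        apply Finset.card_bij (fun v _ => (v - A).val)
        · intro v hv
          simp only [Finset.mem_filter, Finset.mem_univ, true_and, Finset.mem_erase] at hv
          simp only [Finset.mem_filter, Finset.mem_range, rcd]
          refine ⟨vlt v, pos v ?_, nek v hv.1, hv.2⟩
          rintro rfl
          exact (hS1 _ hv.2).1 rfl
        · intro u _ v _ h
          exact inj _ _ h
        · intro i hi
          simp only [Finset.mem_filter, Finset.mem_range] at hi
          refine ⟨A + (i : ZMod n), ?_, crd i hi.1⟩
          simp only [Finset.mem_filter, Finset.mem_univ, true_and, Finset.mem_erase]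
          exact ⟨neB i hi.2.2.1 hi.1, hi.2.2.2⟩)
  have eqA : ∀ v, (v - A).val = 0 ↔ v = A :=
    fun v => ⟨fun h => inj _ _ (by rw [h, valA]), fun h => by rw [h, valA]⟩
  have eqB : ∀ v, (v - A).val = k ↔ v = B :=
    fun v => ⟨fun h => inj _ _ (by rw [h, hk]), fun h => by rw [h, hk]⟩
  have hch : ∀ u v : ZMod n, s(u, v) ∈ S ↔
      (((u - A).val = 0 ∧ ((v - A).val = k ∨ s(A, A + (((v - A).val : ℕ) : ZMod n)) ∈ S)) ∨
       ((v - A).val = 0 ∧ ((u - A).val = k ∨ s(A, A + (((u - A).val : ℕ) : ZMod n)) ∈ S)) ∨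
       ((u - A).val = k ∧ (v - A).val ≠ 0 ∧ s(B, A + (((v - A).val : ℕ) : ZMod n)) ∈ S) ∨
       ((v - A).val = k ∧ (u - A).val ≠ 0 ∧ s(B, A + (((u - A).val : ℕ) : ZMod n)) ∈ S)) := by
    intro u v
    simp only [rcd, ne_eq, eqA, eqB]
    constructor
    · intro h
      by_cases uA : u = A
      · exact Or.inl ⟨uA, Or.inr (uA ▸ h)⟩
      by_cases vA : v = A
      · exact Or.inr (Or.inl ⟨vA, Or.inr (by rw [← vA, Sym2.eq_swap]; exact h)⟩)
      rcases inc _ _ h with h' | h' | h' | h'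
      · exact absurd h' vA
      · exact Or.inr (Or.inr (Or.inr ⟨h', uA, by rw [← h', Sym2.eq_swap]; exact h⟩))
      · exact absurd h' uA
      · exact Or.inr (Or.inr (Or.inl ⟨h', vA, by rw [← h']; exact h⟩))
    · rintro (⟨rfl, rfl | h⟩ | ⟨rfl, rfl | h⟩ | ⟨rfl, _, h⟩ | ⟨rfl, _, h⟩)
      · exact hAB
      · exact h
      · rw [Sym2.eq_swap]; exact hAB
      · rw [Sym2.eq_swap]; exact h
      · exact h
      · rw [Sym2.eq_swap]; exact h
  have irr : ∀ u : ZMod n, ¬ R n x u.val u.val := by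
    intro u h; unfold R E at h; omega
  rcases key with ⟨hkx, F⟩ | ⟨hkx, F⟩
  · refine ⟨⟨Equiv.subRight A, ?_⟩⟩
    intro u v
    change R n x (u - A).val (v - A).val ↔ _
    by_cases huv : u = v
    · subst huv
      simp [irr]
    rw [adj, cyc_iff hn A]
    exact (final1 hn hx1 hx2 (vlt u) (vlt v) (fun h => huv (inj _ _ h)) hkx F (hch u v)).symm
  · refine ⟨⟨Equiv.subLeft A, ?_⟩⟩
    intro u v
    change R n x (A - u).val (A - v).val ↔ _
    by_cases huv : u = v
    · subst huv
      simp [irr]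
    rw [adj, cyc_iff hn A]
    have rf : ∀ w : ZMod n, ((w - A).val = 0 ∧ (A - w).val = 0) ∨
        (0 < (w - A).val ∧ (A - w).val = n - (w - A).val) := by
      intro w
      by_cases h : w = A
      · left; simp [h]
      · right
        refine ⟨pos w h, ?_⟩
        rw [← neg_sub w A, ZMod.neg_val, if_neg (sub_ne_zero.2 h)]
    exact (final2 hn hx1 hx2 (vlt u) (vlt v) (fun h => huv (inj _ _ h)) hkx (rf u) (rf v) F (hch u v)).symm
end A4

/-- Type A4 of the paper's Theorem 1: for `n ≥ 7` and `⌊n/2⌋ ≤ x ≤ n - 4`, the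
multiset `{x+2, n-x, 3^(n-4), 2^2}` is outerplane-unigraphic. -/
theorem unigraphic_A4 (n x : ℕ) (hn : 7 ≤ n) (hx1 : n / 2 ≤ x) (hx2 : x ≤ n - 4) :
    OuterplaneUnigraphic n
      ((x + 2) ::ₘ (n - x) ::ₘ
        (Multiset.replicate (n - 4) 3 + Multiset.replicate 2 2)) := by
  refine ⟨⟨A4.model n x hn, A4.model_outer n x hn hx1 hx2, A4.model_deg n x hn hx1 hx2⟩, ?_⟩
  intro G G' h1 h2 h3 h4
  obtain ⟨e⟩ := A4.uniq n x hn hx1 hx2 G h1 h3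
  obtain ⟨e'⟩ := A4.uniq n x hn hx1 hx2 G' h2 h4
  exact ⟨e.trans e'.symm⟩
end
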